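/- Fix an odd integer p ≥ 5 and C₀ > 0. Let u : ℝ × (0,∞) → ℝ be C^∞ on {(t,r) : r > |t|} and satisfy ∂_t²u − ∂_r²u − (3/r)∂_r u = |u|^{p−1}u there, with data (u₀, u₁) = (u(0,·), ∂_t u(0,·)). Assume: (i) (u₀,u₁) ∈ H(R₀) for every R₀ > 0; (ii) ∫₀^∞ |u₀(r)|^{2(p−1)} r³ dr < ∞; (iii) for every R₀ > 0 and every ρ ≥ R₀, ‖u‖_{L²L⁸(ρ)} + ‖u‖_{L³L⁶(ρ)} + sup_{t∈ℝ} ‖(u(t,·), ∂_t u(t,·))‖_{H(ρ+|t|)} ≤ C₀‖(u₀,u₁)‖_{H(ρ)}; and (iv) for every R₀ > 0 the exterior energy of u on {r > R₀ + |t|} vanishes. Then there exists R > 0 such that u₀(r) = 0 and u₁(r) = 0 for all r > R. -/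

import Mathlib

open MeasureTheory Filter Set
open scoped ENNReal

/-- The exterior energy norm `‖(v,w)‖_{H(R)} = (∫_R^∞ (|v'|² + |w|²) r³ dr)^{1/2}`. -/
noncomputable def eH (R : ℝ) (v w : ℝ → ℝ) : ℝ≥0∞ :=
  ((∫⁻ r in Ioi R, ENNReal.ofReal ((deriv v r) ^ 2 * r ^ 3)) +
      ∫⁻ r in Ioi R, ENNReal.ofReal ((w r) ^ 2 * r ^ 3)) ^ (1 / 2 : ℝ)

/-- The exterior spacetime norm `‖u‖_{L^aL^b(R)}` over the region `{r > R + |t|}`. -/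
noncomputable def eLL (a b R : ℝ) (u : ℝ → ℝ → ℝ) : ℝ≥0∞ :=
  (∫⁻ t : ℝ,
      (∫⁻ r in Ioi (R + |t|), ENNReal.ofReal (|u t r| ^ b * r ^ 3)) ^ (a / b)) ^ (1 / a)

/-- The time derivative `∂_t u` of a function of `(t,r)`. -/
noncomputable def dtu (u : ℝ → ℝ → ℝ) (t r : ℝ) : ℝ := deriv (fun s => u s r) t

/-- `u` is an exterior solution of `∂_t²u - ∂_r²u - (3/r)∂_r u = |u|^{p-1}u`
on `{r > R + |t|}`, of smoothness class `C^n`. -/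
def IsExtSol (p : ℕ) (n : ℕ∞) (R : ℝ) (u : ℝ → ℝ → ℝ) : Prop :=
  ContDiffOn ℝ n (fun q : ℝ × ℝ => u q.1 q.2) {q : ℝ × ℝ | R + |q.1| < q.2} ∧
  ∀ t r : ℝ, R + |t| < r →
    deriv (fun s => dtu u s r) t - deriv (deriv (u t)) r - (3 / r) * deriv (u t) r
      = |u t r| ^ (p - 1) * u t r

/-- The exterior energy of `u` outside `{r > R + |t|}` vanishes as `t → ±∞`. -/
def ExtEnergyVanishes (R : ℝ) (u : ℝ → ℝ → ℝ) : Prop :=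
  Tendsto (fun t : ℝ => ∫ r in Ioi (R + |t|),
      ((dtu u t r) ^ 2 + (deriv (u t) r) ^ 2) * r ^ 3) atTop (nhds 0) ∧
  Tendsto (fun t : ℝ => ∫ r in Ioi (R + |t|),
      ((dtu u t r) ^ 2 + (deriv (u t) r) ^ 2) * r ^ 3) atBot (nhds 0)

/-- `sup_{t∈ℝ} ‖(u(t,·), ∂_t u(t,·))‖_{H(R+|t|)}`. -/
noncomputable def supH (R : ℝ) (u : ℝ → ℝ → ℝ) : ℝ≥0∞ :=
  ⨆ t : ℝ, eH (R + |t|) (u t) (fun r => dtu u t r)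



open MeasureTheory Filter Set
open scoped ENNReal

namespace WR

noncomputable def beta : ℕ → ℝ
  | 0 => 1
  | (n+1) => beta n * (((n:ℝ) - 1/2) / (n+1))^2

lemma beta_nonneg (n : ℕ) : 0 ≤ beta n := by
  induction n with
  | zero => simp [beta]
  | succ n ih => rw [beta]; positivity

lemma beta_rec (n : ℕ) : ((n:ℝ)+1)^2 * beta (n+1) = ((n:ℝ) - 1/2)^2 * beta n := by
  rw [beta]; field_simp

lemma beta_cube (n : ℕ) : ((n:ℝ)+1)^3 * beta (n+1) ≤ 1/4 := by
  induction n with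
  | zero => simp [beta]; norm_num
  | succ n ih =>
    have h := beta_rec (n+1)
    have hb := beta_nonneg (n+1)
    push_cast at h ⊢
    have e : ((n:ℝ)+1+1)^3 * beta (n+1+1) = ((n:ℝ)+2) * ((n:ℝ)+1/2)^2 * beta (n+1) := by
      have : ((n:ℝ)+1+1)^3 * beta (n+1+1) = ((n:ℝ)+2) * (((n:ℝ)+1+1)^2 * beta (n+1+1)) := by ring
      rw [this, h]; ring
    rw [e]
    refine le_trans ?_ ih
    apply mul_le_mul_of_nonneg_right _ hb
    have : (0:ℝ) ≤ n := Nat.cast_nonneg n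
    nlinarith

lemma beta_le (n : ℕ) : beta (n+1) ≤ 1/(4 * ((n:ℝ)+1)^3) := by
  rw [le_div_iff₀ (by positivity)]
  have := beta_cube n
  nlinarith

lemma beta_le_one (n : ℕ) : beta n ≤ 1 := by
  cases n with
  | zero => simp [beta]
  | succ n =>
    refine (beta_le n).trans ?_
    rw [div_le_one (by positivity)]
    have : (0:ℝ) ≤ n := Nat.cast_nonneg n
    have : (1:ℝ) ≤ ((n:ℝ)+1)^3 := one_le_pow₀ (by linarith)
    linarith

noncomputable def S (c : ℕ → ℝ) (x : ℝ) : ℝ := ∑' n, c n * x^n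

lemma S_summable (c : ℕ → ℝ) (hc : ∀ n, |c n| ≤ 1) {x : ℝ} (hx : |x| < 1) :
    Summable (fun n => c n * x^n) := by
  refine Summable.of_norm_bounded (summable_geometric_of_lt_one (abs_nonneg x) hx) ?_
  intro n
  rw [Real.norm_eq_abs, abs_mul, abs_pow]
  have := hc n
  have h2 : 0 ≤ |x|^n := by positivity
  nlinarith

lemma S_summable' (c : ℕ → ℝ) (hc : ∀ n, |c n| ≤ 1) {x : ℝ} (hx : |x| < 1) :
    Summable (fun n : ℕ => c n * ((n:ℝ) * x^(n-1))) := by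
  have h1 : Summable (fun n : ℕ => (((n:ℝ)+1) * |x|^n)) := by
    have ha := summable_pow_mul_geometric_of_norm_lt_one 1 (r := |x|) (by simpa using hx)
    have hb := summable_geometric_of_lt_one (abs_nonneg x) hx
    refine (ha.add hb).congr ?_
    intro n; simp; ring
  rw [← summable_nat_add_iff 1]
  refine Summable.of_norm_bounded h1 ?_
  intro n
  rw [Real.norm_eq_abs, abs_mul, abs_mul, abs_pow]
  have := hc (n+1)
  have h2 : 0 ≤ |x|^n := by positivity
  have h3 : (0:ℝ) ≤ (n:ℝ)+1 := by positivity
  simp only [Nat.add_sub_cancel]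
  push_cast
  rw [abs_of_nonneg h3]
  have : 0 ≤ ((n:ℝ)+1) * |x|^n := by positivity
  nlinarith

lemma S_hasDeriv (c : ℕ → ℝ) (hc : ∀ n, |c n| ≤ 1) {x : ℝ} (hx : |x| < 1) :
    HasDerivAt (S c) (S (fun n => ((n:ℝ)+1) * c (n+1)) x) x := by
  obtain ⟨r, hr1, hr2⟩ := exists_between hx
  have hr0 : 0 ≤ r := (abs_nonneg x).trans hr1.le
  have hu : Summable (fun n : ℕ => (1:ℝ) * ((n:ℝ) * r^(n-1))) :=
    S_summable' (fun _ => 1) (by simp) (by rwa [abs_of_nonneg hr0])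
  have key := hasDerivAt_tsum_of_isPreconnected (𝕜 := ℝ) (F := ℝ)
    (g := fun n y => c n * y^n) (g' := fun n y => c n * ((n:ℝ) * y^(n-1)))
    (t := Ioo (-r) r) (y₀ := x) (y := x) hu isOpen_Ioo isPreconnected_Ioo
    (fun n y _ => (hasDerivAt_pow n y).const_mul (c n))
    (by
      intro n y hy
      rw [Real.norm_eq_abs, abs_mul, abs_mul, abs_pow]
      have hy' : |y| ≤ r := abs_le.2 ⟨hy.1.le, hy.2.le⟩
      have : |y|^(n-1) ≤ r^(n-1) := pow_le_pow_left₀ (abs_nonneg y) hy' _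
      have hn : |(n:ℝ)| = n := abs_of_nonneg (Nat.cast_nonneg n)
      rw [hn]
      apply mul_le_mul (hc n) _ (by positivity) zero_le_one
      gcongr)
    (abs_lt.1 hr1) (S_summable c hc hx) (abs_lt.1 hr1)
  convert! key using 1
  rw [(S_summable' c hc hx).tsum_eq_zero_add]
  simp only [S, Nat.cast_zero, zero_mul, mul_zero, zero_add, Nat.add_sub_cancel]
  congr 1; ext n; push_cast; ring

noncomputable def psi : ℝ → ℝ := S beta
noncomputable def psi1 : ℝ → ℝ := S (fun n => ((n:ℝ)+1) * beta (n+1))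
noncomputable def psi2 : ℝ → ℝ := S (fun n => ((n:ℝ)+1) * (((n+1:ℕ):ℝ)+1) * beta (n+2))

lemma b0 (n : ℕ) : |beta n| ≤ 1 := by rw [abs_of_nonneg (beta_nonneg n)]; exact beta_le_one n
lemma b1 (n : ℕ) : |((n:ℝ)+1) * beta (n+1)| ≤ 1 := by
  have h := beta_cube n
  have hb := beta_nonneg (n+1)
  rw [abs_of_nonneg (by positivity)]
  have hn : (0:ℝ) ≤ n := Nat.cast_nonneg n
  have : (n:ℝ)+1 ≤ ((n:ℝ)+1)^3 := by nlinarith [sq_nonneg (n:ℝ)]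
  nlinarith
lemma b2 (n : ℕ) : |((n:ℝ)+1) * (((n+1:ℕ):ℝ)+1) * beta (n+2)| ≤ 1 := by
  have h := beta_cube (n+1)
  have hb := beta_nonneg (n+2)
  rw [abs_of_nonneg (by positivity)]
  have hn : (0:ℝ) ≤ n := Nat.cast_nonneg n
  push_cast at h ⊢
  have : ((n:ℝ)+1)*((n:ℝ)+1+1) ≤ ((n:ℝ)+1+1)^3 := by nlinarith [sq_nonneg (n:ℝ), mul_nonneg hn (sq_nonneg (n:ℝ))]
  have e : n+1+1 = n+2 := rfl
  rw [e] at h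
  nlinarith

lemma psi_hasDeriv {x : ℝ} (hx : |x| < 1) : HasDerivAt psi (psi1 x) x := S_hasDeriv beta b0 hx
lemma psi1_hasDeriv {x : ℝ} (hx : |x| < 1) : HasDerivAt psi1 (psi2 x) x := by
  have := S_hasDeriv _ b1 hx
  convert! this using 1
  unfold psi2; congr 1; ext n; push_cast; ring
lemma psi2_cont {x : ℝ} (hx : |x| < 1) : ContinuousAt psi2 x := (S_hasDeriv _ b2 hx).continuousAt

lemma psi1_contDiffOn : ContDiffOn ℝ 1 psi1 (Ioo (-1) 1) := by
  have : (1 : WithTop ℕ∞) = 0 + 1 := by simp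
  rw [this, contDiffOn_succ_iff_deriv_of_isOpen isOpen_Ioo]
  refine ⟨fun x hx => (psi1_hasDeriv (abs_lt.2 hx)).differentiableAt.differentiableWithinAt, by simp, ?_⟩
  rw [contDiffOn_zero]
  have : EqOn (deriv psi1) psi2 (Ioo (-1) 1) := fun x hx => (psi1_hasDeriv (abs_lt.2 hx)).deriv
  refine ContinuousOn.congr ?_ this
  exact fun x hx => (psi2_cont (abs_lt.2 hx)).continuousWithinAt

lemma psi_contDiffOn : ContDiffOn ℝ 1 psi (Ioo (-1) 1) := by
  have : (1 : WithTop ℕ∞) = 0 + 1 := by simp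
  rw [this, contDiffOn_succ_iff_deriv_of_isOpen isOpen_Ioo]
  refine ⟨fun x hx => (psi_hasDeriv (abs_lt.2 hx)).differentiableAt.differentiableWithinAt, by simp, ?_⟩
  rw [contDiffOn_zero]
  have : EqOn (deriv psi) psi1 (Ioo (-1) 1) := fun x hx => (psi_hasDeriv (abs_lt.2 hx)).deriv
  refine ContinuousOn.congr ?_ this
  exact fun x hx => (psi1_hasDeriv (abs_lt.2 hx)).continuousAt.continuousWithinAt

lemma psi_ode {x : ℝ} (hx : |x| < 1) : x * (1-x) * psi2 x + psi1 x = psi x / 4 := by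
  have h0 := (S_summable _ b0 hx).hasSum
  have h1 := (S_summable _ b1 hx).hasSum
  have h2 := (S_summable _ b2 hx).hasSum
  have h2x : HasSum (fun n : ℕ => (n:ℝ) * ((n:ℝ)+1) * beta (n+1) * x^n) (x * psi2 x) := by
    rw [← hasSum_nat_add_iff' 1]
    simp only [Finset.range_one, Finset.sum_singleton, Nat.cast_zero, zero_mul, sub_zero]
    refine (h2.mul_left x).congr_fun ?_
    intro n; push_cast; ring
  have h2xx : HasSum (fun n : ℕ => (n:ℝ) * ((n:ℝ)-1) * beta n * x^n) (x^2 * psi2 x) := by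
    rw [← hasSum_nat_add_iff' 2]
    simp only [Finset.sum_range_succ, Finset.range_zero, Finset.sum_empty, Nat.cast_zero, zero_mul, Nat.cast_one, sub_self, mul_zero, add_zero, sub_zero]
    refine (h2.mul_left (x^2)).congr_fun ?_
    intro n; push_cast; ring
  have tot := ((h2x.sub h2xx).add h1).sub (h0.div_const 4)
  have hz : (fun n : ℕ => (n:ℝ) * ((n:ℝ)+1) * beta (n+1) * x^n - (n:ℝ) * ((n:ℝ)-1) * beta n * x^n
      + ((n:ℝ)+1) * beta (n+1) * x^n - beta n * x^n/4) = fun _ => 0 := by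
    ext n
    have := beta_rec n
    linear_combination x^n * this
  rw [hz] at tot
  have := tot.unique hasSum_zero
  change x * psi2 x - x^2 * psi2 x + psi1 x - psi x / 4 = 0 at this
  linear_combination this

lemma psi_zero : psi 0 = 1 := by
  unfold psi S
  rw [tsum_eq_single 0]
  · simp [beta]
  · intro n hn; simp [hn]

noncomputable def cc : ℝ := ∑' n, beta n

lemma summable_nbeta : Summable (fun n : ℕ => (n:ℝ) * beta n) := by
  rw [← summable_nat_add_iff 1]
  have h := (summable_nat_add_iff 1).2 (Real.summable_one_div_nat_pow.2 (by norm_num : 1 < 2))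
  refine Summable.of_nonneg_of_le (fun n => mul_nonneg (Nat.cast_nonneg _) (beta_nonneg _)) ?_ h
  intro n
  have h := beta_cube n
  push_cast
  rw [le_div_iff₀ (by positivity)]
  nlinarith

lemma summable_n32beta : Summable (fun n : ℕ => ((n:ℝ) * Real.sqrt n) * beta n) := by
  rw [← summable_nat_add_iff 1]
  have h := (summable_nat_add_iff 1).2 (Real.summable_one_div_nat_rpow.2 (by norm_num : (1:ℝ) < 3/2))
  refine Summable.of_nonneg_of_le (fun n => mul_nonneg (by positivity) (beta_nonneg _)) ?_ h
  intro n
  have h := beta_cube n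
  push_cast
  have hp : (0:ℝ) < (n:ℝ)+1 := by positivity
  have e : ((n:ℝ)+1)^(3/2:ℝ) = ((n:ℝ)+1) * Real.sqrt ((n:ℝ)+1) := by
    rw [Real.sqrt_eq_rpow, ← Real.rpow_one_add' hp.le (by norm_num)]; norm_num
  rw [e, le_div_iff₀ (by positivity)]
  have hs := Real.mul_self_sqrt hp.le
  calc ((n:ℝ)+1) * Real.sqrt ((n:ℝ)+1) * beta (n+1) * (((n:ℝ)+1) * Real.sqrt ((n:ℝ)+1)) 
      = (Real.sqrt ((n:ℝ)+1) * Real.sqrt ((n:ℝ)+1)) * ((n:ℝ)+1)^2 * beta (n+1) := by ring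
    _ = ((n:ℝ)+1)^3 * beta (n+1) := by rw [hs]; ring
    _ ≤ 1 := by linarith

lemma summable_beta : Summable beta := by
  rw [← summable_nat_add_iff 1]
  refine Summable.of_nonneg_of_le (fun n => beta_nonneg _) ?_ ((summable_nat_add_iff 1).2 summable_nbeta)
  intro n
  have := beta_nonneg (n+1)
  have hn : (0:ℝ) ≤ n := Nat.cast_nonneg n
  push_cast
  nlinarith

lemma nbeta_sum : ∑' n : ℕ, (n:ℝ) * beta n = cc / 4 := by
  have hs : HasSum (fun n : ℕ => (n:ℝ) * beta n - beta n / 4) (∑' n : ℕ, (n:ℝ) * beta n - cc/4) :=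
    summable_nbeta.hasSum.sub (summable_beta.hasSum.div_const 4)
  have ht := hs.tendsto_sum_nat
  have hpart : ∀ N : ℕ, ∑ n ∈ Finset.range N, ((n:ℝ) * beta n - beta n / 4) = - ((N:ℝ)^2 * beta N) := by
    intro N
    induction N with
    | zero => simp
    | succ N ih =>
      rw [Finset.sum_range_succ, ih]
      have := beta_rec N
      push_cast
      linear_combination this
  have h0 : Tendsto (fun N : ℕ => - ((N:ℝ)^2 * beta N)) atTop (nhds 0) := by
    rw [← tendsto_add_atTop_iff_nat 1]
    have h1 : Tendsto (fun N : ℕ => -(1/((N:ℝ)+1))) atTop (nhds 0) := by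
      simpa using (tendsto_one_div_add_atTop_nhds_zero_nat (𝕜 := ℝ)).neg
    refine tendsto_of_tendsto_of_tendsto_of_le_of_le h1 tendsto_const_nhds ?_ ?_
    · intro N
      have := beta_cube N
      simp only
      push_cast
      rw [neg_le_neg_iff, le_div_iff₀ (by positivity)]
      nlinarith
    · intro N
      have := beta_nonneg (N+1)
      simp only
      have : 0 ≤ ((N+1:ℕ):ℝ)^2 * beta (N+1) := by positivity
      linarith
  simp_rw [hpart] at ht
  have := tendsto_nhds_unique ht h0
  linarith

lemma psi_nonneg {x : ℝ} (h0 : 0 ≤ x) : 0 ≤ psi x :=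
  tsum_nonneg fun n => mul_nonneg (beta_nonneg n) (pow_nonneg h0 n)

lemma psi_le {x : ℝ} (h0 : 0 ≤ x) (h1 : x < 1) : psi x ≤ cc := by
  refine Summable.tsum_le_tsum ?_ (S_summable _ b0 (by rwa [abs_of_nonneg h0])) summable_beta
  intro n
  have := pow_le_one₀ (n := n) h0 h1.le
  have hb := beta_nonneg n
  nlinarith

lemma cc_nonneg : 0 ≤ cc := tsum_nonneg beta_nonneg

lemma pow_rem {x : ℝ} (h0 : 0 ≤ x) (h1 : x < 1) (n : ℕ) :
    |x^n - 1 + n * (1-x)| ≤ ((n:ℝ) * Real.sqrt n) * ((1-x) * Real.sqrt (1-x)) := by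
  have hd : 0 < 1 - x := by linarith
  have hlow : 0 ≤ x^n - 1 + n*(1-x) := by
    have := one_add_mul_le_pow (a := x - 1) (by linarith) n
    have e : (1:ℝ) + (x-1) = x := by ring
    rw [e] at this
    nlinarith
  rw [abs_of_nonneg hlow]
  have hu1 : x^n - 1 + n*(1-x) ≤ n*(1-x) := by
    have := pow_le_one₀ (n := n) h0 h1.le
    linarith
  have hu2 : x^n - 1 + n*(1-x) ≤ (n*(1-x))^2 := by
    clear hu1 hlow
    induction n with
    | zero => simp
    | succ n ih =>
      have h3 : x * (x^n - 1 + n*(1-x)) ≤ x * (n*(1-x))^2 := mul_le_mul_of_nonneg_left ih h0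
      have hn : (0:ℝ) ≤ n := Nat.cast_nonneg n
      push_cast
      have : x^(n+1) - 1 + ((n:ℝ)+1)*(1-x) = x * (x^n - 1 + n*(1-x)) + n*(1-x)^2 := by ring
      rw [this]
      have : x * (n*(1-x))^2 ≤ (n*(1-x))^2 := by nlinarith [sq_nonneg (n*(1-x))]
      nlinarith [mul_nonneg hn (sq_nonneg (1-x)), sq_nonneg (1-x)]
  set y : ℝ := n*(1-x) with hy
  have hy0 : 0 ≤ y := by positivity
  have e : ((n:ℝ) * Real.sqrt n) * ((1-x) * Real.sqrt (1-x)) = y * Real.sqrt y := by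
    rw [hy, Real.sqrt_mul (Nat.cast_nonneg n)]; ring
  rw [e]
  rcases le_total y 1 with h | h
  · refine hu2.trans ?_
    have : y ≤ Real.sqrt y := Real.le_sqrt_of_sq_le (by nlinarith)
    nlinarith
  · refine hu1.trans ?_
    have : 1 ≤ Real.sqrt y := Real.one_le_sqrt.2 h
    nlinarith

lemma psi_asym : ∃ C : ℝ, 0 ≤ C ∧ ∀ x : ℝ, 0 ≤ x → x < 1 →
    |psi x - cc * (1 - (1-x)/4)| ≤ C * ((1-x) * Real.sqrt (1-x)) := by
  refine ⟨∑' n : ℕ, ((n:ℝ) * Real.sqrt n) * beta n, tsum_nonneg fun n => mul_nonneg (by positivity) (beta_nonneg n), ?_⟩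
  intro x h0 h1
  have hs : HasSum (fun n : ℕ => beta n * x^n - beta n + (n:ℝ) * beta n * (1-x)) (psi x - cc + cc/4 * (1-x)) := by
    have h3 := summable_nbeta.hasSum
    rw [nbeta_sum] at h3
    exact ((S_summable _ b0 (by rwa [abs_of_nonneg h0])).hasSum.sub summable_beta.hasSum).add (h3.mul_right (1-x))
  have e : psi x - cc * (1 - (1-x)/4) = psi x - cc + cc/4 * (1-x) := by ring
  rw [e, ← hs.tsum_eq, ← Real.norm_eq_abs, ← tsum_mul_right]
  refine tsum_of_norm_bounded (summable_n32beta.mul_right _).hasSum ?_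
  intro n
  have := pow_rem h0 h1 n
  have hb := beta_nonneg n
  have e : beta n * x^n - beta n + (n:ℝ) * beta n * (1-x) = beta n * (x^n - 1 + n*(1-x)) := by ring
  rw [e, Real.norm_eq_abs, abs_mul, abs_of_nonneg hb]
  calc _ ≤ beta n * (((n:ℝ) * Real.sqrt n) * ((1-x) * Real.sqrt (1-x))) := by gcongr
    _ = _ := by ring

end WR

open MeasureTheory Filter Set
open scoped ENNReal

namespace WR

noncomputable def X (ρ ξ η : ℝ) : ℝ := ((ξ-ρ)/(ξ+ρ)) * ((η-ρ)/(η+ρ))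

lemma X_symm (ρ ξ η : ℝ) : X ρ ξ η = X ρ η ξ := by unfold X; ring

lemma frac_abs {ρ ξ : ℝ} (hρ : 0 < ρ) (hξ : 0 < ξ) : |(ξ-ρ)/(ξ+ρ)| < 1 := by
  rw [abs_div, abs_of_pos (by positivity : 0 < ξ+ρ), div_lt_one (by positivity), abs_lt]
  constructor <;> linarith

lemma X_abs {ρ ξ η : ℝ} (hρ : 0 < ρ) (hξ : 0 < ξ) (hη : 0 < η) : |X ρ ξ η| < 1 := by
  unfold X; rw [abs_mul]
  calc _ ≤ |(ξ-ρ)/(ξ+ρ)| * 1 := by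
        gcongr; exact (frac_abs hρ hη).le
    _ < 1 := by rw [mul_one]; exact frac_abs hρ hξ

lemma one_sub_X {ρ ξ η : ℝ} (hρ : 0 < ρ) (hξ : 0 < ξ) (hη : 0 < η) :
    1 - X ρ ξ η = 2*ρ*(ξ+η)/((ξ+ρ)*(η+ρ)) := by
  unfold X; field_simp; ring

noncomputable def m (ρ ξ η : ℝ) : ℝ := √(ξ+ρ) * √(η+ρ) * psi (X ρ ξ η)

/-- derivative of the kernel in its last variable -/
noncomputable def mE (ρ ξ η : ℝ) : ℝ := √(ξ+ρ) * √(η+ρ) *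
  (psi (X ρ ξ η) / (2*(η+ρ)) + psi1 (X ρ ξ η) * ((ξ-ρ)/(ξ+ρ) * (2*ρ/(η+ρ)^2)))

noncomputable def mm (ρ ξ η : ℝ) : ℝ := (mE ρ ξ η + mE ρ η ξ) / (2*(ξ+η))

lemma m_symm (ρ ξ η : ℝ) : m ρ ξ η = m ρ η ξ := by unfold m; rw [X_symm]; ring

lemma frac_hasDeriv {ρ η : ℝ} (h : 0 < η + ρ) :
    HasDerivAt (fun y => (y-ρ)/(y+ρ)) (2*ρ/(η+ρ)^2) η := by
  have h1 : HasDerivAt (fun y => y - ρ) 1 η := (hasDerivAt_id η).sub_const ρ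
  have h2 : HasDerivAt (fun y => y + ρ) 1 η := (hasDerivAt_id η).add_const ρ
  refine (h1.div h2 h.ne').congr_deriv ?_
  ring

lemma sqrt_hasDeriv {ρ η : ℝ} (h : 0 < η + ρ) :
    HasDerivAt (fun y => √(y+ρ)) (√(η+ρ)/(2*(η+ρ))) η := by
  have h2 : HasDerivAt (fun y => y + ρ) 1 η := (hasDerivAt_id η).add_const ρ
  have := h2.sqrt h.ne'
  convert this using 1
  rw [div_eq_div_iff (by positivity) (by positivity)]
  nlinarith [Real.mul_self_sqrt h.le]

lemma X_hasDeriv {ρ ξ η : ℝ} (h : 0 < η + ρ) :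
    HasDerivAt (fun y => X ρ ξ y) ((ξ-ρ)/(ξ+ρ) * (2*ρ/(η+ρ)^2)) η :=
  (frac_hasDeriv h).const_mul _

lemma m_hasDeriv {ρ ξ η : ℝ} (hρ : 0 < ρ) (hξ : 0 < ξ) (hη : 0 < η) :
    HasDerivAt (fun y => m ρ ξ y) (mE ρ ξ η) η := by
  have hp : 0 < η + ρ := by positivity
  have hX := X_hasDeriv (ξ := ξ) hp
  have h1 := (psi_hasDeriv (X_abs hρ hξ hη)).comp η hX
  have h2 := ((sqrt_hasDeriv hp).const_mul (√(ξ+ρ))).mul h1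
  refine h2.congr_deriv ?_
  simp only [mE, Function.comp]
  field_simp

lemma m_hasDeriv' {ρ ξ η : ℝ} (hρ : 0 < ρ) (hξ : 0 < ξ) (hη : 0 < η) :
    HasDerivAt (fun x => m ρ x η) (mE ρ η ξ) ξ := by
  have := m_hasDeriv hρ hη hξ
  refine this.congr_of_eventuallyEq (Eventually.of_forall fun x => m_symm _ _ _)

lemma mE_hasDeriv {ρ ξ η : ℝ} (hρ : 0 < ρ) (hξ : 0 < ξ) (hη : 0 < η) :
    HasDerivAt (fun x => mE ρ x η) (mm ρ ξ η) ξ := by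
  have hp : 0 < ξ + ρ := by positivity
  have hX : HasDerivAt (fun x => X ρ x η) ((η-ρ)/(η+ρ) * (2*ρ/(ξ+ρ)^2)) ξ :=
    (X_hasDeriv (ξ := η) hp).congr_of_eventuallyEq (Eventually.of_forall fun x => X_symm _ _ _)
  have h0 := (psi_hasDeriv (X_abs hρ hξ hη)).comp ξ hX
  have h1 := (psi1_hasDeriv (X_abs hρ hξ hη)).comp ξ hX
  have h2 := ((sqrt_hasDeriv hp).mul_const (√(η+ρ))).mul
    ((h0.div_const (2*(η+ρ))).add (h1.mul ((frac_hasDeriv hp).mul_const (2*ρ/(η+ρ)^2))))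
  refine h2.congr_deriv ?_
  have ode := psi_ode (X_abs hρ hξ hη)
  rw [one_sub_X hρ hξ hη] at ode
  simp only [mm, mE, Function.comp, X_symm ρ η ξ, Pi.add_apply, Pi.mul_apply]
  have e : psi1 (X ρ ξ η) = psi (X ρ ξ η) / 4 - X ρ ξ η * (2*ρ*(ξ+η)/((ξ+ρ)*(η+ρ))) * psi2 (X ρ ξ η) := by
    linarith
  generalize psi (X ρ ξ η) = A at *
  generalize psi1 (X ρ ξ η) = B at *
  generalize psi2 (X ρ ξ η) = D at *
  generalize √(ξ+ρ) = s
  generalize √(η+ρ) = s'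
  subst e
  unfold X
  field_simp
  ring

lemma psi_cont {x : ℝ} (hx : |x| < 1) : ContinuousAt psi x := (psi_hasDeriv hx).continuousAt

def OQ : Set (ℝ × ℝ) := {q | 0 < q.1 ∧ 0 < q.2}

lemma X_cont {ρ : ℝ} (hρ : 0 < ρ) : ContinuousOn (fun q : ℝ × ℝ => X ρ q.1 q.2) OQ := by
  unfold X
  apply ContinuousOn.mul
  · apply ContinuousOn.div (by fun_prop) (by fun_prop)
    rintro q ⟨h1, h2⟩; positivity
  · apply ContinuousOn.div (by fun_prop) (by fun_prop)
    rintro q ⟨h1, h2⟩; positivity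

lemma psiX_cont {ρ : ℝ} (hρ : 0 < ρ) : ContinuousOn (fun q : ℝ × ℝ => psi (X ρ q.1 q.2)) OQ := by
  intro q hq
  exact ContinuousAt.comp_continuousWithinAt (psi_hasDeriv (X_abs hρ hq.1 hq.2)).continuousAt (X_cont hρ q hq)

lemma psi1X_cont {ρ : ℝ} (hρ : 0 < ρ) : ContinuousOn (fun q : ℝ × ℝ => psi1 (X ρ q.1 q.2)) OQ := by
  intro q hq
  exact ContinuousAt.comp_continuousWithinAt (psi1_hasDeriv (X_abs hρ hq.1 hq.2)).continuousAt (X_cont hρ q hq)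

lemma m_cont {ρ : ℝ} (hρ : 0 < ρ) : ContinuousOn (fun q : ℝ × ℝ => m ρ q.1 q.2) OQ := by
  unfold m
  exact ContinuousOn.mul (by fun_prop) (psiX_cont hρ)

lemma mE_cont {ρ : ℝ} (hρ : 0 < ρ) : ContinuousOn (fun q : ℝ × ℝ => mE ρ q.1 q.2) OQ := by
  unfold mE
  refine ContinuousOn.mul (by fun_prop) (ContinuousOn.add ?_ ?_)
  · apply (psiX_cont hρ).div (by fun_prop)
    rintro q ⟨h1, h2⟩; positivity
  · apply (psi1X_cont hρ).mul
    apply ContinuousOn.mul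
    · apply ContinuousOn.div (by fun_prop) (by fun_prop)
      rintro q ⟨h1, h2⟩; positivity
    · apply ContinuousOn.div (by fun_prop) (by fun_prop)
      rintro q ⟨h1, h2⟩; positivity

lemma mE_cont' {ρ : ℝ} (hρ : 0 < ρ) : ContinuousOn (fun q : ℝ × ℝ => mE ρ q.2 q.1) OQ := by
  have : MapsTo (fun q : ℝ × ℝ => (q.2, q.1)) OQ OQ := fun q hq => ⟨hq.2, hq.1⟩
  exact (mE_cont hρ).comp (f := fun q : ℝ × ℝ => (q.2, q.1)) (by fun_prop) this

lemma mm_cont {ρ : ℝ} (hρ : 0 < ρ) : ContinuousOn (fun q : ℝ × ℝ => mm ρ q.1 q.2) OQ := by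
  unfold mm
  apply ((mE_cont hρ).add (mE_cont' hρ)).div (by fun_prop)
  rintro q ⟨h1, h2⟩; positivity

lemma m_edge {ρ η : ℝ} : m ρ ρ η = √(ρ+ρ) * √(η+ρ) := by
  simp [m, X, psi_zero]

lemma mE_edge {ρ η : ℝ} (hη : 0 < η + ρ) : (ρ+η) * mE ρ ρ η = m ρ ρ η / 2 := by
  simp only [m, mE, X, sub_self, zero_div, zero_mul, psi_zero, mul_zero, add_zero]
  have : ρ + η = η + ρ := add_comm _ _
  rw [this]; field_simp

lemma X_nonneg {ρ ξ η : ℝ} (hρ : 0 < ρ) (hξ : ρ ≤ ξ) (hη : ρ ≤ η) : 0 ≤ X ρ ξ η := by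
  unfold X
  have h1 : 0 ≤ ξ - ρ := by linarith
  have h2 : 0 ≤ η - ρ := by linarith
  have h3 : 0 < ξ := by linarith
  have h4 : 0 < η := by linarith
  positivity

lemma m_nonneg {ρ ξ η : ℝ} (hρ : 0 < ρ) (hξ : ρ ≤ ξ) (hη : ρ ≤ η) : 0 ≤ m ρ ξ η := by
  have := psi_nonneg (X_nonneg hρ hξ hη)
  unfold m; positivity

lemma m_le {ρ ξ η : ℝ} (hρ : 0 < ρ) (hξ : ρ ≤ ξ) (hη : ρ ≤ η) : m ρ ξ η ≤ cc * (ξ+η) := by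
  have hX := X_nonneg hρ hξ hη
  have := psi_nonneg hX
  have h1 := psi_le hX (lt_of_abs_lt (X_abs hρ (by linarith) (by linarith)))
  have h2 : √(ξ+ρ) * √(η+ρ) ≤ ξ + η := by
    have a := Real.mul_self_sqrt (show 0 ≤ ξ+ρ by linarith)
    have b := Real.mul_self_sqrt (show 0 ≤ η+ρ by linarith)
    nlinarith [sq_nonneg (√(ξ+ρ) - √(η+ρ))]
  unfold m
  calc _ ≤ (ξ+η) * cc := by
        have : 0 ≤ ξ + η := by linarith
        gcongr
    _ = _ := mul_comm _ _
end WR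

open MeasureTheory Filter Set
open scoped ENNReal

namespace WR

lemma m_asym_alg {ρ ξ η P s k y q : ℝ} (hρ : 0 < ρ) (h1 : ρ ≤ ξ) (h2 : ξ ≤ η)
    (hP : P = (ξ+ρ)*(η+ρ)) (hs : 0 < s) (hs2 : s^2 = ξ+η) (hk : 0 < k) (hk2 : k^2 = ξ*η)
    (hq : 0 < q) (hq2 : q^2 = ρ/2)
    (hy : 0 ≤ y) (hy2 : y^2 = P - ρ*(ξ+η) + ρ^2*(ξ+η)^2/(4*P)) :
    |y - k| ≤ (3/2*ρ^2/q) * (s/ξ) := by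
  have hξ : 0 < ξ := by linarith
  have hη : 0 < η := by linarith
  have hPp : 0 < P := by rw [hP]; positivity
  have hPg : ξ*(ξ+η)/2 ≤ P := by rw [hP]; nlinarith
  have hfr : (ξ+η)^2/(4*P) ≤ (ξ+η)/(2*ξ) := by
    rw [div_le_div_iff₀ (by positivity) (by positivity)]
    nlinarith [mul_le_mul_of_nonneg_right hPg (show 0 ≤ ξ+η by positivity)]
  have hfr0 : 0 ≤ (ξ+η)^2/(4*P) := by positivity
  have hone : 1 ≤ (ξ+η)/ξ := by rw [le_div_iff₀ hξ]; linarith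
  have hd : y^2 - k^2 ≤ 3/2*ρ^2*((ξ+η)/ξ) := by
    have e1 : y^2 - k^2 = ρ^2 + ρ^2*((ξ+η)^2/(4*P)) := by rw [hy2, hk2, hP]; ring
    have e2 : (ξ+η)/(2*ξ) = (ξ+η)/ξ/2 := by field_simp
    rw [e1]; rw [e2] at hfr
    nlinarith [sq_nonneg ρ, mul_le_mul_of_nonneg_left hfr (sq_nonneg ρ), mul_le_mul_of_nonneg_left hone (sq_nonneg ρ)]
  have hd0 : 0 ≤ y^2 - k^2 := by
    have e1 : y^2 - k^2 = ρ^2 + ρ^2*((ξ+η)^2/(4*P)) := by rw [hy2, hk2, hP]; ring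
    rw [e1]; positivity
  have hyk : k ≤ y := by nlinarith
  rw [abs_of_nonneg (by linarith)]
  have hkq : q*s ≤ k := by
    have : (q*s)^2 ≤ k^2 := by
      rw [mul_pow, hq2, hs2, hk2]; nlinarith
    exact le_of_sq_le_sq this hk.le
  have h3 : (y-k)*(q*s) ≤ 3/2*ρ^2*(s^2/ξ) := by
    calc (y-k)*(q*s) ≤ (y-k)*(y+k) := by gcongr <;> linarith
      _ = y^2-k^2 := by ring
      _ ≤ _ := by rw [hs2]; exact hd
  have h4 : (y-k) ≤ 3/2*ρ^2*(s^2/ξ)/(q*s) := by rw [le_div_iff₀ (by positivity)]; exact h3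
  refine h4.trans (le_of_eq ?_)
  field_simp
where
  le_of_sq_le_sq {a b : ℝ} (h : a^2 ≤ b^2) (hb : 0 ≤ b) : a ≤ b := by nlinarith [abs_le_of_sq_le_sq h hb, le_abs_self a]

lemma m_asym {ρ : ℝ} (hρ : 0 < ρ) : ∃ C : ℝ, 0 ≤ C ∧ ∀ ξ η, ρ ≤ ξ → ξ ≤ η →
    |m ρ ξ η - cc * √(ξ*η)| ≤ C * (√(ξ+η)/ξ) := by
  obtain ⟨C0, hC0, hpsi⟩ := psi_asym
  refine ⟨cc * (3/2*ρ^2/√(ρ/2)) + C0 * (2*(2*ρ*√(2*ρ))), ?_, ?_⟩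
  · have := cc_nonneg; positivity
  intro ξ η h1 h2
  have hξ : 0 < ξ := by linarith
  have hη : 0 < η := by linarith
  have hX0 := X_nonneg hρ h1 (h1.trans h2)
  have hX1 := lt_of_abs_lt (X_abs hρ hξ hη)
  have hp := hpsi _ hX0 hX1
  have h1X := one_sub_X hρ hξ hη
  set x := X ρ ξ η with hx
  set P := (ξ+ρ)*(η+ρ) with hP
  have hPp : 0 < P := by positivity
  have hPg : ξ*(ξ+η)/2 ≤ P := by rw [hP]; nlinarith
  have hs2 : √(ξ+η)^2 = ξ+η := Real.sq_sqrt (by positivity)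
  have hs : 0 < √(ξ+η) := by positivity
  have hk2 : √(ξ*η)^2 = ξ*η := Real.sq_sqrt (by positivity)
  have hk : 0 < √(ξ*η) := by positivity
  have hQ2 : √P^2 = P := Real.sq_sqrt hPp.le
  have hQ : 0 < √P := by positivity
  have hm : m ρ ξ η = √P * psi x := by
    rw [m, ← Real.sqrt_mul (by positivity)]
  have hcc := cc_nonneg
  set y := √P * (1 - (1-x)/4) with hy
  have hy0 : 0 ≤ y := by
    rw [hy]; apply mul_nonneg hQ.le; linarith
  have hy2 : y^2 = P - ρ*(ξ+η) + ρ^2*(ξ+η)^2/(4*P) := by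
    rw [hy, mul_pow, hQ2, h1X]; field_simp; ring
  have hA := m_asym_alg hρ h1 h2 hP hs hs2 hk hk2 (show 0 < √(ρ/2) by positivity)
    (Real.sq_sqrt (by positivity)) hy0 hy2
  have hB : √P * ((1-x)*√(1-x)) ≤ (2*(2*ρ*√(2*ρ))) * (√(ξ+η)/ξ) := by
    rw [h1X]
    rw [Real.sqrt_div (by positivity), Real.sqrt_mul (by positivity) (ξ+η)]
    have : √P * (2 * ρ * (ξ + η) / P * (√(2 * ρ) * √(ξ + η) / √P)) = (2*ρ*√(2*ρ)*√(ξ+η)) * ((ξ+η)/P) := by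
      field_simp
    rw [this]
    have h5 : (ξ+η)/P ≤ 2/ξ := by rw [div_le_div_iff₀ hPp hξ]; linarith
    calc _ ≤ (2*ρ*√(2*ρ)*√(ξ+η)) * (2/ξ) := by gcongr
      _ = _ := by field_simp
  have hsplit : m ρ ξ η - cc * √(ξ*η) = √P * (psi x - cc*(1-(1-x)/4)) + cc * (y - √(ξ*η)) := by
    rw [hm, hy]; ring
  rw [hsplit]
  calc _ ≤ |√P * (psi x - cc*(1-(1-x)/4))| + |cc * (y - √(ξ*η))| := abs_add_le _ _
    _ = √P * |psi x - cc*(1-(1-x)/4)| + cc * |y - √(ξ*η)| := by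
        rw [abs_mul, abs_mul, abs_of_pos hQ, abs_of_nonneg hcc]
    _ ≤ √P * (C0 * ((1-x)*√(1-x))) + cc * ((3/2*ρ^2/√(ρ/2)) * (√(ξ+η)/ξ)) := by gcongr
    _ = C0 * (√P * ((1-x)*√(1-x))) + cc * ((3/2*ρ^2/√(ρ/2)) * (√(ξ+η)/ξ)) := by ring
    _ ≤ C0 * ((2*(2*ρ*√(2*ρ))) * (√(ξ+η)/ξ)) + cc * ((3/2*ρ^2/√(ρ/2)) * (√(ξ+η)/ξ)) := by gcongr
    _ = _ := by ring

lemma ker_bd {ρ0 ρ1 : ℝ} (h0 : 0 < ρ0) (h01 : ρ0 ≤ ρ1) : ∃ C : ℝ, 0 ≤ C ∧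
    (∀ ξ η, ρ0 ≤ ξ → ξ ≤ ρ1 → ξ ≤ η → |m ρ0 ξ η| ≤ C * (√(ξ+η)/ξ)) ∧
    (∀ ξ η, ρ1 ≤ ξ → ξ ≤ η → |m ρ0 ξ η - m ρ1 ξ η| ≤ C * (√(ξ+η)/ξ)) := by
  have h1 : 0 < ρ1 := by linarith
  obtain ⟨C0, hC0, H0⟩ := m_asym h0
  obtain ⟨C1, hC1, H1⟩ := m_asym h1
  have hcc := cc_nonneg
  refine ⟨C0 + C1 + cc * (√ρ1 * ρ1), by positivity, ?_, ?_⟩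
  · intro ξ η a b c
    have hξ : 0 < ξ := by linarith
    have hη : 0 < η := by linarith
    have h := H0 ξ η a c
    have h2 : √(ξ*η) ≤ (√ρ1 * ρ1) * (√(ξ+η)/ξ) := by
      rw [Real.sqrt_mul hξ.le, ← mul_div_assoc, le_div_iff₀ hξ]
      have e1 : √ξ ≤ √ρ1 := Real.sqrt_le_sqrt b
      have e2 : √η ≤ √(ξ+η) := Real.sqrt_le_sqrt (by linarith)
      calc √ξ * √η * ξ ≤ √ρ1 * √(ξ+η) * ρ1 := by gcongr
        _ = _ := by ring
    have h3 : |m ρ0 ξ η| ≤ |m ρ0 ξ η - cc * √(ξ*η)| + cc * √(ξ*η) := by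
      have := abs_add_le (m ρ0 ξ η - cc * √(ξ*η)) (cc * √(ξ*η))
      rw [sub_add_cancel, abs_of_nonneg (by positivity : 0 ≤ cc * √(ξ*η))] at this
      exact this
    have h4 : 0 ≤ C1 * (√(ξ+η)/ξ) := by positivity
    have h5 := mul_le_mul_of_nonneg_left h2 hcc
    linarith
  · intro ξ η a c
    have hξ : 0 < ξ := by linarith
    have hη : 0 < η := by linarith
    have e0 := H0 ξ η (h01.trans a) c
    have e1 := H1 ξ η a c
    have h4 : 0 ≤ cc * (√ρ1 * ρ1) * (√(ξ+η)/ξ) := by positivity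
    have := abs_sub (m ρ0 ξ η - cc * √(ξ*η)) (m ρ1 ξ η - cc * √(ξ*η))
    rw [sub_sub_sub_cancel_right] at this
    linarith

/-- abstract divergence theorem on a square -/
lemma div_square {A A' B B' : ℝ → ℝ → ℝ} {ρ Λ : ℝ} (hρΛ : ρ ≤ Λ)
    (hA : ∀ ξ ∈ Icc ρ Λ, ∀ η ∈ Icc ρ Λ, HasDerivAt (fun x => A x η) (A' ξ η) ξ)
    (hB : ∀ ξ ∈ Icc ρ Λ, ∀ η ∈ Icc ρ Λ, HasDerivAt (fun y => B ξ y) (B' ξ η) η)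
    (cA : ContinuousOn (fun q : ℝ × ℝ => A' q.1 q.2) (Icc ρ Λ ×ˢ Icc ρ Λ))
    (cB : ContinuousOn (fun q : ℝ × ℝ => B' q.1 q.2) (Icc ρ Λ ×ˢ Icc ρ Λ)) :
    ∫ q in (Icc ρ Λ ×ˢ Icc ρ Λ), (A' q.1 q.2 + B' q.1 q.2) =
      (∫ η in Icc ρ Λ, (A Λ η - A ρ η)) + ∫ ξ in Icc ρ Λ, (B ξ Λ - B ξ ρ) := by
  have iA : IntegrableOn (fun q : ℝ × ℝ => A' q.1 q.2) (Icc ρ Λ ×ˢ Icc ρ Λ) :=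
    cA.integrableOn_compact (isCompact_Icc.prod isCompact_Icc)
  have iB : IntegrableOn (fun q : ℝ × ℝ => B' q.1 q.2) (Icc ρ Λ ×ˢ Icc ρ Λ) :=
    cB.integrableOn_compact (isCompact_Icc.prod isCompact_Icc)
  rw [integral_add iA iB]
  have mA : Integrable (fun q : ℝ × ℝ => A' q.1 q.2) ((volume.restrict (Icc ρ Λ)).prod (volume.restrict (Icc ρ Λ))) := by
    rw [Measure.prod_restrict]; exact iA
  congr 1
  · rw [Measure.volume_eq_prod, ← Measure.prod_restrict, integral_prod_symm _ mA]
    apply setIntegral_congr_fun measurableSet_Icc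
    intro η hη
    have hc : ContinuousOn (fun ξ => A' ξ η) (Icc ρ Λ) :=
      cA.comp (f := fun ξ => (ξ, η)) (by fun_prop) (fun ξ hξ => ⟨hξ, hη⟩)
    simp only
    rw [integral_Icc_eq_integral_Ioc, ← intervalIntegral.integral_of_le hρΛ]
    apply intervalIntegral.integral_eq_sub_of_hasDerivAt (f := fun ξ => A ξ η)
    · intro ξ hξ; rw [uIcc_of_le hρΛ] at hξ; exact hA ξ hξ η hη
    · apply ContinuousOn.intervalIntegrable; rw [uIcc_of_le hρΛ]; exact hc
  · rw [Measure.volume_eq_prod] at iB ⊢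
    rw [setIntegral_prod _ iB]
    apply setIntegral_congr_fun measurableSet_Icc
    intro ξ hξ
    have hc : ContinuousOn (fun η => B' ξ η) (Icc ρ Λ) :=
      cB.comp (f := fun η => (ξ, η)) (by fun_prop) (fun η hη => ⟨hξ, hη⟩)
    simp only
    rw [integral_Icc_eq_integral_Ioc, ← intervalIntegral.integral_of_le hρΛ]
    apply intervalIntegral.integral_eq_sub_of_hasDerivAt (f := fun η => B ξ η)
    · intro η hη; rw [uIcc_of_le hρΛ] at hη; exact hB ξ hξ η hη
    · apply ContinuousOn.intervalIntegrable; rw [uIcc_of_le hρΛ]; exact hc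
end WR

open MeasureTheory Filter Set
open scoped ENNReal

namespace WR

noncomputable def Afl (ρ : ℝ) (b bE : ℝ → ℝ → ℝ) (ξ η : ℝ) : ℝ :=
  ((ξ+η)*(m ρ ξ η * bE ξ η - mE ρ ξ η * b ξ η) + 2 * m ρ ξ η * b ξ η)/2

lemma sq_sub_OQ {ρ Λ : ℝ} (hρ : 0 < ρ) : Icc ρ Λ ×ˢ Icc ρ Λ ⊆ OQ := by
  rintro ⟨x, y⟩ ⟨h1, h2⟩
  exact ⟨lt_of_lt_of_le hρ h1.1, lt_of_lt_of_le hρ h2.1⟩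

lemma edge_int {ρ Λ : ℝ} (hρ : 0 < ρ) (hρΛ : ρ ≤ Λ) {b bE : ℝ → ℝ → ℝ}
    (hb : ∀ ξ ∈ Icc ρ Λ, ∀ η ∈ Icc ρ Λ, HasDerivAt (fun y => b ξ y) (bE ξ η) η)
    (cb : ContinuousOn (fun q : ℝ × ℝ => b q.1 q.2) (Icc ρ Λ ×ˢ Icc ρ Λ))
    (cE : ContinuousOn (fun q : ℝ × ℝ => bE q.1 q.2) (Icc ρ Λ ×ˢ Icc ρ Λ)) :
    ∫ η in Icc ρ Λ, (Afl ρ b bE Λ η - Afl ρ b bE ρ η) =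
      (∫ η in Icc ρ Λ, m ρ Λ η * ((Λ+η)*bE Λ η + 3/2*b Λ η))
      - ((Λ+Λ)*m ρ Λ Λ*b Λ Λ - (Λ+ρ)*m ρ Λ ρ*b Λ ρ)/2
      - ((ρ+Λ)*m ρ ρ Λ*b ρ Λ - (ρ+ρ)*m ρ ρ ρ*b ρ ρ)/2 := by
  have hΛ : Λ ∈ Icc ρ Λ := right_mem_Icc.2 hρΛ
  have hr : ρ ∈ Icc ρ Λ := left_mem_Icc.2 hρΛ
  have sl : ∀ {f : ℝ × ℝ → ℝ}, ContinuousOn f (Icc ρ Λ ×ˢ Icc ρ Λ) → ∀ c ∈ Icc ρ Λ,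
      ContinuousOn (fun η => f (c, η)) (Icc ρ Λ) := fun hf c hc =>
    hf.comp (f := fun η => (c, η)) (by fun_prop) (fun η hη => ⟨hc, hη⟩)
  have cm := fun c hc => sl ((m_cont hρ).mono (sq_sub_OQ (Λ := Λ) hρ)) c hc
  have cmE := fun c hc => sl ((mE_cont hρ).mono (sq_sub_OQ (Λ := Λ) hρ)) c hc
  have cb' := fun c hc => sl cb c hc
  have cE' := fun c hc => sl cE c hc
  simp only at cm cmE cb' cE'
  have cG : ∀ c ∈ Icc ρ Λ, ContinuousOn (fun η => m ρ c η * b c η + (c+η)*(mE ρ c η * b c η + m ρ c η * bE c η)) (Icc ρ Λ) := by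
    intro c hc
    have h1 := cm c hc; have h2 := cmE c hc; have h3 := cb' c hc; have h4 := cE' c hc
    fun_prop
  have FTC : ∀ c ∈ Icc ρ Λ, ∫ η in Icc ρ Λ, (m ρ c η * b c η + (c+η)*(mE ρ c η * b c η + m ρ c η * bE c η))
      = (c+Λ)*m ρ c Λ*b c Λ - (c+ρ)*m ρ c ρ*b c ρ := by
    intro c hc
    rw [integral_Icc_eq_integral_Ioc, ← intervalIntegral.integral_of_le hρΛ]
    apply intervalIntegral.integral_eq_sub_of_hasDerivAt (f := fun η => (c+η)*m ρ c η*b c η)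
    · intro η hη; rw [uIcc_of_le hρΛ] at hη
      have h1 := m_hasDeriv hρ (lt_of_lt_of_le hρ hc.1) (lt_of_lt_of_le hρ hη.1)
      have h2 : HasDerivAt (fun y => c + y) 1 η := (hasDerivAt_id η).const_add c
      refine ((h2.mul h1).mul (hb c hc η hη)).congr_deriv ?_
      simp only [Pi.mul_apply]; ring
    · apply ContinuousOn.intervalIntegrable; rw [uIcc_of_le hρΛ]; exact cG c hc
  have cM : ContinuousOn (fun η => m ρ Λ η * ((Λ+η)*bE Λ η + 3/2*b Λ η)) (Icc ρ Λ) := by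
    have h1 := cm Λ hΛ; have h3 := cb' Λ hΛ; have h4 := cE' Λ hΛ
    fun_prop
  have iM := cM.integrableOn_Icc (μ := volume)
  have iG := fun c hc => (cG c hc).integrableOn_Icc (μ := volume)
  rw [← FTC Λ hΛ, ← FTC ρ hr, sub_sub, ← add_div,
    ← integral_add (iG Λ hΛ) (iG ρ hr), ← integral_div]
  refine Eq.trans ?_ (integral_sub iM ((((iG Λ hΛ).add (iG ρ hr))).div_const 2))
  apply setIntegral_congr_fun measurableSet_Icc
  intro η hη
  have he := mE_edge (ρ := ρ) (η := η) (by linarith [hη.1])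
  simp only [Afl]
  linear_combination (b ρ η) * he

lemma green {ρ Λ : ℝ} (hρ : 0 < ρ) (hρΛ : ρ ≤ Λ) {a aX aE pp qq F : ℝ → ℝ → ℝ}
    (h1 : ∀ ξ ∈ Icc ρ Λ, ∀ η ∈ Icc ρ Λ, HasDerivAt (fun x => a x η) (aX ξ η) ξ)
    (h2 : ∀ ξ ∈ Icc ρ Λ, ∀ η ∈ Icc ρ Λ, HasDerivAt (fun y => a ξ y) (aE ξ η) η)
    (h3 : ∀ ξ ∈ Icc ρ Λ, ∀ η ∈ Icc ρ Λ, HasDerivAt (fun x => aE x η) (pp ξ η) ξ)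
    (h4 : ∀ ξ ∈ Icc ρ Λ, ∀ η ∈ Icc ρ Λ, HasDerivAt (fun y => aX ξ y) (qq ξ η) η)
    (ca : ContinuousOn (fun q : ℝ × ℝ => a q.1 q.2) (Icc ρ Λ ×ˢ Icc ρ Λ))
    (cX : ContinuousOn (fun q : ℝ × ℝ => aX q.1 q.2) (Icc ρ Λ ×ˢ Icc ρ Λ))
    (cE : ContinuousOn (fun q : ℝ × ℝ => aE q.1 q.2) (Icc ρ Λ ×ˢ Icc ρ Λ))
    (cp : ContinuousOn (fun q : ℝ × ℝ => pp q.1 q.2) (Icc ρ Λ ×ˢ Icc ρ Λ))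
    (cq : ContinuousOn (fun q : ℝ × ℝ => qq q.1 q.2) (Icc ρ Λ ×ˢ Icc ρ Λ))
    (pde : ∀ ξ ∈ Icc ρ Λ, ∀ η ∈ Icc ρ Λ,
      (ξ+η)*(pp ξ η + qq ξ η) + 3*(aX ξ η + aE ξ η) = -((ξ+η)/2) * F ξ η) :
    4*ρ^2*a ρ ρ = 2*Λ*m ρ Λ Λ*a Λ Λ
      - (∫ ξ in Icc ρ Λ, m ρ ξ Λ * ((ξ+Λ)*aX ξ Λ + 3/2*a ξ Λ))
      - (∫ η in Icc ρ Λ, m ρ Λ η * ((Λ+η)*aE Λ η + 3/2*a Λ η))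
      - (1/4) * ∫ q in (Icc ρ Λ ×ˢ Icc ρ Λ), (q.1+q.2) * m ρ q.1 q.2 * F q.1 q.2 := by
  have cm := (m_cont hρ).mono (sq_sub_OQ (Λ := Λ) hρ)
  have cmE := (mE_cont hρ).mono (sq_sub_OQ (Λ := Λ) hρ)
  have cmX := (mE_cont' hρ).mono (sq_sub_OQ (Λ := Λ) hρ)
  have cmm := (mm_cont hρ).mono (sq_sub_OQ (Λ := Λ) hρ)
  have D := div_square (A := Afl ρ a aE) (B := fun ξ η => Afl ρ (fun y x => a x y) (fun y x => aX x y) η ξ)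
    (A' := fun ξ η => ((m ρ ξ η * aE ξ η - mE ρ ξ η * a ξ η) + (ξ+η)*(mE ρ η ξ * aE ξ η + m ρ ξ η * pp ξ η
      - mm ρ ξ η * a ξ η - mE ρ ξ η * aX ξ η) + 2 * mE ρ η ξ * a ξ η + 2 * m ρ ξ η * aX ξ η)/2)
    (B' := fun ξ η => ((m ρ ξ η * aX ξ η - mE ρ η ξ * a ξ η) + (ξ+η)*(mE ρ ξ η * aX ξ η + m ρ ξ η * qq ξ η
      - mm ρ ξ η * a ξ η - mE ρ η ξ * aE ξ η) + 2 * mE ρ ξ η * a ξ η + 2 * m ρ ξ η * aE ξ η)/2)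
    hρΛ ?_ ?_ ?_ ?_
  · have eA := edge_int hρ hρΛ h2 ca cE
    have sw : ∀ {f : ℝ × ℝ → ℝ}, ContinuousOn f (Icc ρ Λ ×ˢ Icc ρ Λ) →
        ContinuousOn (fun q => f (q.2, q.1)) (Icc ρ Λ ×ˢ Icc ρ Λ) := fun hf =>
      hf.comp (f := fun q : ℝ × ℝ => (q.2, q.1)) (by fun_prop) (fun q hq => ⟨hq.2, hq.1⟩)
    have eB := edge_int hρ hρΛ (b := fun y x => a x y) (bE := fun y x => aX x y)
      (fun η hη ξ hξ => h1 ξ hξ η hη) (sw ca) (sw cX)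
    have L : ∫ q in (Icc ρ Λ ×ˢ Icc ρ Λ), ((fun ξ η => ((m ρ ξ η * aE ξ η - mE ρ ξ η * a ξ η) + (ξ+η)*(mE ρ η ξ * aE ξ η + m ρ ξ η * pp ξ η
      - mm ρ ξ η * a ξ η - mE ρ ξ η * aX ξ η) + 2 * mE ρ η ξ * a ξ η + 2 * m ρ ξ η * aX ξ η)/2) q.1 q.2 + (fun ξ η => ((m ρ ξ η * aX ξ η - mE ρ η ξ * a ξ η) + (ξ+η)*(mE ρ ξ η * aX ξ η + m ρ ξ η * qq ξ η
      - mm ρ ξ η * a ξ η - mE ρ η ξ * aE ξ η) + 2 * mE ρ ξ η * a ξ η + 2 * m ρ ξ η * aE ξ η)/2) q.1 q.2)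
      = -(1/4) * ∫ q in (Icc ρ Λ ×ˢ Icc ρ Λ), (q.1+q.2) * m ρ q.1 q.2 * F q.1 q.2 := by
      rw [← integral_const_mul]
      apply setIntegral_congr_fun (measurableSet_Icc.prod measurableSet_Icc)
      rintro ⟨ξ, η⟩ ⟨hξ, hη⟩
      have e := pde ξ hξ η hη
      have e2 : 2*(ξ+η)*mm ρ ξ η = mE ρ ξ η + mE ρ η ξ := by
        have : 0 < ξ := lt_of_lt_of_le hρ hξ.1
        have : 0 < η := lt_of_lt_of_le hρ hη.1
        unfold mm; field_simp
      simp only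
      linear_combination (m ρ ξ η/2) * e - (a ξ η/2)*e2
    rw [L, eA, eB] at D
    have mr : m ρ ρ ρ = 2*ρ := by rw [m_edge, Real.mul_self_sqrt (by linarith)]; ring
    have e3 : ∫ ξ in Icc ρ Λ, m ρ ξ Λ * ((ξ+Λ)*aX ξ Λ + 3/2*a ξ Λ) =
        ∫ η in Icc ρ Λ, m ρ Λ η * ((Λ+η)*aX η Λ + 3/2*a η Λ) := by
      congr 1; ext ξ; rw [m_symm, add_comm ξ Λ]
    rw [e3]
    simp only [mr] at D
    have s1 : m ρ Λ ρ = m ρ ρ Λ := m_symm _ _ _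
    rw [s1] at D
    linear_combination -D
  · intro ξ hξ η hη
    have pξ := lt_of_lt_of_le hρ hξ.1
    have pη := lt_of_lt_of_le hρ hη.1
    have d1 := m_hasDeriv' hρ pξ pη
    have d2 := mE_hasDeriv hρ pξ pη
    have d0 : HasDerivAt (fun x => x + η) 1 ξ := (hasDerivAt_id ξ).add_const η
    have a1 := h1 ξ hξ η hη
    have a3 := h3 ξ hξ η hη
    refine (((d0.mul ((d1.mul a3).sub (d2.mul a1))).add ((d1.const_mul 2).mul a1)).div_const 2).congr_deriv ?_
    simp only [Pi.mul_apply, Pi.sub_apply]; ring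
  · intro ξ hξ η hη
    have pξ := lt_of_lt_of_le hρ hξ.1
    have pη := lt_of_lt_of_le hρ hη.1
    have d1 := m_hasDeriv' hρ pη pξ
    have d2 := mE_hasDeriv hρ pη pξ
    have d0 : HasDerivAt (fun x => x + ξ) 1 η := (hasDerivAt_id η).add_const ξ
    have a1 := h2 ξ hξ η hη
    have a3 := h4 ξ hξ η hη
    refine (((d0.mul ((d1.mul a3).sub (d2.mul a1))).add ((d1.const_mul 2).mul a1)).div_const 2).congr_deriv ?_
    simp only [Pi.mul_apply, Pi.sub_apply, m_symm ρ η ξ]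
    have : mm ρ η ξ = mm ρ ξ η := by unfold mm; rw [add_comm, add_comm η ξ]
    rw [this]; ring
  · fun_prop
  · fun_prop
end WR

open MeasureTheory Filter Set
open scoped ENNReal

namespace WR

def UU : Set (ℝ × ℝ) := {q : ℝ × ℝ | 0 + |q.1| < q.2}

lemma UU_open : IsOpen UU := by
  unfold UU
  exact isOpen_lt (by fun_prop) (by fun_prop)

def Sm (u : ℝ → ℝ → ℝ) : Prop := ContDiffOn ℝ ((⊤ : ℕ∞) : WithTop ℕ∞) (fun q : ℝ × ℝ => u q.1 q.2) UU

noncomputable def dru (u : ℝ → ℝ → ℝ) (t r : ℝ) : ℝ := deriv (u t) r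

lemma Sm.hasF {u : ℝ → ℝ → ℝ} (h : Sm u) {t r : ℝ} (hq : (t, r) ∈ UU) :
    HasFDerivAt (fun q : ℝ × ℝ => u q.1 q.2) (fderiv ℝ (fun q : ℝ × ℝ => u q.1 q.2) (t, r)) (t, r) :=
  ((h.contDiffAt (UU_open.mem_nhds hq)).differentiableAt (by simp)).hasFDerivAt

lemma Sm.comp_line {u : ℝ → ℝ → ℝ} (h : Sm u) {t r : ℝ} (hq : (t, r) ∈ UU) {c d x0 : ℝ} {α β : ℝ → ℝ}
    (hα : HasDerivAt α c x0) (hβ : HasDerivAt β d x0) (eα : α x0 = t) (eβ : β x0 = r) :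
    HasDerivAt (fun x => u (α x) (β x)) (c * dtu u t r + d * dru u t r) x0 := by
  have key : ∀ {c d x0 : ℝ} {α β : ℝ → ℝ}, HasDerivAt α c x0 → HasDerivAt β d x0 → α x0 = t → β x0 = r →
    HasDerivAt (fun x => u (α x) (β x)) (fderiv ℝ (fun q : ℝ × ℝ => u q.1 q.2) (t, r) (c, d)) x0 := by
    intro c d x0 α β hα hβ eα eβ
    have h1 := h.hasF hq
    rw [← eα, ← eβ] at h1 ⊢
    exact HasFDerivAt.comp_hasDerivAt (f := fun x => (α x, β x)) x0 h1 (hα.prodMk hβ)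
  have k1 := (key (hasDerivAt_id t) (hasDerivAt_const t r) rfl rfl).deriv
  have k2 := (key (hasDerivAt_const r t) (hasDerivAt_id r) rfl rfl).deriv
  refine (key hα hβ eα eβ).congr_deriv ?_
  have e1 : dtu u t r = fderiv ℝ (fun q : ℝ × ℝ => u q.1 q.2) (t, r) (1, 0) := k1
  have e2 : dru u t r = fderiv ℝ (fun q : ℝ × ℝ => u q.1 q.2) (t, r) (0, 1) := k2
  rw [e1, e2]
  have : ((c, d) : ℝ × ℝ) = c • ((1, 0) : ℝ × ℝ) + d • ((0, 1) : ℝ × ℝ) := by simp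
  rw [this, map_add, map_smul, map_smul]; simp

lemma Sm.dt {u : ℝ → ℝ → ℝ} (h : Sm u) {t r : ℝ} (hq : (t, r) ∈ UU) :
    HasDerivAt (fun s => u s r) (dtu u t r) t := by
  have := h.comp_line hq (hasDerivAt_id t) (hasDerivAt_const t r) rfl rfl
  simpa using this

lemma Sm.dr {u : ℝ → ℝ → ℝ} (h : Sm u) {t r : ℝ} (hq : (t, r) ∈ UU) :
    HasDerivAt (u t) (dru u t r) r := by
  have := h.comp_line hq (hasDerivAt_const r t) (hasDerivAt_id r) rfl rfl
  simpa using this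

lemma Sm.fderiv_apply {u : ℝ → ℝ → ℝ} (h : Sm u) (v : ℝ × ℝ) :
    ContDiffOn ℝ ((⊤ : ℕ∞) : WithTop ℕ∞) (fun q => fderiv ℝ (fun q : ℝ × ℝ => u q.1 q.2) q v) UU := by
  have h1 : ContDiffOn ℝ ((⊤ : ℕ∞) : WithTop ℕ∞) (fderiv ℝ (fun q : ℝ × ℝ => u q.1 q.2)) UU :=
    h.fderiv_of_isOpen UU_open (by simp)
  exact h1.clm_apply contDiffOn_const

lemma Sm.dtu {u : ℝ → ℝ → ℝ} (h : Sm u) : Sm (dtu u) := by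
  refine (h.fderiv_apply (1, 0)).congr ?_
  rintro ⟨t, r⟩ hq
  have h1 := h.hasF hq
  exact (HasFDerivAt.comp_hasDerivAt (f := fun x => (x, r)) t h1 ((hasDerivAt_id t).prodMk (hasDerivAt_const t r))).deriv

lemma Sm.dru {u : ℝ → ℝ → ℝ} (h : Sm u) : Sm (dru u) := by
  refine (h.fderiv_apply (0, 1)).congr ?_
  rintro ⟨t, r⟩ hq
  have h1 := h.hasF hq
  exact (HasFDerivAt.comp_hasDerivAt (f := fun x => (t, x)) r h1 ((hasDerivAt_const r t).prodMk (hasDerivAt_id r))).deriv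

lemma Sm.cont {u : ℝ → ℝ → ℝ} (h : Sm u) : ContinuousOn (fun q : ℝ × ℝ => u q.1 q.2) UU := h.continuousOn

noncomputable def tt (t0 ξ η : ℝ) : ℝ := t0 + (η-ξ)/2
noncomputable def rr (ξ η : ℝ) : ℝ := (ξ+η)/2

lemma tr_mem {t0 ξ η : ℝ} (h1 : |t0| < ξ) (h2 : |t0| < η) : (tt t0 ξ η, rr ξ η) ∈ UU := by
  rw [abs_lt] at h1 h2
  simp only [UU, mem_setOf_eq, zero_add, tt, rr, abs_lt]
  constructor <;> linarith

lemma Sm.dX {u : ℝ → ℝ → ℝ} (h : Sm u) {t0 ξ η : ℝ} (h1 : |t0| < ξ) (h2 : |t0| < η) :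
    HasDerivAt (fun x => u (tt t0 x η) (rr x η)) ((WR.dru u (tt t0 ξ η) (rr ξ η) - _root_.dtu u (tt t0 ξ η) (rr ξ η))/2) ξ := by
  have a1 : HasDerivAt (fun x => tt t0 x η) (-1/2) ξ := by
    unfold tt
    exact ((((hasDerivAt_id ξ).const_sub η).div_const 2).const_add t0)
  have a2 : HasDerivAt (fun x => rr x η) (1/2) ξ := by
    unfold rr
    exact (((hasDerivAt_id ξ).add_const η).div_const 2)
  refine (h.comp_line (tr_mem h1 h2) a1 a2 rfl rfl).congr_deriv ?_
  ring

lemma Sm.dE {u : ℝ → ℝ → ℝ} (h : Sm u) {t0 ξ η : ℝ} (h1 : |t0| < ξ) (h2 : |t0| < η) :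
    HasDerivAt (fun y => u (tt t0 ξ y) (rr ξ y)) ((WR.dru u (tt t0 ξ η) (rr ξ η) + _root_.dtu u (tt t0 ξ η) (rr ξ η))/2) η := by
  have a1 : HasDerivAt (fun y => tt t0 ξ y) (1/2) η := by
    unfold tt
    exact ((((hasDerivAt_id η).sub_const ξ).div_const 2).const_add t0)
  have a2 : HasDerivAt (fun y => rr ξ y) (1/2) η := by
    unfold rr
    exact (((hasDerivAt_id η).const_add ξ).div_const 2)
  refine (h.comp_line (tr_mem h1 h2) a1 a2 rfl rfl).congr_deriv ?_
  ring

lemma Sm.cont_tr {u : ℝ → ℝ → ℝ} (h : Sm u) {t0 : ℝ} {s : Set (ℝ × ℝ)}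
    (hs : ∀ q ∈ s, |t0| < q.1 ∧ |t0| < q.2) :
    ContinuousOn (fun q : ℝ × ℝ => u (tt t0 q.1 q.2) (rr q.1 q.2)) s := by
  refine h.cont.comp (f := fun q : ℝ × ℝ => (tt t0 q.1 q.2, rr q.1 q.2)) ?_ ?_
  · unfold tt rr; fun_prop
  · intro q hq; exact tr_mem (hs q hq).1 (hs q hq).2

lemma IsExtSol.sm {p : ℕ} {u : ℝ → ℝ → ℝ} (h : IsExtSol p ⊤ 0 u) : Sm u := h.1

lemma pde' {p : ℕ} {u : ℝ → ℝ → ℝ} (h : IsExtSol p ⊤ 0 u) {t r : ℝ} (hq : (t, r) ∈ UU) :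
    dtu (dtu u) t r - dru (dru u) t r - (3/r) * dru u t r = |u t r|^(p-1) * u t r := h.2 t r hq

noncomputable def FF (p : ℕ) (u : ℝ → ℝ → ℝ) (t r : ℝ) : ℝ := |u t r|^(p-1) * u t r

lemma green_u {p : ℕ} {u : ℝ → ℝ → ℝ} (h : IsExtSol p ⊤ 0 u) {t0 ρ Λ : ℝ} (hρ : |t0| < ρ) (hρΛ : ρ ≤ Λ) :
    4*ρ^2*u t0 ρ = 2*Λ*m ρ Λ Λ*u t0 Λ
      - (∫ ξ in Icc ρ Λ, m ρ ξ Λ * ((ξ+Λ)*((dru u (tt t0 ξ Λ) (rr ξ Λ) - dtu u (tt t0 ξ Λ) (rr ξ Λ))/2) + 3/2*u (tt t0 ξ Λ) (rr ξ Λ)))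
      - (∫ η in Icc ρ Λ, m ρ Λ η * ((Λ+η)*((dru u (tt t0 Λ η) (rr Λ η) + dtu u (tt t0 Λ η) (rr Λ η))/2) + 3/2*u (tt t0 Λ η) (rr Λ η)))
      - (1/4) * ∫ q in (Icc ρ Λ ×ˢ Icc ρ Λ), (q.1+q.2) * m ρ q.1 q.2 * FF p u (tt t0 q.1 q.2) (rr q.1 q.2) := by
  have hp : 0 < ρ := lt_of_le_of_lt (abs_nonneg _) hρ
  have sm : Sm u := h.1
  have hs : ∀ q ∈ Icc ρ Λ ×ˢ Icc ρ Λ, |t0| < q.1 ∧ |t0| < q.2 := fun q hq =>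
    ⟨hρ.trans_le hq.1.1, hρ.trans_le hq.2.1⟩
  have c0 := sm.cont_tr hs
  have ct := sm.dtu.cont_tr hs
  have cr := sm.dru.cont_tr hs
  have ctt := sm.dtu.dtu.cont_tr hs
  have crr := sm.dru.dru.cont_tr hs
  have ctr := sm.dtu.dru.cont_tr hs
  have crt := sm.dru.dtu.cont_tr hs
  have G := green hp hρΛ (a := fun ξ η => u (tt t0 ξ η) (rr ξ η))
    (aX := fun ξ η => (dru u (tt t0 ξ η) (rr ξ η) - dtu u (tt t0 ξ η) (rr ξ η))/2)
    (aE := fun ξ η => (dru u (tt t0 ξ η) (rr ξ η) + dtu u (tt t0 ξ η) (rr ξ η))/2)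
    (pp := fun ξ η => ((dru (dru u) (tt t0 ξ η) (rr ξ η) - dtu (dru u) (tt t0 ξ η) (rr ξ η))/2
       + (dru (dtu u) (tt t0 ξ η) (rr ξ η) - dtu (dtu u) (tt t0 ξ η) (rr ξ η))/2)/2)
    (qq := fun ξ η => ((dru (dru u) (tt t0 ξ η) (rr ξ η) + dtu (dru u) (tt t0 ξ η) (rr ξ η))/2
       - (dru (dtu u) (tt t0 ξ η) (rr ξ η) + dtu (dtu u) (tt t0 ξ η) (rr ξ η))/2)/2)
    (F := fun ξ η => FF p u (tt t0 ξ η) (rr ξ η)) ?_ ?_ ?_ ?_ ?_ ?_ ?_ ?_ ?_ ?_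
  · have e1 : ∀ x, tt t0 x x = t0 := fun x => by simp [tt]
    have e2 : ∀ x, rr x x = x := fun x => by simp [rr]
    simp only [e1, e2] at G
    exact G
  · intro ξ hξ η hη
    exact sm.dX (hρ.trans_le hξ.1) (hρ.trans_le hη.1)
  · intro ξ hξ η hη
    exact sm.dE (hρ.trans_le hξ.1) (hρ.trans_le hη.1)
  · intro ξ hξ η hη
    exact ((sm.dru.dX (hρ.trans_le hξ.1) (hρ.trans_le hη.1)).add
      (sm.dtu.dX (hρ.trans_le hξ.1) (hρ.trans_le hη.1))).div_const 2
  · intro ξ hξ η hη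
    exact ((sm.dru.dE (hρ.trans_le hξ.1) (hρ.trans_le hη.1)).sub
      (sm.dtu.dE (hρ.trans_le hξ.1) (hρ.trans_le hη.1))).div_const 2
  · exact c0
  · fun_prop
  · fun_prop
  · fun_prop
  · fun_prop
  · intro ξ hξ η hη
    have e := pde' h (tr_mem (hρ.trans_le hξ.1) (hρ.trans_le hη.1))
    have hr : 0 < ξ + η := by linarith [hξ.1, hη.1]
    simp only [FF]
    rw [← e]
    have : 3 / rr ξ η = 6/(ξ+η) := by unfold rr; field_simp; norm_num
    rw [this]
    field_simp
    ring
end WR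

open MeasureTheory Filter Set
open scoped ENNReal

namespace WR

noncomputable def En (u : ℝ → ℝ → ℝ) (t r : ℝ) : ℝ := ((dtu u t r)^2 + (dru u t r)^2) * r^3

def HM (u : ℝ → ℝ → ℝ) (R M : ℝ) : Prop :=
  0 ≤ M ∧ ∀ t, ∫⁻ r in Ioi (R+|t|), ENNReal.ofReal (En u t r) ≤ ENNReal.ofReal M

lemma exists_HM {C₀ : ℝ} {u : ℝ → ℝ → ℝ}
    (hdata : ∀ R₀ : ℝ, 0 < R₀ → eH R₀ (u 0) (fun r => dtu u 0 r) < ⊤)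
    (hbd : ∀ R₀ : ℝ, 0 < R₀ → ∀ ρ : ℝ, R₀ ≤ ρ →
      eLL 2 8 ρ u + eLL 3 6 ρ u + supH ρ u
        ≤ ENNReal.ofReal C₀ * eH ρ (u 0) (fun r => dtu u 0 r)) {R : ℝ} (hR : 0 < R) :
    ∃ M, HM u R M := by
  set K := ENNReal.ofReal C₀ * eH R (u 0) (fun r => dtu u 0 r) with hK
  have hKt : K ≠ ⊤ := ENNReal.mul_ne_top ENNReal.ofReal_ne_top (hdata R hR).ne
  refine ⟨(K^(2:ℝ)).toReal, ENNReal.toReal_nonneg, fun t => ?_⟩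
  have hK2 : K^(2:ℝ) ≠ ⊤ := ENNReal.rpow_ne_top_of_nonneg (by norm_num) hKt
  rw [ENNReal.ofReal_toReal hK2]
  have h1 : eH (R+|t|) (u t) (fun r => dtu u t r) ≤ K :=
    (le_iSup (fun t => eH (R+|t|) (u t) (fun r => dtu u t r)) t).trans
      ((le_add_left le_rfl).trans (hbd R hR R le_rfl))
  have h2 := ENNReal.rpow_le_rpow h1 (by norm_num : (0:ℝ) ≤ 2)
  unfold eH at h2
  rw [← ENNReal.rpow_mul] at h2
  norm_num at h2
  norm_num
  refine le_trans (le_of_eq ?_) h2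
  rw [← lintegral_add_left]
  · apply setLIntegral_congr_fun measurableSet_Ioi
    intro r hr
    have hr0 : 0 ≤ r := by
      have := abs_nonneg t
      have : R + |t| < r := hr
      linarith
    simp only [En]
    rw [← ENNReal.ofReal_add (by positivity) (by positivity)]
    congr 1; unfold dru; ring
  · exact (((measurable_deriv _).pow_const 2).mul (by fun_prop)).ennreal_ofReal

lemma mem_UU {R t r : ℝ} (hR : 0 ≤ R) (h : R + |t| < r) : (t, r) ∈ UU := by
  simp only [UU, Set.mem_ofPred_eq]; linarith

lemma Sm.slice {u : ℝ → ℝ → ℝ} (h : Sm u) {R t : ℝ} (hR : 0 ≤ R) : ContinuousOn (u t) (Ioi (R+|t|)) :=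
  h.cont.comp (f := fun r => (t, r)) (by fun_prop) (fun _ hr => mem_UU hR hr)

lemma Sm.En {u : ℝ → ℝ → ℝ} (h : Sm u) : Sm (WR.En u) := by
  unfold Sm WR.En
  have h1 : ContDiffOn ℝ _ _ _ := h.dtu
  have h2 : ContDiffOn ℝ _ _ _ := h.dru
  have h3 : ContDiffOn ℝ ((⊤ : ℕ∞) : WithTop ℕ∞) (fun q : ℝ × ℝ => q.2^3) UU := by fun_prop
  exact ((h1.pow 2).add (h2.pow 2)).mul h3

lemma En_nonneg {u : ℝ → ℝ → ℝ} {t r : ℝ} (hr : 0 ≤ r) : 0 ≤ En u t r := by unfold En; positivity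

lemma En_integrable {u : ℝ → ℝ → ℝ} (h : Sm u) {R M t : ℝ} (hR : 0 ≤ R) (hM : HM u R M) :
    IntegrableOn (En u t) (Ioi (R+|t|)) ∧ ∫ r in Ioi (R+|t|), En u t r ≤ M ∧
      ENNReal.ofReal (∫ r in Ioi (R+|t|), En u t r) = ∫⁻ r in Ioi (R+|t|), ENNReal.ofReal (En u t r) := by
  have hm : AEStronglyMeasurable (En u t) (volume.restrict (Ioi (R+|t|))) :=
    (h.En.slice hR).aestronglyMeasurable measurableSet_Ioi
  have hnn : 0 ≤ᵐ[volume.restrict (Ioi (R+|t|))] En u t := by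
    filter_upwards [ae_restrict_mem measurableSet_Ioi] with r hr
    have : R + |t| < r := hr
    exact En_nonneg (by linarith [abs_nonneg t])
  have hi : IntegrableOn (En u t) (Ioi (R+|t|)) := by
    refine ⟨hm, ?_⟩
    rw [hasFiniteIntegral_iff_ofReal hnn]
    exact (hM.2 t).trans_lt ENNReal.ofReal_lt_top
  have he := ofReal_integral_eq_lintegral_ofReal hi hnn
  refine ⟨hi, ?_, he⟩
  have := hM.2 t
  rw [← he] at this
  exact (ENNReal.ofReal_le_ofReal_iff hM.1).1 this

lemma En_tendsto {u : ℝ → ℝ → ℝ} (h : Sm u) {R M : ℝ} (hR : 0 ≤ R) (hM : HM u R M)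
    (hv : ExtEnergyVanishes R u) :
    Tendsto (fun t => ∫⁻ r in Ioi (R+|t|), ENNReal.ofReal (En u t r)) atTop (nhds 0) ∧
    Tendsto (fun t => ∫⁻ r in Ioi (R+|t|), ENNReal.ofReal (En u t r)) atBot (nhds 0) := by
  have e : (fun t => ∫⁻ r in Ioi (R+|t|), ENNReal.ofReal (En u t r)) =
      fun t => ENNReal.ofReal (∫ r in Ioi (R + |t|), ((dtu u t r) ^ 2 + (deriv (u t) r) ^ 2) * r ^ 3) := by
    ext t; exact ((En_integrable h hR hM).2.2).symm
  rw [e, ← ENNReal.ofReal_zero]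
  exact ⟨ENNReal.tendsto_ofReal hv.1, ENNReal.tendsto_ofReal hv.2⟩

lemma En_Icc {u : ℝ → ℝ → ℝ} (h : Sm u) {R M t N N' : ℝ} (hR : 0 ≤ R) (hM : HM u R M) (hN : R + |t| < N) :
    IntegrableOn (En u t) (Icc N N') ∧ ∫ r in Icc N N', En u t r ≤ M := by
  obtain ⟨h1, h2, -⟩ := En_integrable (t := t) h hR hM
  have hs : Icc N N' ⊆ Ioi (R+|t|) := fun r hr => lt_of_lt_of_le hN hr.1
  refine ⟨h1.mono_set hs, le_trans (setIntegral_mono_set h1 ?_ hs.eventuallyLE) h2⟩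
  filter_upwards [ae_restrict_mem measurableSet_Ioi] with r hr
  have : R + |t| < r := hr
  exact En_nonneg (by linarith [abs_nonneg t])

lemma inv_cube_int {r r' : ℝ} (hr : 0 < r) (hrr : r ≤ r') :
    ∫ s in r..r', (s^3)⁻¹ ≤ 1/(2*r^2) := by
  have : ∫ s in r..r', (s^3)⁻¹ = (-(1/2)*(r'^2)⁻¹) - (-(1/2)*(r^2)⁻¹) := by
    apply intervalIntegral.integral_eq_sub_of_hasDerivAt (f := fun s => -(1/2)*(s^2)⁻¹)
    · intro s hs; rw [uIcc_of_le hrr] at hs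
      have hs0 : 0 < s := lt_of_lt_of_le hr hs.1
      refine (((hasDerivAt_pow 2 s).inv (by positivity)).const_mul (-(1/2))).congr_deriv ?_
      field_simp; norm_num
    · apply ContinuousOn.intervalIntegrable
      rw [uIcc_of_le hrr]
      apply ContinuousOn.inv₀ (by fun_prop)
      intro s hs
      have hs0 : 0 < s := lt_of_lt_of_le hr hs.1
      positivity
  rw [this]
  have h2 : 0 ≤ (r'^2)⁻¹ := by positivity
  have : 1/(2*r^2) = 1/2*(r^2)⁻¹ := by field_simp
  linarith

lemma u_diff {u : ℝ → ℝ → ℝ} (h : Sm u) {R M t r r' : ℝ} (hR : 0 < R) (hM : HM u R M) (hr : R + |t| < r)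
    (hrr : r ≤ r') : |u t r' - u t r| ≤ (M+1)/r := by
  have hr0 : 0 < r := by linarith [abs_nonneg t]
  have hsub : Icc r r' ⊆ Ioi (R+|t|) := fun s hs => lt_of_lt_of_le hr hs.1
  have hc : ContinuousOn (dru u t) (uIcc r r') := by
    rw [uIcc_of_le hrr]; exact (h.dru.slice hR.le).mono hsub
  have e : ∫ s in r..r', dru u t s = u t r' - u t r := by
    apply intervalIntegral.integral_eq_sub_of_hasDerivAt
    · intro s hs; rw [uIcc_of_le hrr] at hs
      exact h.dr (mem_UU hR.le (hsub hs))
    · exact hc.intervalIntegrable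
  rw [← e]
  obtain ⟨i1, i2⟩ := En_Icc (N' := r') h hR.le hM hr
  have i1' : IntervalIntegrable (En u t) volume r r' := by
    rw [intervalIntegrable_iff_integrableOn_Icc_of_le hrr]; exact i1
  have i3 : IntervalIntegrable (fun s => (s^3)⁻¹) volume r r' := by
    apply ContinuousOn.intervalIntegrable
    rw [uIcc_of_le hrr]
    apply ContinuousOn.inv₀ (by fun_prop)
    intro s hs
    have hs0 : 0 < s := lt_of_lt_of_le hr0 hs.1
    positivity
  have i2' : ∫ s in r..r', En u t s ≤ M := by
    rw [intervalIntegral.integral_of_le hrr, ← integral_Icc_eq_integral_Ioc]; exact i2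
  calc |∫ s in r..r', dru u t s| ≤ ∫ s in r..r', |dru u t s| :=
        intervalIntegral.abs_integral_le_integral_abs hrr
    _ ≤ ∫ s in r..r', ((r⁻¹/2) * En u t s + (r/2) * (s^3)⁻¹) := by
        apply intervalIntegral.integral_mono_on hrr hc.abs.intervalIntegrable
          ((i1'.const_mul _).add (i3.const_mul _))
        intro s hs
        have hs0 : 0 < s := lt_of_lt_of_le hr0 hs.1
        have e1 : (r⁻¹/2) * (dru u t s ^2 * s^3) ≤ (r⁻¹/2) * En u t s := by
          unfold En; gcongr; nlinarith [sq_nonneg (dtu u t s)]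
        refine le_trans ?_ (add_le_add_left e1 _)
        have e2 : (r⁻¹/2) * (dru u t s ^2 * s^3) + (r/2) * (s^3)⁻¹ - |dru u t s|
            = (1/(2*r*s^3)) * (|dru u t s| * s^3 - r)^2 := by
          rw [← sq_abs (dru u t s)]; field_simp; ring
        have : 0 ≤ (1/(2*r*s^3)) * (|dru u t s| * s^3 - r)^2 := by positivity
        linarith
    _ = (r⁻¹/2) * (∫ s in r..r', En u t s) + (r/2) * ∫ s in r..r', (s^3)⁻¹ := by
        rw [intervalIntegral.integral_add (i1'.const_mul _) (i3.const_mul _),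
          intervalIntegral.integral_const_mul, intervalIntegral.integral_const_mul]
    _ ≤ (r⁻¹/2) * M + (r/2) * (1/(2*r^2)) := by
        gcongr; exact inv_cube_int hr0 hrr
    _ ≤ (M+1)/r := by
        have : (M+1)/r - ((r⁻¹/2) * M + (r/2) * (1/(2*r^2))) = (M/2+3/4)/r := by field_simp; ring
        have h2 : 0 ≤ (M/2+3/4)/r := by have := hM.1; positivity
        linarith

lemma L_est {u : ℝ → ℝ → ℝ} (h : Sm u) {R M t N N' δ : ℝ} (hR : 0 < R) (hM : HM u R M) (hN : R + |t| < N)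
    (hNN : N ≤ N') (hδ : 0 < δ) :
    ∫ r in Icc N N', |u t r - u 0 r| * r ≤ |t| * (δ * M + Real.log (N'/N) / (4*δ)) := by
  have hN0 : 0 < N := by linarith [abs_nonneg t]
  have hs : ∀ s ∈ uIcc 0 t, ∀ r, N ≤ r → R + |s| < r := by
    intro s hs r hr
    have := abs_sub_left_of_mem_uIcc hs
    simp at this; linarith
  have hsU : ∀ s ∈ uIcc 0 t, ∀ r, N ≤ r → (s, r) ∈ UU := fun s hs' r hr => mem_UU hR.le (hs s hs' r hr)
  have hct : ContinuousOn (fun q : ℝ × ℝ => |dtu u q.1 q.2| * q.2) (uIcc 0 t ×ˢ Icc N N') := by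
    have : ContinuousOn (fun q : ℝ × ℝ => dtu u q.1 q.2) (uIcc 0 t ×ˢ Icc N N') :=
      h.dtu.cont.mono (by rintro ⟨s, r⟩ ⟨a, b⟩; exact hsU s a r b.1)
    exact this.abs.mul (by fun_prop)
  have hint : IntegrableOn (fun q : ℝ × ℝ => |dtu u q.1 q.2| * q.2) (uIoc 0 t ×ˢ Icc N N') :=
    (hct.integrableOn_compact (isCompact_uIcc.prod isCompact_Icc)).mono_set (prod_mono uIoc_subset_uIcc subset_rfl)
  rw [Measure.volume_eq_prod, IntegrableOn, ← Measure.prod_restrict] at hint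
  have step1 : ∫ r in Icc N N', |u t r - u 0 r| * r ≤ ∫ r in Icc N N', ∫ s in uIoc 0 t, |dtu u s r| * r := by
    apply setIntegral_mono_on
    · apply ContinuousOn.integrableOn_Icc
      have a1 : ContinuousOn (u t) (Icc N N') := (h.slice hR.le).mono (fun r hr => hs t right_mem_uIcc r hr.1)
      have a2 : ContinuousOn (u 0) (Icc N N') := (h.slice hR.le).mono (fun r hr => hs 0 left_mem_uIcc r hr.1)
      fun_prop
    · exact hint.integral_prod_right
    · exact measurableSet_Icc
    · intro r hr
      have hr0 : 0 < r := lt_of_lt_of_le hN0 hr.1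
      rw [integral_mul_const]
      gcongr
      have e : ∫ s in (0:ℝ)..t, dtu u s r = u t r - u 0 r := by
        apply intervalIntegral.integral_eq_sub_of_hasDerivAt (f := fun s => u s r)
        · intro s hs'; exact h.dt (hsU s hs' r hr.1)
        · apply ContinuousOn.intervalIntegrable
          exact h.dtu.cont.comp (f := fun s => (s, r)) (by fun_prop) (fun s hs' => hsU s hs' r hr.1)
      rw [← e]
      exact intervalIntegral.norm_integral_le_integral_norm_uIoc (f := fun s => dtu u s r) (a := 0) (b := t) (μ := volume)
  refine step1.trans ?_
  rw [integral_integral_swap (f := fun r s => |dtu u s r| * r) hint.swap]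
  have hlog : ∫ r in Icc N N', r⁻¹ = Real.log (N'/N) := by
    rw [integral_Icc_eq_integral_Ioc, ← intervalIntegral.integral_of_le hNN, integral_inv_of_pos hN0 (by linarith)]
  have iinv : IntegrableOn (fun r : ℝ => r⁻¹) (Icc N N') := by
    apply ContinuousOn.integrableOn_Icc
    exact ContinuousOn.inv₀ (by fun_prop) (fun r hr => (lt_of_lt_of_le hN0 hr.1).ne')
  have step2 : ∀ s ∈ uIoc 0 t, ∫ r in Icc N N', |dtu u s r| * r ≤ δ * M + Real.log (N'/N) / (4*δ) := by
    intro s hs'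
    have hs'' := uIoc_subset_uIcc hs'
    obtain ⟨i1, i2⟩ := En_Icc (N' := N') h hR.le hM (hs s hs'' N le_rfl)
    calc ∫ r in Icc N N', |dtu u s r| * r ≤ ∫ r in Icc N N', (δ * En u s r + (1/(4*δ)) * r⁻¹) := by
          apply setIntegral_mono_on
          · apply ContinuousOn.integrableOn_Icc
            exact hct.comp (f := fun r => (s, r)) (by fun_prop) (fun r hr => ⟨hs'', hr⟩)
          · exact (i1.const_mul _).add (iinv.const_mul _)
          · exact measurableSet_Icc
          · intro r hr
            have hr0 : 0 < r := lt_of_lt_of_le hN0 hr.1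
            have e1 : δ * (dtu u s r ^2 * r^3) ≤ δ * En u s r := by
              unfold En; gcongr; nlinarith [sq_nonneg (dru u s r)]
            refine le_trans ?_ (add_le_add_left e1 _)
            have e2 : δ * (dtu u s r ^2 * r^3) + (1/(4*δ)) * r⁻¹ - |dtu u s r| * r
              = (1/(4*δ*r)) * (2*δ*|dtu u s r| * r^2 - 1)^2 := by
              rw [← sq_abs (dtu u s r)]; field_simp; ring
            have : 0 ≤ (1/(4*δ*r)) * (2*δ*|dtu u s r| * r^2 - 1)^2 := by positivity
            linarith
      _ = δ * (∫ r in Icc N N', En u s r) + (1/(4*δ)) * ∫ r in Icc N N', r⁻¹ := by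
          rw [integral_add (i1.const_mul _) (iinv.const_mul _), integral_const_mul, integral_const_mul]
      _ ≤ δ * M + (1/(4*δ)) * Real.log (N'/N) := by rw [hlog]; gcongr
      _ = _ := by ring
  calc _ ≤ ∫ s in uIoc 0 t, (δ * M + Real.log (N'/N) / (4*δ)) := by
        apply setIntegral_mono_on
        · exact hint.integral_prod_left
        · exact integrableOn_const (by simp [uIoc])
        · exact measurableSet_uIoc
        · exact step2
    _ = _ := by
        rw [setIntegral_const, smul_eq_mul]
        congr 1
        simp [uIoc, Measure.real]
        rw [max_sub_min_eq_abs, sub_zero]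
end WR

open MeasureTheory Filter Set
open scoped ENNReal

namespace WR

lemma u0_small {p : ℕ} {u : ℝ → ℝ → ℝ} (hcrit : (∫⁻ r in Ioi (0:ℝ),
        ENNReal.ofReal (|u 0 r| ^ (2 * (p - 1)) * r ^ 3)) < ⊤) {ε : ℝ} (hε : 0 < ε) (N : ℝ) :
    ∃ r, N ≤ r ∧ |u 0 r| < ε := by
  by_contra hcon
  push Not at hcon
  have h1 : ∫⁻ r in Ioi (max N 1), ENNReal.ofReal (ε^(2*(p-1))) ≤ ∫⁻ r in Ioi (0:ℝ),
        ENNReal.ofReal (|u 0 r| ^ (2 * (p - 1)) * r ^ 3) := by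
    refine le_trans (setLIntegral_mono_ae' measurableSet_Ioi (g := fun r => ENNReal.ofReal (|u 0 r| ^ (2 * (p - 1)) * r ^ 3)) ?_)
      (lintegral_mono_set (fun r hr => ?_))
    · refine Eventually.of_forall fun r hr => ENNReal.ofReal_le_ofReal ?_
      have hr' : max N 1 < r := hr
      have a1 : N ≤ r := (le_max_left _ _).trans hr'.le
      have a2 : 1 ≤ r := (le_max_right _ _).trans hr'.le
      calc ε^(2*(p-1)) ≤ |u 0 r|^(2*(p-1)) := by gcongr; exact hcon r a1
        _ = |u 0 r|^(2*(p-1)) * 1 := (mul_one _).symm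
        _ ≤ _ := by gcongr; exact one_le_pow₀ a2
    · have hr' : max N 1 < r := hr
      have a2 : 1 ≤ r := (le_max_right _ _).trans hr'.le
      exact lt_of_lt_of_le one_pos a2
  rw [setLIntegral_const, Real.volume_Ioi, ENNReal.mul_top] at h1
  · exact absurd (h1.trans_lt hcrit) (by simp)
  · simpa using by positivity

lemma u_decay_aux {u : ℝ → ℝ → ℝ} (h : Sm u) {R M t r : ℝ} (hR : 0 < R) (hM : HM u R M) (hr : R + |t| < r)
    (hsm : ∀ ε > 0, ∀ N : ℝ, ∃ r, N ≤ r ∧ |u t r| < ε) : |u t r| ≤ (M+1)/r := by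
  apply le_of_forall_pos_le_add
  intro ε hε
  obtain ⟨r', h1, h2⟩ := hsm ε hε r
  have h3 := u_diff h hR hM hr h1
  have := abs_sub_abs_le_abs_sub (u t r) (u t r')
  rw [abs_sub_comm] at this
  linarith

lemma u_decay {p : ℕ} {u : ℝ → ℝ → ℝ} (h : Sm u) {R M t r : ℝ} (hR : 0 < R) (hM : HM u R M) (hr : R + |t| < r)
    (hcrit : (∫⁻ r in Ioi (0:ℝ),
        ENNReal.ofReal (|u 0 r| ^ (2 * (p - 1)) * r ^ 3)) < ⊤) : |u t r| ≤ (M+1)/r := by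
  apply u_decay_aux h hR hM hr
  intro ε hε N
  by_contra hcon
  push Not at hcon
  have hM0 := hM.1
  obtain ⟨N1, hN1⟩ : ∃ N1 : ℝ, N ≤ N1 ∧ R + |t| < N1 ∧ 2*(M+1)/ε ≤ N1 ∧ 1 ≤ N1 ∧ 2*(|t| * (M+1))/ε < N1 := by
    refine ((eventually_ge_atTop N).and ((eventually_gt_atTop _).and ((eventually_ge_atTop _).and
      ((eventually_ge_atTop _).and (eventually_gt_atTop _))))).exists
  obtain ⟨b1, b2, b3, b4, b5⟩ := hN1
  have hL := L_est h hR hM b2 (show N1 ≤ 2*N1 by linarith) one_pos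
  have hlog : Real.log (2*N1/N1) ≤ 4 := by
    rw [mul_div_assoc, div_self (by linarith), mul_one]
    have := Real.log_le_sub_one_of_pos (show (0:ℝ) < 2 by norm_num); linarith
  have hlow : ε/2*N1*N1 ≤ ∫ r in Icc N1 (2*N1), |u t r - u 0 r| * r := by
    have e : ∫ r in Icc N1 (2*N1), ε/2*N1 = ε/2*N1*N1 := by
      rw [setIntegral_const, smul_eq_mul, Real.volume_real_Icc_of_le (by linarith)]; ring
    rw [← e]
    apply setIntegral_mono_on
    · exact integrableOn_const (by simp)
    · apply ContinuousOn.integrableOn_Icc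
      have a1 : ContinuousOn (u t) (Icc N1 (2*N1)) := (h.slice hR.le).mono (fun r hr => lt_of_lt_of_le b2 hr.1)
      have a2 : ContinuousOn (u 0) (Icc N1 (2*N1)) := (h.slice hR.le).mono (fun r hr => by
        have := hr.1
        simp only [abs_zero, add_zero, mem_Ioi]; linarith [abs_nonneg t])
      fun_prop
    · exact measurableSet_Icc
    · intro s hs
      have hs0 : 0 < s := by linarith [hs.1]
      have c1 := hcon s (b1.trans hs.1)
      have c2 := u_decay_aux (t := 0) (r := s) h hR hM (by simp; linarith [hs.1, abs_nonneg t]) (fun ε hε N => u0_small hcrit hε N)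
      have c3 : (M+1)/s ≤ ε/2 := by
        rw [div_le_iff₀ hs0]
        rw [div_le_iff₀ hε] at b3
        nlinarith [hs.1]
      have c4 := abs_sub_abs_le_abs_sub (u t s) (u 0 s)
      have c5 : ε/2 ≤ |u t s - u 0 s| := by linarith
      have := hs.1
      gcongr
  have h5 : |t| * (1 * M + Real.log (2*N1/N1)/(4*1)) ≤ |t| * (M+1) := by gcongr <;> linarith
  rw [div_lt_iff₀ hε] at b5
  have h6 : ε/2*N1*1 ≤ ε/2*N1*N1 := by gcongr
  linarith

lemma lint_affine (k : ℝ → ℝ≥0∞) (hk : Measurable k) (c : ℝ) : ∫⁻ x, k x = 2 * ∫⁻ s, k (c - 2*s) := by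
  have h1 : ∫⁻ s, k (c - 2*s) = ENNReal.ofReal |(2:ℝ)⁻¹| * ∫⁻ x, k (c - x) := by
    have := lintegral_map (μ := volume) (f := fun x => k (c - x)) (g := fun s : ℝ => 2*s) (by fun_prop) (by fun_prop)
    rw [Real.map_volume_mul_left (by norm_num)] at this
    rw [← this, lintegral_smul_measure]; rfl
  rw [h1, lintegral_sub_left_eq_self, ← mul_assoc]
  have : (2:ℝ≥0∞) * ENNReal.ofReal |(2:ℝ)⁻¹| = 1 := by
    rw [abs_of_pos (by norm_num), ENNReal.ofReal_inv_of_pos (by norm_num)]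
    simp only [ENNReal.ofReal_ofNat]
    exact ENNReal.mul_inv_cancel (by simp) (by simp)
  rw [this, one_mul]

noncomputable def JJ (f : ℝ × ℝ → ℝ≥0∞) (Λ : ℝ) : ℝ≥0∞ := ∫⁻ ξ, f ((Λ-ξ)/2, (ξ+Λ)/2)

lemma JJ_meas {f : ℝ × ℝ → ℝ≥0∞} (hf : Measurable f) : Measurable (JJ f) := by
  unfold JJ
  exact Measurable.lintegral_prod_right' (f := fun q : ℝ × ℝ => f ((q.1-q.2)/2, (q.2+q.1)/2)) (by fun_prop)

lemma avg {f : ℝ × ℝ → ℝ≥0∞} (hf : Measurable f) {ρ0 M : ℝ} (hρ0 : 0 ≤ ρ0) (hM : 0 ≤ M)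
    (hsup : ∀ s r, ¬ (0 ≤ s ∧ ρ0 + s ≤ r) → f (s, r) = 0)
    (hb : ∀ s, ∫⁻ r, f (s, r) ≤ ENNReal.ofReal M)
    (ht : Tendsto (fun s => ∫⁻ r, f (s, r)) atTop (nhds 0)) {δ : ℝ} (hδ : 0 < δ) :
    ∃ N0 : ℝ, ∀ N, N0 ≤ N → ∫⁻ Λ in Icc N (2*N), JJ f Λ ≤ ENNReal.ofReal (δ * N) := by
  have hev := ht.eventually (Iic_mem_nhds (show 0 < ENNReal.ofReal (δ/4) from ENNReal.ofReal_pos.2 (by positivity)))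
  obtain ⟨S0', hS0'⟩ := eventually_atTop.1 hev
  obtain ⟨S0, hS0, hS0p⟩ : ∃ S0 : ℝ, (∀ b ≥ S0, ∫⁻ r, f (b, r) ≤ ENNReal.ofReal (δ/4)) ∧ 0 ≤ S0 :=
    ⟨max S0' 0, fun b hb => hS0' b ((le_max_left _ _).trans hb), le_max_right _ _⟩
  refine ⟨max 1 (max S0 (4*M * |S0| / δ)), fun N hN => ?_⟩
  have hN1 : 1 ≤ N := (le_max_left _ _).trans hN
  have hN2 : S0 ≤ N := ((le_max_left _ _).trans (le_max_right _ _)).trans hN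
  have hN3 : 4*M * |S0| / δ ≤ N := ((le_max_right _ _).trans (le_max_right _ _)).trans hN
  rw [div_le_iff₀ hδ] at hN3
  have step1 : ∫⁻ Λ in Icc N (2*N), JJ f Λ = ∫⁻ Λ in Icc N (2*N), 2 * ∫⁻ s in Icc 0 N, f (s, Λ - s) := by
    apply setLIntegral_congr_fun measurableSet_Icc
    intro Λ hΛ
    simp only [JJ]
    rw [lint_affine _ (by fun_prop) Λ]
    congr 1
    rw [← lintegral_indicator measurableSet_Icc]
    congr 1; ext s
    have e1 : (Λ - (Λ - 2*s))/2 = s := by ring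
    have e2 : ((Λ - 2*s) + Λ)/2 = Λ - s := by ring
    rw [e1, e2]
    by_cases hs : s ∈ Icc 0 N
    · rw [indicator_of_mem hs]
    · rw [indicator_of_notMem hs]
      apply hsup
      rintro ⟨a, b⟩
      exact hs ⟨a, by linarith [hΛ.2]⟩
  rw [step1, lintegral_const_mul' _ _ (by simp), lintegral_lintegral_swap]
  · have step2 : ∀ s, ∫⁻ Λ in Icc N (2*N), f (s, Λ - s) ≤ ∫⁻ r, f (s, r) := by
      intro s
      refine (setLIntegral_le_lintegral _ _).trans (le_of_eq ?_)
      exact lintegral_sub_right_eq_self (fun r => f (s, r)) s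
    have step3 : ∫⁻ s in Icc 0 N, ∫⁻ Λ in Icc N (2*N), f (s, Λ - s) ≤
        ENNReal.ofReal (M * |S0|) + ENNReal.ofReal (δ/4*N) := by
      calc _ ≤ ∫⁻ s in (Icc 0 |S0| ∪ Icc S0 (S0 + N)), ∫⁻ Λ in Icc N (2*N), f (s, Λ - s) := by
            apply lintegral_mono_set
            intro s hs
            rcases le_total s |S0| with h | h
            · left; exact ⟨hs.1, h⟩
            · right
              have := le_abs_self S0
              exact ⟨by linarith, by linarith [hs.2]⟩
        _ ≤ _ := lintegral_union_le _ _ _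
        _ ≤ (∫⁻ s in Icc 0 |S0|, ENNReal.ofReal M) + ∫⁻ s in Icc S0 (S0+N), ENNReal.ofReal (δ/4) := by
            refine add_le_add (lintegral_mono fun s => (step2 s).trans (hb s)) ?_
            exact setLIntegral_mono' measurableSet_Icc (fun s hs => (step2 s).trans (hS0 s hs.1))
        _ = _ := by
            rw [setLIntegral_const, setLIntegral_const, Real.volume_Icc, Real.volume_Icc,
              ← ENNReal.ofReal_mul hM, ← ENNReal.ofReal_mul (by positivity)]
            simp
    refine (mul_le_mul_right step3 2).trans ?_
    rw [← ENNReal.ofReal_add (by positivity) (by positivity), show (2:ℝ≥0∞) = ENNReal.ofReal 2 by simp,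
      ← ENNReal.ofReal_mul (by norm_num)]
    apply ENNReal.ofReal_le_ofReal
    nlinarith
  · exact (hf.comp (by fun_prop : Measurable fun q : ℝ × ℝ => (q.2, q.1 - q.2))).aemeasurable

end WR

open MeasureTheory Filter Set
open scoped ENNReal

namespace WR

noncomputable def fs (u : ℝ → ℝ → ℝ) (t0 ρ0 σ : ℝ) : ℝ × ℝ → ℝ≥0∞ :=
  indicator {q : ℝ × ℝ | 0 ≤ q.1 ∧ ρ0 + q.1 ≤ q.2} (fun q => ENNReal.ofReal (En u (t0 + σ*q.1) q.2))

lemma closedS (ρ0 : ℝ) : IsClosed {q : ℝ × ℝ | 0 ≤ q.1 ∧ ρ0 + q.1 ≤ q.2} :=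
  (isClosed_le (f := fun _ : ℝ × ℝ => (0:ℝ)) (g := fun q : ℝ × ℝ => q.1) (by fun_prop) (by fun_prop)).inter
    (isClosed_le (f := fun q : ℝ × ℝ => ρ0 + q.1) (g := fun q : ℝ × ℝ => q.2) (by fun_prop) (by fun_prop))

lemma sig_abs {t0 σ s : ℝ} (hσ : |σ| = 1) (hs : 0 ≤ s) : |t0 + σ*s| ≤ |t0| + s := by
  refine (abs_add_le _ _).trans ?_
  rw [abs_mul, hσ, one_mul, abs_of_nonneg hs]

lemma fs_meas {u : ℝ → ℝ → ℝ} (h : Sm u) {t0 ρ0 σ : ℝ} (hσ : |σ| = 1) (hρ : |t0| < ρ0) : Measurable (fs u t0 ρ0 σ) := by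
  unfold fs
  rw [← piecewise_eq_indicator]
  refine ContinuousOn.measurable_piecewise ?_ continuousOn_const (closedS ρ0).measurableSet
  apply ENNReal.continuous_ofReal.comp_continuousOn
  refine h.En.cont.comp (f := fun q : ℝ × ℝ => (t0 + σ*q.1, q.2)) (by fun_prop) ?_
  rintro ⟨s, r⟩ ⟨a, b⟩
  apply mem_UU le_rfl
  have := sig_abs (t0 := t0) hσ a
  simp only at *; linarith

lemma goodL_one {u : ℝ → ℝ → ℝ} (h : Sm u) {t0 ρ0 R M σ : ℝ} (hσ : σ = 1 ∨ σ = -1) (hρ : |t0| < ρ0)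
    (hR : R = (ρ0 - |t0|)/2) (hM : HM u R M) (hv : ExtEnergyVanishes R u) {δ : ℝ} (hδ : 0 < δ) :
    ∃ N0 : ℝ, ∀ N, N0 ≤ N → ∫⁻ Λ in Icc N (2*N), JJ (fs u t0 ρ0 σ) Λ ≤ ENNReal.ofReal (δ * N) := by
  have hσ1 : |σ| = 1 := by rcases hσ with rfl | rfl <;> simp
  have hle : ∀ s, ∫⁻ r, fs u t0 ρ0 σ (s, r) ≤ ∫⁻ r in Ioi (R+|t0+σ*s|), ENNReal.ofReal (En u (t0+σ*s) r) := by
    intro s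
    rw [← lintegral_indicator measurableSet_Ioi]
    apply lintegral_mono
    intro r
    by_cases hs : (s, r) ∈ {q : ℝ × ℝ | 0 ≤ q.1 ∧ ρ0 + q.1 ≤ q.2}
    · have h2 : r ∈ Ioi (R+|t0+σ*s|) := by
        obtain ⟨a, b⟩ := hs
        have := sig_abs (t0 := t0) hσ1 a
        simp only [mem_Ioi] at *; linarith
      simp only [fs]
      rw [indicator_of_mem hs, indicator_of_mem h2]
    · simp only [fs]
      rw [indicator_of_notMem hs]; simp
  refine avg (fs_meas h hσ1 hρ) (le_trans (abs_nonneg _) hρ.le) hM.1 ?_ (fun s => (hle s).trans (hM.2 _)) ?_ hδ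
  · intro s r hsr
    unfold fs
    exact indicator_of_notMem (s := {q : ℝ × ℝ | 0 ≤ q.1 ∧ ρ0 + q.1 ≤ q.2}) hsr _
  · have hR0 : 0 ≤ R := by rw [hR]; linarith
    obtain ⟨e1, e2⟩ := En_tendsto h hR0 hM hv
    refine tendsto_of_tendsto_of_tendsto_of_le_of_le tendsto_const_nhds ?_ (fun s => zero_le) hle
    rcases hσ with rfl | rfl
    · exact e1.comp (by simpa using tendsto_atTop_add_const_left _ t0 tendsto_id)
    · refine e2.comp ?_
      have : Tendsto (fun s : ℝ => t0 + -s) atTop atBot := tendsto_atBot_add_const_left _ t0 tendsto_neg_atTop_atBot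
      simpa using this

lemma JJ_real {u : ℝ → ℝ → ℝ} (h : Sm u) {t0 ρ0 σ Λ δ : ℝ} (hδ : 0 ≤ δ) (hσ : |σ| = 1) (hρ : |t0| < ρ0)
    (hJ : JJ (fs u t0 ρ0 σ) Λ ≤ ENNReal.ofReal δ) :
    ∫ ξ in Icc ρ0 Λ, En u (t0 + σ*((Λ-ξ)/2)) ((ξ+Λ)/2) ≤ δ := by
  have hmem : ∀ ξ ∈ Icc ρ0 Λ, (t0 + σ*((Λ-ξ)/2), (ξ+Λ)/2) ∈ UU := by
    intro ξ hξ
    apply mem_UU le_rfl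
    have := sig_abs (t0 := t0) hσ (show 0 ≤ (Λ-ξ)/2 by linarith [hξ.2])
    linarith [hξ.1]
  have hc : ContinuousOn (fun ξ => En u (t0 + σ*((Λ-ξ)/2)) ((ξ+Λ)/2)) (Icc ρ0 Λ) :=
    h.En.cont.comp (f := fun ξ => (t0 + σ*((Λ-ξ)/2), (ξ+Λ)/2)) (by fun_prop) hmem
  have hnn : 0 ≤ᵐ[volume.restrict (Icc ρ0 Λ)] fun ξ => En u (t0 + σ*((Λ-ξ)/2)) ((ξ+Λ)/2) := by
    filter_upwards [ae_restrict_mem measurableSet_Icc] with ξ hξ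
    exact En_nonneg (by linarith [hξ.1, hξ.2, abs_nonneg t0])
  have := ofReal_integral_eq_lintegral_ofReal (hc.integrableOn_Icc (μ := volume)) hnn
  rw [← ENNReal.ofReal_le_ofReal_iff hδ, this]
  refine le_trans ?_ hJ
  rw [← lintegral_indicator measurableSet_Icc]
  apply lintegral_mono
  intro ξ
  by_cases hξ : ξ ∈ Icc ρ0 Λ
  · have : ((Λ-ξ)/2, (ξ+Λ)/2) ∈ {q : ℝ × ℝ | 0 ≤ q.1 ∧ ρ0 + q.1 ≤ q.2} :=
      ⟨by simp only; linarith [hξ.2], by simp only; linarith [hξ.1]⟩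
    simp only [fs]
    rw [indicator_of_mem hξ, indicator_of_mem this]
  · rw [indicator_of_notMem hξ]; simp

lemma goodL {u : ℝ → ℝ → ℝ} (h : Sm u) {t0 ρ0 R M : ℝ} (hρ : |t0| < ρ0)
    (hR : R = (ρ0 - |t0|)/2) (hM : HM u R M) (hv : ExtEnergyVanishes R u) {δ : ℝ} (hδ : 0 < δ) (N1 : ℝ) :
    ∃ Λ, N1 ≤ Λ ∧ ∫ ξ in Icc ρ0 Λ, En u (tt t0 ξ Λ) (rr ξ Λ) ≤ δ ∧
      ∫ ξ in Icc ρ0 Λ, En u (tt t0 Λ ξ) (rr ξ Λ) ≤ δ := by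
  obtain ⟨Na, ha⟩ := goodL_one h (Or.inl rfl) hρ hR hM hv (show 0 < δ/4 by positivity)
  obtain ⟨Nb, hb⟩ := goodL_one h (Or.inr rfl) hρ hR hM hv (show 0 < δ/4 by positivity)
  obtain ⟨N, n1, n2, n3, n4⟩ : ∃ N : ℝ, N1 ≤ N ∧ Na ≤ N ∧ Nb ≤ N ∧ 0 < N :=
    ((eventually_ge_atTop N1).and ((eventually_ge_atTop _).and ((eventually_ge_atTop _).and
      (eventually_gt_atTop _)))).exists
  obtain ⟨Λ, hΛ, h1⟩ : ∃ Λ ∈ Icc N (2*N), JJ (fs u t0 ρ0 1) Λ + JJ (fs u t0 ρ0 (-1)) Λ ≤ ENNReal.ofReal δ := by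
    by_contra hcon
    push Not at hcon
    have e1 : ∫⁻ Λ in Icc N (2*N), ENNReal.ofReal δ ≤ ∫⁻ Λ in Icc N (2*N), (JJ (fs u t0 ρ0 1) Λ + JJ (fs u t0 ρ0 (-1)) Λ) :=
      setLIntegral_mono' measurableSet_Icc (fun Λ hΛ => (hcon Λ hΛ).le)
    rw [lintegral_add_left (JJ_meas (fs_meas h (by simp) hρ)), setLIntegral_const, Real.volume_Icc,
      ← ENNReal.ofReal_mul hδ.le] at e1
    have e2 := e1.trans (add_le_add (ha N n2) (hb N n3))
    rw [← ENNReal.ofReal_add (by positivity) (by positivity), ENNReal.ofReal_le_ofReal_iff (by positivity)] at e2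
    nlinarith
  refine ⟨Λ, n1.trans hΛ.1, ?_, ?_⟩
  · have := JJ_real h hδ.le (by simp) hρ ((le_add_right le_rfl).trans h1)
    simpa [tt, rr] using this
  · have := JJ_real h hδ.le (by simp) hρ ((le_add_left le_rfl).trans h1)
    have e : ∀ ξ, tt t0 Λ ξ = t0 + -1*((Λ-ξ)/2) := fun ξ => by unfold tt; ring
    simp only [e, rr]
    exact this
end WR

open MeasureTheory Filter Set
open scoped ENNReal

namespace WR

lemma geom {t0 ρ R ξ η : ℝ} (hρ : |t0| < ρ) (hR : R = (ρ - |t0|)/2) (hξ : ρ ≤ ξ) (hη : ρ ≤ η) :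
    R + |tt t0 ξ η| < rr ξ η := by
  have : |tt t0 ξ η| < rr ξ η - R := by
    have h1 := le_abs_self t0
    have h2 := neg_abs_le t0
    unfold tt rr
    rw [abs_lt]; constructor <;> linarith
  linarith

noncomputable def GG (p : ℕ) (u : ℝ → ℝ → ℝ) (t0 ρ : ℝ) (q : ℝ × ℝ) : ℝ :=
  (q.1+q.2) * m ρ q.1 q.2 * FF p u (tt t0 q.1 q.2) (rr q.1 q.2)

noncomputable def II (p : ℕ) (u : ℝ → ℝ → ℝ) (t0 ρ : ℝ) : ℝ := ∫ q in Ici ρ ×ˢ Ici ρ, GG p u t0 ρ q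

lemma rr_pow {ξ η : ℝ} (hξ : 0 < ξ) (hη : 0 < η) :
    1/(rr ξ η)^3 ≤ ξ^(-(3/2):ℝ) * η^(-(3/2):ℝ) := by
  have hr : 0 < rr ξ η := by unfold rr; positivity
  have h1 : ξ*η ≤ (rr ξ η)^2 := by unfold rr; nlinarith [sq_nonneg (ξ-η)]
  rw [← Real.mul_rpow hξ.le hη.le]
  refine le_trans (le_of_eq ?_) (Real.rpow_le_rpow_of_nonpos (by positivity) h1 (by norm_num))
  rw [← Real.rpow_natCast (rr ξ η) 2, ← Real.rpow_mul hr.le, one_div, ← Real.rpow_natCast, ← Real.rpow_neg hr.le]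
  norm_num

lemma GG_bd {p : ℕ} (hp : 5 ≤ p) {u : ℝ → ℝ → ℝ} {t0 ρ0 ρ A : ℝ} (h0 : 0 < ρ0) (hρ : ρ0 ≤ ρ)
    (hA : ∀ ξ η, ρ0 ≤ ξ → ρ0 ≤ η → |u (tt t0 ξ η) (rr ξ η)| ≤ A / rr ξ η) {q : ℝ × ℝ}
    (h1 : ρ ≤ q.1) (h2 : ρ ≤ q.2) :
    |GG p u t0 ρ q| ≤ (4*cc*A^5*(A/ρ0)^(p-5)) * (q.1^(-(3/2):ℝ) * q.2^(-(3/2):ℝ)) := by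
  obtain ⟨ξ, η⟩ := q
  simp only at h1 h2 ⊢
  have hξ : 0 < ξ := by linarith
  have hη : 0 < η := by linarith
  have hr : 0 < rr ξ η := by unfold rr; positivity
  have hr0 : ρ0 ≤ rr ξ η := by unfold rr; linarith
  have hu := hA ξ η (by linarith) (by linarith)
  have hA0 : 0 ≤ A := by
    by_contra hc
    have : A / rr ξ η < 0 := div_neg_of_neg_of_pos (by linarith) hr
    linarith [abs_nonneg (u (tt t0 ξ η) (rr ξ η))]
  have e1 : |FF p u (tt t0 ξ η) (rr ξ η)| = |u (tt t0 ξ η) (rr ξ η)|^5 * |u (tt t0 ξ η) (rr ξ η)|^(p-5) := by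
    unfold FF
    rw [abs_mul, abs_pow, abs_abs, ← pow_succ, ← pow_add]; congr 1; omega
  have e2 : |FF p u (tt t0 ξ η) (rr ξ η)| ≤ (A / rr ξ η)^5 * (A/ρ0)^(p-5) := by
    rw [e1]
    have : A / rr ξ η ≤ A/ρ0 := by gcongr
    gcongr
    exact hu.trans this
  have hm0 := m_nonneg (by linarith : 0 < ρ) h1 h2
  have hm := m_le (by linarith : 0 < ρ) h1 h2
  have hcc := cc_nonneg
  unfold GG
  simp only
  rw [abs_mul, abs_mul, abs_of_nonneg hm0, abs_of_pos (by linarith : 0 < ξ+η)]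
  calc (ξ+η) * m ρ ξ η * |FF p u (tt t0 ξ η) (rr ξ η)|
      ≤ (ξ+η) * (cc*(ξ+η)) * ((A / rr ξ η)^5 * (A/ρ0)^(p-5)) := by gcongr
    _ = (4*cc*A^5*(A/ρ0)^(p-5)) * (1/(rr ξ η)^3) := by
        have : ξ + η = 2 * rr ξ η := by unfold rr; ring
        rw [this]; field_simp; ring
    _ ≤ _ := by
        have := rr_pow hξ hη
        gcongr

lemma pw_int {ρ : ℝ} (h : 0 < ρ) : IntegrableOn (fun x : ℝ => x^(-(3/2):ℝ)) (Ici ρ) := by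
  rw [integrableOn_Ici_iff_integrableOn_Ioi]
  exact integrableOn_Ioi_rpow_of_lt (by norm_num) h

lemma pw2_int {ρ : ℝ} (h : 0 < ρ) : IntegrableOn (fun q : ℝ × ℝ => q.1^(-(3/2):ℝ) * q.2^(-(3/2):ℝ)) (Ici ρ ×ˢ Ici ρ) := by
  unfold IntegrableOn
  rw [Measure.volume_eq_prod, ← Measure.prod_restrict]
  exact (pw_int h).mul_prod (pw_int h)

lemma GG_cont {p : ℕ} {u : ℝ → ℝ → ℝ} (h : Sm u) {t0 ρ : ℝ} (hρ : |t0| < ρ) :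
    ContinuousOn (GG p u t0 ρ) (Ici ρ ×ˢ Ici ρ) := by
  have hp : 0 < ρ := lt_of_le_of_lt (abs_nonneg _) hρ
  have hu := h.cont_tr (t0 := t0) (s := Ici ρ ×ˢ Ici ρ) (fun q hq => ⟨lt_of_lt_of_le hρ hq.1, lt_of_lt_of_le hρ hq.2⟩)
  have hm : ContinuousOn (fun q : ℝ × ℝ => m ρ q.1 q.2) (Ici ρ ×ˢ Ici ρ) :=
    (m_cont hp).mono (fun q hq => ⟨lt_of_lt_of_le hp hq.1, lt_of_lt_of_le hp hq.2⟩)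
  unfold GG FF
  exact ((by fun_prop : ContinuousOn (fun q : ℝ × ℝ => q.1+q.2) _).mul hm).mul ((hu.abs.pow _).mul hu)

lemma GG_int {p : ℕ} (hp : 5 ≤ p) {u : ℝ → ℝ → ℝ} (h : Sm u) {t0 ρ0 ρ A : ℝ} (h0 : |t0| < ρ0) (hρ : ρ0 ≤ ρ)
    (hA : ∀ ξ η, ρ0 ≤ ξ → ρ0 ≤ η → |u (tt t0 ξ η) (rr ξ η)| ≤ A / rr ξ η) :
    IntegrableOn (GG p u t0 ρ) (Ici ρ ×ˢ Ici ρ) := by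
  have h00 : 0 < ρ0 := lt_of_le_of_lt (abs_nonneg _) h0
  refine Integrable.mono' ((pw2_int (by linarith : 0 < ρ)).const_mul (4*cc*A^5*(A/ρ0)^(p-5))) ?_ ?_
  · exact (GG_cont h (by linarith)).aestronglyMeasurable (measurableSet_Ici.prod measurableSet_Ici)
  · filter_upwards [ae_restrict_mem (measurableSet_Ici.prod measurableSet_Ici)] with q hq
    exact GG_bd hp h00 hρ hA hq.1 hq.2

lemma II_tendsto {p : ℕ} (hp : 5 ≤ p) {u : ℝ → ℝ → ℝ} (h : Sm u) {t0 ρ0 ρ A : ℝ} (h0 : |t0| < ρ0) (hρ : ρ0 ≤ ρ)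
    (hA : ∀ ξ η, ρ0 ≤ ξ → ρ0 ≤ η → |u (tt t0 ξ η) (rr ξ η)| ≤ A / rr ξ η) :
    Tendsto (fun Λ : ℝ => ∫ q in (Icc ρ Λ ×ˢ Icc ρ Λ), GG p u t0 ρ q) atTop (nhds (II p u t0 ρ)) := by
  have e : (⋃ Λ : ℝ, Icc ρ Λ ×ˢ Icc ρ Λ) = Ici ρ ×ˢ Ici ρ := by
    ext q
    simp only [mem_iUnion, mem_prod, mem_Icc, mem_Ici]
    constructor
    · rintro ⟨Λ, h⟩; exact ⟨h.1.1, h.2.1⟩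
    · rintro ⟨a, b⟩; exact ⟨max q.1 q.2, ⟨a, le_max_left _ _⟩, b, le_max_right _ _⟩
  unfold II
  rw [← e]
  apply tendsto_setIntegral_of_monotone
  · intro Λ; exact measurableSet_Icc.prod measurableSet_Icc
  · intro a b hab; exact prod_mono (Icc_subset_Icc_right hab) (Icc_subset_Icc_right hab)
  · rw [e]; exact GG_int hp h h0 hρ hA

lemma pw_val {ρ : ℝ} (h : 0 < ρ) : ∫ x in Ici ρ, x^(-(3/2):ℝ) = 2*ρ^(-(1/2):ℝ) := by
  rw [integral_Ici_eq_integral_Ioi, integral_Ioi_rpow_of_lt (by norm_num) h]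
  norm_num; ring

lemma II_bd {p : ℕ} (hp : 5 ≤ p) {u : ℝ → ℝ → ℝ} {t0 ρ0 ρ A : ℝ} (h0 : |t0| < ρ0) (hρ : ρ0 ≤ ρ)
    (hA : ∀ ξ η, ρ0 ≤ ξ → ρ0 ≤ η → |u (tt t0 ξ η) (rr ξ η)| ≤ A / rr ξ η) :
    |II p u t0 ρ| ≤ (4*cc*A^5*(A/ρ0)^(p-5)) * (4/ρ) := by
  have h00 : 0 < ρ0 := lt_of_le_of_lt (abs_nonneg _) h0
  have hρ0 : 0 < ρ := by linarith
  have h1 : ‖∫ q in Ici ρ ×ˢ Ici ρ, GG p u t0 ρ q‖ ≤ ∫ q in Ici ρ ×ˢ Ici ρ, (4*cc*A^5*(A/ρ0)^(p-5)) * (q.1^(-(3/2):ℝ) * q.2^(-(3/2):ℝ)) := by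
    apply norm_integral_le_of_norm_le ((pw2_int hρ0).const_mul _)
    filter_upwards [ae_restrict_mem (measurableSet_Ici.prod measurableSet_Ici)] with q hq
    exact GG_bd hp h00 hρ hA hq.1 hq.2
  change |II p u t0 ρ| ≤ _ at h1
  rw [integral_const_mul, Measure.volume_eq_prod, ← Measure.prod_restrict, integral_prod_mul (fun x : ℝ => x^(-(3/2):ℝ)) (fun x : ℝ => x^(-(3/2):ℝ)), pw_val hρ0] at h1
  refine h1.trans (le_of_eq ?_)
  have : ρ^(-(1/2):ℝ) * ρ^(-(1/2):ℝ) = 1/ρ := by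
    rw [← Real.rpow_add hρ0]; norm_num; exact Real.rpow_neg_one ρ
  rw [show 2*ρ^(-(1/2):ℝ) * (2*ρ^(-(1/2):ℝ)) = 4 * (ρ^(-(1/2):ℝ) * ρ^(-(1/2):ℝ)) by ring, this]; ring

end WR

open MeasureTheory Filter Set
open scoped ENNReal

namespace WR

noncomputable def hh (w v : ℝ → ℝ) (Λ ξ : ℝ) : ℝ := (ξ+Λ)*(w ξ/2) + 3/2*v ξ

lemma hh_bd {C A δ Λ ξ w v E : ℝ} (hC : 0 ≤ C) (hδ : 0 < δ) (hξ : 0 < ξ) (hΛ : ξ ≤ Λ)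
    (hw : w^2 * (rr ξ Λ)^3 ≤ 2*E) (hv : |v| ≤ A / rr ξ Λ) :
    C * (√(ξ+Λ)/ξ) * |(ξ+Λ)*(w/2) + 3/2*v| ≤ δ*(1/ξ^2) + C^2/δ*E + 3*A*C/√Λ*(1/ξ) := by
  have hg : 0 < ξ + Λ := by linarith
  have hrg : rr ξ Λ = (ξ+Λ)/2 := rfl
  rw [hrg] at hw hv
  set g := ξ + Λ with hgdef
  have hs : 0 < √g := Real.sqrt_pos.2 hg
  have hsq : √g^2 = g := Real.sq_sqrt hg.le
  have hΛ0 : 0 < √Λ := Real.sqrt_pos.2 (by linarith)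
  have hΛg : √Λ ≤ √g := Real.sqrt_le_sqrt (by linarith)
  have hA : 0 ≤ A := by
    have := (abs_nonneg v).trans hv
    by_contra hc
    have : A / (g/2) < 0 := div_neg_of_neg_of_pos (by linarith) (by positivity)
    linarith
  have h1 : |g*(w/2) + 3/2*v| ≤ g*(|w|/2) + 3/2*(A/(g/2)) := by
    refine (abs_add_le _ _).trans ?_
    rw [abs_mul, abs_mul, abs_of_pos hg, abs_div, abs_of_pos (by norm_num : (0:ℝ)<2),
      abs_of_pos (by norm_num : (0:ℝ)<3/2)]
    gcongr
  have h2 : C * (√g/ξ) * (g*(|w|/2)) ≤ δ*(1/ξ^2) + C^2/δ*E := by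
    have e1 : 0 ≤ (δ*(1/ξ) - C*√g*g*|w|/4)^2/δ := by positivity
    have e2 : (δ*(1/ξ) - C*√g*g*|w|/4)^2/δ = δ*(1/ξ^2) - C * (√g/ξ) * (g*(|w|/2)) + C^2*(√g^2)*g^2*|w|^2/(16*δ) := by
      field_simp; ring
    rw [e2, hsq, sq_abs] at e1
    have e3 : C^2*g*g^2*w^2/(16*δ) ≤ C^2/δ*E := by
      have : C^2*g*g^2*w^2/(16*δ) = C^2/δ*((w^2*(g/2)^3)/2) := by field_simp; ring
      rw [this]; gcongr; linarith
    linarith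
  have h3 : C * (√g/ξ) * (3/2*(A/(g/2))) ≤ 3*A*C/√Λ*(1/ξ) := by
    have : C * (√g/ξ) * (3/2*(A/(g/2))) = 3*A*C/√g*(1/ξ) := by
      nth_rewrite 2 [← hsq]; field_simp
    rw [this]; gcongr
  calc C * (√g/ξ) * |g*(w/2) + 3/2*v| ≤ C * (√g/ξ) * (g*(|w|/2) + 3/2*(A/(g/2))) := by gcongr
    _ = C * (√g/ξ) * (g*(|w|/2)) + C * (√g/ξ) * (3/2*(A/(g/2))) := by ring
    _ ≤ _ := by linarith

lemma split_bd {k0 k1 h G : ℝ → ℝ} {a b c : ℝ} (hab : a ≤ b) (hbc : b ≤ c)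
    (hk0 : ContinuousOn k0 (Icc a c)) (hk1 : ContinuousOn k1 (Icc b c)) (hh : ContinuousOn h (Icc a c))
    (hG : IntegrableOn G (Icc a c))
    (h1 : ∀ x ∈ Icc a b, |k0 x| * |h x| ≤ G x) (h2 : ∀ x ∈ Icc b c, |k0 x - k1 x| * |h x| ≤ G x) :
    |(∫ x in Icc a c, k0 x * h x) - ∫ x in Icc b c, k1 x * h x| ≤ ∫ x in Icc a c, G x := by
  have hac : a ≤ c := hab.trans hbc
  have i0 : IntervalIntegrable (fun x => k0 x * h x) volume a c := (hk0.mul hh).intervalIntegrable_of_Icc hac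
  have i1 : IntervalIntegrable (fun x => k1 x * h x) volume b c :=
    (hk1.mul (hh.mono (Icc_subset_Icc_left hab))).intervalIntegrable_of_Icc hbc
  have iG : IntervalIntegrable G volume a c :=
    (intervalIntegrable_iff_integrableOn_Ioc_of_le hac).2 (hG.mono_set Ioc_subset_Icc_self)
  have sub1 : uIcc a b ⊆ uIcc a c := by rw [uIcc_of_le hab, uIcc_of_le hac]; exact Icc_subset_Icc_right hbc
  have sub2 : uIcc b c ⊆ uIcc a c := by rw [uIcc_of_le hbc, uIcc_of_le hac]; exact Icc_subset_Icc_left hab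
  simp only [integral_Icc_eq_integral_Ioc, ← intervalIntegral.integral_of_le hac, ← intervalIntegral.integral_of_le hbc]
  rw [← intervalIntegral.integral_add_adjacent_intervals (i0.mono_set sub1) (i0.mono_set sub2),
    ← intervalIntegral.integral_add_adjacent_intervals (iG.mono_set sub1) (iG.mono_set sub2), add_sub_assoc,
    ← intervalIntegral.integral_sub (i0.mono_set sub2) i1]
  refine (abs_add_le _ _).trans (add_le_add ?_ ?_)
  · rw [← Real.norm_eq_abs]
    refine intervalIntegral.norm_integral_le_of_norm_le hab ?_ (iG.mono_set sub1)
    refine Eventually.of_forall (fun x hx => ?_)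
    rw [Real.norm_eq_abs, abs_mul]; exact h1 x ⟨hx.1.le, hx.2⟩
  · rw [← Real.norm_eq_abs]
    refine intervalIntegral.norm_integral_le_of_norm_le hbc ?_ (iG.mono_set sub2)
    refine Eventually.of_forall (fun x hx => ?_)
    rw [Real.norm_eq_abs, ← sub_mul, abs_mul]; exact h2 x ⟨hx.1.le, hx.2⟩

lemma int_inv2 {a c : ℝ} (ha : 0 < a) (hac : a ≤ c) : ∫ x in Icc a c, 1/x^2 = 1/a - 1/c := by
  rw [integral_Icc_eq_integral_Ioc, ← intervalIntegral.integral_of_le hac,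
    intervalIntegral.integral_eq_sub_of_hasDerivAt (f := fun x => -(1/x))]
  · ring
  · intro x hx
    rw [uIcc_of_le hac] at hx
    have hx0 : x ≠ 0 := by linarith [hx.1]
    have := (hasDerivAt_inv hx0).neg
    have e : (fun x : ℝ => -(1/x)) = -fun y : ℝ => y⁻¹ := by ext y; simp
    rw [e]; simpa using this
  · apply ContinuousOn.intervalIntegrable_of_Icc hac
    apply continuousOn_const.div (by fun_prop)
    intro x hx; have : 0 < x := by linarith [hx.1]
    positivity

lemma int_inv1 {a c : ℝ} (ha : 0 < a) (hac : a ≤ c) : ∫ x in Icc a c, 1/x = Real.log (c/a) := by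
  rw [integral_Icc_eq_integral_Ioc, ← intervalIntegral.integral_of_le hac, integral_one_div_of_pos ha (by linarith)]

lemma edge {ρ0 ρ1 C : ℝ} (h0 : 0 < ρ0) (h01 : ρ0 ≤ ρ1) (hC : 0 ≤ C)
    (hk0 : ∀ ξ η, ρ0 ≤ ξ → ξ ≤ ρ1 → ξ ≤ η → |m ρ0 ξ η| ≤ C * (√(ξ+η)/ξ))
    (hk1 : ∀ ξ η, ρ1 ≤ ξ → ξ ≤ η → |m ρ0 ξ η - m ρ1 ξ η| ≤ C * (√(ξ+η)/ξ))
    {A δ J Λ : ℝ} (hδ : 0 < δ) (hΛ : ρ1 ≤ Λ) {w v E : ℝ → ℝ}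
    (wc : ContinuousOn w (Icc ρ0 Λ)) (vc : ContinuousOn v (Icc ρ0 Λ)) (Ec : ContinuousOn E (Icc ρ0 Λ))
    (hw : ∀ ξ ∈ Icc ρ0 Λ, (w ξ)^2 * (rr ξ Λ)^3 ≤ 2*E ξ) (hv : ∀ ξ ∈ Icc ρ0 Λ, |v ξ| ≤ A / rr ξ Λ)
    (hJ : ∫ ξ in Icc ρ0 Λ, E ξ ≤ J) :
    |(∫ ξ in Icc ρ0 Λ, m ρ0 ξ Λ * hh w v Λ ξ) - ∫ ξ in Icc ρ1 Λ, m ρ1 ξ Λ * hh w v Λ ξ| ≤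
      δ/ρ0 + C^2/δ*J + 3*A*C*(Real.log (Λ/ρ0)/√Λ) := by
  have h1 : 0 < ρ1 := by linarith
  have hΛ0 : 0 < Λ := by linarith
  have c1 : ContinuousOn (fun x : ℝ => 1/x^2) (Icc ρ0 Λ) := by
    apply continuousOn_const.div (by fun_prop)
    intro x hx; have : 0 < x := by linarith [hx.1]
    positivity
  have c2 : ContinuousOn (fun x : ℝ => 1/x) (Icc ρ0 Λ) := by
    apply continuousOn_const.div (by fun_prop)
    intro x hx; have : 0 < x := by linarith [hx.1]
    positivity
  have I1 : Integrable (fun x : ℝ => δ*(1/x^2)) (volume.restrict (Icc ρ0 Λ)) := (c1.integrableOn_Icc).const_mul δ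
  have I2 : Integrable (fun x : ℝ => C^2/δ*E x) (volume.restrict (Icc ρ0 Λ)) := (Ec.integrableOn_Icc).const_mul _
  have I3 : Integrable (fun x : ℝ => 3*A*C/√Λ*(1/x)) (volume.restrict (Icc ρ0 Λ)) := (c2.integrableOn_Icc).const_mul _
  have I12 : Integrable (fun x : ℝ => δ*(1/x^2) + C^2/δ*E x) (volume.restrict (Icc ρ0 Λ)) := I1.add I2
  have I123 : IntegrableOn (fun x : ℝ => δ*(1/x^2) + C^2/δ*E x + 3*A*C/√Λ*(1/x)) (Icc ρ0 Λ) := I12.add I3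
  have mc : ∀ ρ, 0 < ρ → ContinuousOn (fun ξ => m ρ ξ Λ) (Icc ρ Λ) := by
    intro ρ hρ
    exact (m_cont hρ).comp (f := fun ξ => (ξ, Λ)) (by fun_prop) (fun ξ hξ => ⟨lt_of_lt_of_le hρ hξ.1, hΛ0⟩)
  have key := split_bd (k0 := fun ξ => m ρ0 ξ Λ) (k1 := fun ξ => m ρ1 ξ Λ) (h := hh w v Λ)
    (G := fun ξ => δ*(1/ξ^2) + C^2/δ*E ξ + 3*A*C/√Λ*(1/ξ)) h01 hΛ (mc _ h0) (mc _ h1)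
    (by unfold hh; fun_prop) I123 ?_ ?_
  · refine key.trans ?_
    rw [integral_add I12 I3, integral_add I1 I2, integral_const_mul, integral_const_mul, integral_const_mul,
      int_inv2 h0 (by linarith), int_inv1 h0 (by linarith)]
    have e1 : δ*(1/ρ0 - 1/Λ) ≤ δ/ρ0 := by
      rw [mul_sub]
      have : 0 ≤ δ*(1/Λ) := by positivity
      have e : δ*(1/ρ0) = δ/ρ0 := by ring
      linarith
    have e2 : C^2/δ*(∫ ξ in Icc ρ0 Λ, E ξ) ≤ C^2/δ*J := by gcongr
    have e3 : 3*A*C/√Λ*Real.log (Λ/ρ0) = 3*A*C*(Real.log (Λ/ρ0)/√Λ) := by ring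
    linarith
  · intro ξ hξ
    have hm : ξ ∈ Icc ρ0 Λ := ⟨hξ.1, hξ.2.trans hΛ⟩
    refine le_trans ?_ (hh_bd hC hδ (lt_of_lt_of_le h0 hξ.1) hm.2 (hw ξ hm) (hv ξ hm))
    exact mul_le_mul_of_nonneg_right (hk0 ξ Λ hξ.1 hξ.2 hm.2) (abs_nonneg _)
  · intro ξ hξ
    have hm : ξ ∈ Icc ρ0 Λ := ⟨h01.trans hξ.1, hξ.2⟩
    refine le_trans ?_ (hh_bd hC hδ (lt_of_lt_of_le h0 hm.1) hm.2 (hw ξ hm) (hv ξ hm))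
    exact mul_le_mul_of_nonneg_right (hk1 ξ Λ hξ.1 hm.2) (abs_nonneg _)

end WR

open MeasureTheory Filter Set
open scoped ENNReal

namespace WR

lemma log_sqrt {ρ : ℝ} (h : 0 < ρ) : Tendsto (fun Λ : ℝ => Real.log (Λ/ρ)/√Λ) atTop (nhds 0) := by
  have h1 : Tendsto (fun Λ : ℝ => Real.log Λ/√Λ) atTop (nhds 0) := by
    have := (isLittleO_log_rpow_atTop (show (0:ℝ) < 1/2 by norm_num)).tendsto_div_nhds_zero
    simpa [Real.sqrt_eq_rpow] using this
  have h2 : Tendsto (fun Λ : ℝ => Real.log ρ/√Λ) atTop (nhds 0) :=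
    tendsto_const_nhds.div_atTop Real.tendsto_sqrt_atTop
  have h3 := h1.sub h2
  rw [sub_zero] at h3
  refine h3.congr' ?_
  filter_upwards [eventually_gt_atTop 0] with Λ hΛ
  rw [Real.log_div hΛ.ne' h.ne', sub_div]

lemma sqrt_div : Tendsto (fun Λ : ℝ => √(Λ+Λ)/Λ) atTop (nhds 0) := by
  have h2 : Tendsto (fun Λ : ℝ => 2/√(Λ+Λ)) atTop (nhds 0) :=
    tendsto_const_nhds.div_atTop (Real.tendsto_sqrt_atTop.comp (tendsto_id.atTop_add_atTop tendsto_id))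
  refine h2.congr' ?_
  filter_upwards [eventually_gt_atTop 0] with Λ hΛ
  have hs : 0 < √(Λ+Λ) := Real.sqrt_pos.2 (by linarith)
  have := Real.sq_sqrt (show 0 ≤ Λ+Λ by linarith)
  rw [div_eq_div_iff hs.ne' hΛ.ne']
  nlinarith

lemma cons {p : ℕ} (hp : 5 ≤ p) {u : ℝ → ℝ → ℝ} (h : IsExtSol p ⊤ 0 u) {t0 ρ0 ρ1 R M : ℝ} (h0 : |t0| < ρ0)
    (h01 : ρ0 ≤ ρ1) (hR : R = (ρ0 - |t0|)/2) (hM : HM u R M) (hv : ExtEnergyVanishes R u)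
    (hcrit : (∫⁻ r in Ioi (0:ℝ), ENNReal.ofReal (|u 0 r| ^ (2 * (p - 1)) * r ^ 3)) < ⊤) :
    4*ρ0^2*u t0 ρ0 + 1/4*II p u t0 ρ0 = 4*ρ1^2*u t0 ρ1 + 1/4*II p u t0 ρ1 := by
  have hs : Sm u := h.1
  have hR0 : 0 < R := by rw [hR]; linarith
  have hρ0 : 0 < ρ0 := lt_of_le_of_lt (abs_nonneg _) h0
  set A := M + 1 with hAdef
  have hA0 : 0 ≤ A := by have := hM.1; linarith
  have hA : ∀ ξ η, ρ0 ≤ ξ → ρ0 ≤ η → |u (tt t0 ξ η) (rr ξ η)| ≤ A / rr ξ η := fun ξ η a b =>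
    u_decay hs hR0 hM (geom h0 hR a b) hcrit
  obtain ⟨C, hC, k0, k1⟩ := ker_bd hρ0 h01
  rw [← sub_eq_zero, ← abs_nonpos_iff]
  apply le_of_forall_pos_le_add
  intro ε' hε'
  obtain ⟨ε, hε, rfl⟩ : ∃ ε, 0 < ε ∧ ε' = 8*ε := ⟨ε'/8, by positivity, by ring⟩
  have T0 := (II_tendsto hp hs h0 le_rfl hA).eventually (Metric.ball_mem_nhds _ hε)
  have T1 := (II_tendsto hp hs h0 h01 hA).eventually (Metric.ball_mem_nhds _ hε)
  have T2 : ∀ᶠ Λ : ℝ in atTop, 3*A*C*(Real.log (Λ/ρ0)/√Λ) ≤ ε := by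
    have := (log_sqrt hρ0).const_mul (3*A*C)
    rw [mul_zero] at this
    exact this.eventually (Iic_mem_nhds hε)
  have T3 : ∀ᶠ Λ : ℝ in atTop, 2*A*C*(√(Λ+Λ)/Λ) ≤ ε := by
    have := sqrt_div.const_mul (2*A*C)
    rw [mul_zero] at this
    exact this.eventually (Iic_mem_nhds hε)
  obtain ⟨N1, hN1⟩ := eventually_atTop.1 (T0.and (T1.and (T2.and (T3.and (eventually_ge_atTop ρ1)))))
  have hJ : 0 < ε*(ε*ρ0)/(C^2+1) := by positivity
  obtain ⟨Λ, hΛN, J1, J2⟩ := goodL hs h0 hR hM hv hJ N1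
  obtain ⟨a0, a1, a2, a3, a4⟩ := hN1 Λ hΛN
  have hΛ0 : 0 < Λ := by linarith
  have h0Λ : ρ0 ≤ Λ := h01.trans a4
  have hCJ : C^2/(ε*ρ0)*(ε*(ε*ρ0)/(C^2+1)) ≤ ε := by
    have : C^2/(ε*ρ0)*(ε*(ε*ρ0)/(C^2+1)) = ε*(C^2/(C^2+1)) := by field_simp
    rw [this]
    have : C^2/(C^2+1) ≤ 1 := by rw [div_le_one (by positivity)]; linarith
    nlinarith
  have hδ : ε*ρ0/ρ0 = ε := by field_simp
  have cl1 : ∀ {f : ℝ → ℝ → ℝ}, Sm f → ContinuousOn (fun ξ => f (tt t0 ξ Λ) (rr ξ Λ)) (Icc ρ0 Λ) := fun hf =>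
    hf.cont.comp (f := fun ξ => (tt t0 ξ Λ, rr ξ Λ)) (by unfold tt rr; fun_prop)
      (fun ξ hξ => tr_mem (lt_of_lt_of_le h0 hξ.1) (lt_of_lt_of_le h0 h0Λ))
  have cl2 : ∀ {f : ℝ → ℝ → ℝ}, Sm f → ContinuousOn (fun ξ => f (tt t0 Λ ξ) (rr ξ Λ)) (Icc ρ0 Λ) := fun hf =>
    hf.cont.comp (f := fun ξ => (tt t0 Λ ξ, rr ξ Λ)) (by unfold tt rr; fun_prop)
      (fun ξ hξ => by
        have := tr_mem (t0 := t0) (lt_of_lt_of_le h0 h0Λ) (lt_of_lt_of_le h0 hξ.1)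
        rwa [show rr Λ ξ = rr ξ Λ by unfold rr; ring] at this)
  have E1 := edge hρ0 h01 hC k0 k1 (A := A) (δ := ε*ρ0) (by positivity) a4
    (w := fun ξ => dru u (tt t0 ξ Λ) (rr ξ Λ) - dtu u (tt t0 ξ Λ) (rr ξ Λ)) (v := fun ξ => u (tt t0 ξ Λ) (rr ξ Λ))
    (E := fun ξ => En u (tt t0 ξ Λ) (rr ξ Λ)) ((cl1 hs.dru).sub (cl1 hs.dtu)) (cl1 hs) (cl1 hs.En)
    (fun ξ hξ => by
      have hr : 0 ≤ rr ξ Λ := by unfold rr; linarith [hξ.1]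
      unfold En
      rw [← mul_assoc]
      apply mul_le_mul_of_nonneg_right _ (by positivity)
      nlinarith [sq_nonneg (dru u (tt t0 ξ Λ) (rr ξ Λ) + dtu u (tt t0 ξ Λ) (rr ξ Λ))])
    (fun ξ hξ => hA ξ Λ hξ.1 h0Λ) J1
  have E2 := edge hρ0 h01 hC k0 k1 (A := A) (δ := ε*ρ0) (by positivity) a4
    (w := fun ξ => dru u (tt t0 Λ ξ) (rr ξ Λ) + dtu u (tt t0 Λ ξ) (rr ξ Λ)) (v := fun ξ => u (tt t0 Λ ξ) (rr ξ Λ))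
    (E := fun ξ => En u (tt t0 Λ ξ) (rr ξ Λ)) ((cl2 hs.dru).add (cl2 hs.dtu)) (cl2 hs) (cl2 hs.En)
    (fun ξ hξ => by
      have hr : 0 ≤ rr ξ Λ := by unfold rr; linarith [hξ.1]
      unfold En
      rw [← mul_assoc]
      apply mul_le_mul_of_nonneg_right _ (by positivity)
      nlinarith [sq_nonneg (dru u (tt t0 Λ ξ) (rr ξ Λ) - dtu u (tt t0 Λ ξ) (rr ξ Λ))])
    (fun ξ hξ => by
      have := hA Λ ξ h0Λ hξ.1
      rwa [show rr Λ ξ = rr ξ Λ by unfold rr; ring] at this) J2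
  rw [hδ] at E1 E2
  have G0 := green_u h h0 h0Λ
  have G1 := green_u h (lt_of_lt_of_le h0 h01) a4
  have sym : ∀ ρ, (∫ η in Icc ρ Λ, m ρ Λ η * ((Λ+η)*((dru u (tt t0 Λ η) (rr Λ η) + dtu u (tt t0 Λ η) (rr Λ η))/2) + 3/2*u (tt t0 Λ η) (rr Λ η)))
      = ∫ ξ in Icc ρ Λ, m ρ ξ Λ * hh (fun ξ => dru u (tt t0 Λ ξ) (rr ξ Λ) + dtu u (tt t0 Λ ξ) (rr ξ Λ)) (fun ξ => u (tt t0 Λ ξ) (rr ξ Λ)) Λ ξ := by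
    intro ρ
    congr 1; ext ξ
    unfold hh
    rw [m_symm ρ Λ ξ, show rr Λ ξ = rr ξ Λ by unfold rr; ring, add_comm Λ ξ]
  rw [sym] at G0 G1
  change |(∫ ξ in Icc ρ0 Λ, m ρ0 ξ Λ * ((ξ+Λ)*((dru u (tt t0 ξ Λ) (rr ξ Λ) - dtu u (tt t0 ξ Λ) (rr ξ Λ))/2) + 3/2*u (tt t0 ξ Λ) (rr ξ Λ))) -
    ∫ ξ in Icc ρ1 Λ, m ρ1 ξ Λ * ((ξ+Λ)*((dru u (tt t0 ξ Λ) (rr ξ Λ) - dtu u (tt t0 ξ Λ) (rr ξ Λ))/2) + 3/2*u (tt t0 ξ Λ) (rr ξ Λ))| ≤ _ at E1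
  have corner : |2*Λ*m ρ0 Λ Λ*u t0 Λ - 2*Λ*m ρ1 Λ Λ*u t0 Λ| ≤ ε := by
    refine le_trans ?_ a3
    have e := hA Λ Λ h0Λ h0Λ
    have e1 : tt t0 Λ Λ = t0 := by unfold tt; ring
    have e2 : rr Λ Λ = Λ := by unfold rr; ring
    rw [e1, e2] at e
    have e3 := k1 Λ Λ a4 le_rfl
    rw [show 2*Λ*m ρ0 Λ Λ*u t0 Λ - 2*Λ*m ρ1 Λ Λ*u t0 Λ = 2*Λ*((m ρ0 Λ Λ - m ρ1 Λ Λ)*u t0 Λ) by ring, abs_mul,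
      abs_of_pos (by positivity : 0 < 2*Λ), abs_mul]
    calc 2*Λ*(|m ρ0 Λ Λ - m ρ1 Λ Λ| * |u t0 Λ|) ≤ 2*Λ*((C*(√(Λ+Λ)/Λ)) * (A/Λ)) := by gcongr
      _ = _ := by field_simp
  change |(∫ q in (Icc ρ0 Λ ×ˢ Icc ρ0 Λ), GG p u t0 ρ0 q) - II p u t0 ρ0| < ε at a0
  change |(∫ q in (Icc ρ1 Λ ×ˢ Icc ρ1 Λ), GG p u t0 ρ1 q) - II p u t0 ρ1| < ε at a1
  change _ = _ - _ - _ - (1/4) * (∫ q in (Icc ρ0 Λ ×ˢ Icc ρ0 Λ), GG p u t0 ρ0 q) at G0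
  change _ = _ - _ - _ - (1/4) * (∫ q in (Icc ρ1 Λ ×ˢ Icc ρ1 Λ), GG p u t0 ρ1 q) at G1
  rw [abs_le] at E1 E2 corner
  rw [abs_lt] at a0 a1
  rw [zero_add, abs_le]
  constructor <;> linarith [E1.1, E1.2, E2.1, E2.2, corner.1, corner.2, a0.1, a0.2, a1.1, a1.2]

end WR

open MeasureTheory Filter Set
open scoped ENNReal

namespace WR

structure Ctx (p : ℕ) (u : ℝ → ℝ → ℝ) : Prop where
  hp : 5 ≤ p
  odd : Odd p
  sol : IsExtSol p ⊤ 0 u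
  hM : ∀ R, 0 < R → ∃ M, HM u R M
  van : ∀ R, 0 < R → ExtEnergyVanishes R u
  crit : (∫⁻ r in Ioi (0:ℝ), ENNReal.ofReal (|u 0 r| ^ (2 * (p - 1)) * r ^ 3)) < ⊤

noncomputable def LL (p : ℕ) (u : ℝ → ℝ → ℝ) (t0 : ℝ) : ℝ :=
  4*(|t0|+1)^2*u t0 (|t0|+1) + 1/4*II p u t0 (|t0|+1)

variable {p : ℕ} {u : ℝ → ℝ → ℝ}

lemma Ctx.cons (c : Ctx p u) {t0 ρ : ℝ} (hρ : |t0| < ρ) : 4*ρ^2*u t0 ρ + 1/4*II p u t0 ρ = LL p u t0 := by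
  have key : ∀ ρ0 ρ1, |t0| < ρ0 → ρ0 ≤ ρ1 →
      4*ρ0^2*u t0 ρ0 + 1/4*II p u t0 ρ0 = 4*ρ1^2*u t0 ρ1 + 1/4*II p u t0 ρ1 := by
    intro ρ0 ρ1 h0 h1
    have hR : 0 < (ρ0 - |t0|)/2 := by linarith
    obtain ⟨M, hM⟩ := c.hM _ hR
    exact WR.cons c.hp c.sol h0 h1 rfl hM (c.van _ hR) c.crit
  unfold LL
  rcases le_total ρ (|t0|+1) with h | h
  · exact key _ _ hρ h
  · exact (key _ _ (by linarith) h).symm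

lemma Ctx.lim (c : Ctx p u) (t0 : ℝ) : Tendsto (fun ρ => 4*ρ^2*u t0 ρ) atTop (nhds (LL p u t0)) := by
  obtain ⟨M, hM⟩ := c.hM (1/2) (by norm_num)
  have hA : ∀ ξ η, |t0|+1 ≤ ξ → |t0|+1 ≤ η → |u (tt t0 ξ η) (rr ξ η)| ≤ (M+1) / rr ξ η := fun ξ η a b =>
    u_decay c.sol.1 (by norm_num) hM (geom (by linarith : |t0| < |t0|+1) (by ring) a b) c.crit
  have hII : Tendsto (fun ρ => II p u t0 ρ) atTop (nhds 0) := by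
    rw [tendsto_zero_iff_abs_tendsto_zero]
    have h2 : Tendsto (fun ρ : ℝ => (4*cc*(M+1)^5*((M+1)/(|t0|+1))^(p-5)) * (4/ρ)) atTop (nhds 0) := by
      have := (tendsto_const_nhds (x := (4:ℝ))).div_atTop tendsto_id
      simpa using this.const_mul (4*cc*(M+1)^5*((M+1)/(|t0|+1))^(p-5))
    refine tendsto_of_tendsto_of_tendsto_of_le_of_le' tendsto_const_nhds h2 (Eventually.of_forall (fun _ => abs_nonneg _)) ?_
    filter_upwards [eventually_ge_atTop (|t0|+1)] with ρ hρ
    exact II_bd c.hp (by linarith) hρ hA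
  have h3 := (tendsto_const_nhds (x := LL p u t0)).sub (hII.const_mul (1/4))
  simp only [mul_zero, sub_zero] at h3
  refine h3.congr' ?_
  filter_upwards [eventually_gt_atTop |t0|] with ρ hρ
  have := c.cons hρ
  linarith

lemma Ctx.LL_const (c : Ctx p u) (t : ℝ) : LL p u t = LL p u 0 := by
  by_contra hne
  obtain ⟨M, hM⟩ := c.hM 1 (by norm_num)
  set d := |LL p u t - LL p u 0| with hd
  have hd0 : 0 < d := abs_pos.2 (sub_ne_zero.2 hne)
  have hev : ∀ᶠ r : ℝ in atTop, d/2 < |4*r^2*u t r - 4*r^2*u 0 r| := by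
    have := ((c.lim t).sub (c.lim 0)).abs
    exact this.eventually (lt_mem_nhds (by linarith))
  obtain ⟨N0, hN0⟩ := eventually_atTop.1 hev
  set N := max N0 (2+|t|) with hN
  have hNt : 1 + |t| < N := lt_of_lt_of_le (by linarith) (le_max_right _ _)
  have hNp : 0 < N := by linarith [abs_nonneg t]
  set δ := (4*|t|+1)/d with hδ
  have hδ0 : 0 < δ := by positivity
  set l := 16*(|t| * (δ*M)+1)/d with hl
  have hl0 : 0 < l := by have := hM.1; positivity
  have hNN : N ≤ N*Real.exp l := by
    have : 1 ≤ Real.exp l := Real.one_le_exp hl0.le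
    nlinarith
  have h1 := L_est c.sol.1 (by norm_num) hM hNt hNN hδ0
  have hlog : Real.log (N*Real.exp l/N) = l := by
    rw [mul_div_assoc, mul_comm, div_mul_cancel₀ _ hNp.ne', Real.log_exp]
  rw [hlog] at h1
  have hsl : ∀ s, |s| ≤ |t| → ContinuousOn (u s) (Icc N (N*Real.exp l)) := by
    intro s hs
    refine (Sm.slice c.sol.1 (R := 1) (by norm_num)).mono ?_
    intro x hx
    have := hx.1
    simp only [mem_Ioi]; linarith
  have h2 : ∫ r in Icc N (N*Real.exp l), d/8*(1/r) ≤ ∫ r in Icc N (N*Real.exp l), |u t r - u 0 r| * r := by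
    apply setIntegral_mono_on
    · refine ContinuousOn.integrableOn_Icc ?_
      refine continuousOn_const.mul (continuousOn_const.div continuousOn_id ?_)
      intro x hx; exact (lt_of_lt_of_le hNp hx.1).ne'
    · exact (((hsl t le_rfl).sub (hsl 0 (by simp))).abs.mul continuousOn_id).integrableOn_Icc
    · exact measurableSet_Icc
    · intro r hr
      have hr0 : 0 < r := lt_of_lt_of_le hNp hr.1
      have := hN0 r ((le_max_left _ _).trans hr.1)
      rw [show 4*r^2*u t r - 4*r^2*u 0 r = 4*r^2*(u t r - u 0 r) by ring, abs_mul, abs_of_pos (by positivity)] at this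
      rw [mul_one_div, div_le_iff₀ hr0]
      linarith
  rw [integral_const_mul, int_inv1 hNp hNN, hlog] at h2
  have h3 := h2.trans h1
  have h4 : |t| * (l/(4*δ)) ≤ d/16*l := by
    have : |t| * (l/(4*δ)) = (4*|t|/(4*|t|+1)) * (d/16*l) := by rw [hδ]; field_simp; ring
    rw [this]
    have : 4*|t|/(4*|t|+1) ≤ 1 := by rw [div_le_one (by positivity)]; linarith
    have h5 : 0 ≤ d/16*l := by positivity
    nlinarith
  have h6 : d/16*l = |t| * (δ*M) + 1 := by rw [hl]; field_simp
  rw [mul_add] at h3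
  linarith

lemma Ctx.bd (c : Ctx p u) {R : ℝ} (hR : 0 < R) : ∃ B, 0 ≤ B ∧ ∀ t r, R + |t| < r → |u t r| ≤ B/r^2 := by
  obtain ⟨M, hM⟩ := c.hM (R/2) (by positivity)
  have hA1 : 0 ≤ M + 1 := by linarith [hM.1]
  have hcc := cc_nonneg
  set K := (4*cc*(M+1)^5*((M+1)/R)^(p-5)) * (4/R) with hK
  have hK0 : 0 ≤ K := by positivity
  refine ⟨(|LL p u 0| + K)/4, by positivity, ?_⟩
  intro t r hr
  have ht := abs_nonneg t
  have hr0 : 0 < r := by linarith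
  have hA : ∀ ξ η, r ≤ ξ → r ≤ η → |u (tt t ξ η) (rr ξ η)| ≤ (M+1) / rr ξ η := fun ξ η a b =>
    u_decay c.sol.1 (by positivity) hM (by
      have := geom (t0 := t) (ρ := r) (R := (r-|t|)/2) (by linarith) rfl a b
      linarith) c.crit
  have h1 := II_bd (p := p) c.hp (by linarith) le_rfl hA
  have h2 : (4*cc*(M+1)^5*((M+1)/r)^(p-5)) * (4/r) ≤ K := by
    have : R ≤ r := by linarith
    rw [hK]; gcongr
  have h3 := c.cons (t0 := t) (ρ := r) (by linarith)
  rw [c.LL_const t] at h3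
  rw [le_div_iff₀ (by positivity)]
  have h4 : |u t r| * r^2 = |4*r^2*u t r|/4 := by
    rw [abs_mul, abs_of_pos (by positivity : 0 < 4*r^2)]; ring
  rw [h4, show 4*r^2*u t r = LL p u 0 - 1/4*II p u t r by linarith]
  have h5 := abs_sub (LL p u 0) (1/4*II p u t r)
  rw [abs_mul, abs_of_pos (by norm_num : (0:ℝ) < 1/4)] at h5
  linarith [abs_nonneg (II p u t r)]

end WR

open MeasureTheory Filter Set
open scoped ENNReal

namespace WR
variable {p : ℕ} {u : ℝ → ℝ → ℝ}

noncomputable def wt (l r0 ξ : ℝ) : ℝ := 4/(ξ+r0)^2 * Real.exp (2*l/(ξ+r0))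

lemma wt_main {l r0 : ℝ} (hl : 0 < l) (hr : 0 < r0) :
    IntegrableOn (wt l r0) (Ici r0) ∧ ∫ x in Ici r0, wt l r0 x ≤ 2/l*Real.exp (l/r0) := by
  have hd : ∀ x, r0 ≤ x → HasDerivAt (fun x => -(2/l)*Real.exp (2*l/(x+r0))) (wt l r0 x) x := by
    intro x hx
    have hx0 : x + r0 ≠ 0 := by linarith
    have h1 : HasDerivAt (fun x => 2*l/(x+r0)) ((0*(x+r0) - 2*l*1)/(x+r0)^2) x :=
      (hasDerivAt_const x (2*l)).div ((hasDerivAt_id x).add_const r0) hx0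
    refine (h1.exp.const_mul (-(2/l))).congr_deriv ?_
    unfold wt; field_simp; ring
  have ht : Tendsto (fun x => -(2/l)*Real.exp (2*l/(x+r0))) atTop (nhds (-(2/l)*Real.exp 0)) := by
    refine Tendsto.const_mul _ ((Real.continuous_exp.tendsto 0).comp ?_)
    exact tendsto_const_nhds.div_atTop (tendsto_atTop_add_const_right _ _ tendsto_id)
  have hpos : ∀ x ∈ Ioi r0, 0 ≤ wt l r0 x := fun x _ => by unfold wt; positivity
  have hc : ContinuousWithinAt (fun x => -(2/l)*Real.exp (2*l/(x+r0))) (Ici r0) r0 :=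
    (hd r0 le_rfl).continuousAt.continuousWithinAt
  constructor
  · rw [integrableOn_Ici_iff_integrableOn_Ioi]
    exact integrableOn_Ioi_deriv_of_nonneg hc (fun x hx => hd x (le_of_lt hx)) hpos ht
  · rw [integral_Ici_eq_integral_Ioi, integral_Ioi_of_hasDerivAt_of_nonneg hc (fun x hx => hd x (le_of_lt hx)) hpos ht]
    have e : 2*l/(r0+r0) = l/r0 := by field_simp; ring
    rw [e, Real.exp_zero]
    have : 0 < 2/l := by positivity
    linarith

lemma inv2_main {r0 : ℝ} (hr : 0 < r0) :
    IntegrableOn (fun x : ℝ => 4/x^2) (Ici r0) ∧ ∫ x in Ici r0, 4/x^2 = 4/r0 := by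
  have hd : ∀ x, r0 ≤ x → HasDerivAt (fun x : ℝ => -4/x) (4/x^2) x := by
    intro x hx
    have hx0 : x ≠ 0 := by linarith
    refine ((hasDerivAt_const x (-4:ℝ)).div (hasDerivAt_id x) hx0).congr_deriv ?_
    simp
  have ht : Tendsto (fun x : ℝ => -4/x) atTop (nhds 0) := tendsto_const_nhds.div_atTop tendsto_id
  have hpos : ∀ x ∈ Ioi r0, 0 ≤ 4/x^2 := fun x _ => by positivity
  have hc : ContinuousWithinAt (fun x : ℝ => -4/x) (Ici r0) r0 :=
    (hd r0 le_rfl).continuousAt.continuousWithinAt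
  constructor
  · rw [integrableOn_Ici_iff_integrableOn_Ioi]
    exact integrableOn_Ioi_deriv_of_nonneg hc (fun x hx => hd x (le_of_lt hx)) hpos ht
  · rw [integral_Ici_eq_integral_Ioi, integral_Ioi_of_hasDerivAt_of_nonneg hc (fun x hx => hd x (le_of_lt hx)) hpos ht]
    ring

lemma FF_eq (ho : Odd p) (t r : ℝ) : FF p u t r = (u t r)^p := by
  unfold FF
  obtain ⟨k, rfl⟩ := ho
  rw [show 2*k+1-1 = 2*k by omega, pow_mul, sq_abs, ← pow_mul, ← pow_succ]

lemma geom2 {t0 τ R1 r0 ξ η : ℝ} (h : R1 + |τ| + |t0| < r0) (hξ : r0 ≤ ξ) (hη : r0 ≤ η) :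
    R1 + |τ| + |tt t0 ξ η| < rr ξ η := by
  have : |tt t0 ξ η| < rr ξ η - (R1 + |τ|) := by
    have h1 := le_abs_self t0
    have h2 := neg_abs_le t0
    unfold tt rr
    rw [abs_lt]; constructor <;> linarith
  linarith

lemma Ctx.GG_int (c : Ctx p u) {t0 ρ : ℝ} (hρ : |t0| < ρ) : IntegrableOn (GG p u t0 ρ) (Ici ρ ×ˢ Ici ρ) := by
  have hR : 0 < (ρ - |t0|)/2 := by linarith
  obtain ⟨M, hM⟩ := c.hM _ hR
  exact WR.GG_int c.hp c.sol.1 hρ le_rfl (A := M+1) (fun ξ η a b =>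
    u_decay c.sol.1 hR hM (geom hρ rfl a b) c.crit)

lemma GGdiff_bd (hp5 : 5 ≤ p) (ho : Odd p) {B R1 τ l Q t0 r0 : ℝ} (hR1 : 0 < R1) (hB : 0 ≤ B) (hQ : 0 ≤ Q) (hl : 0 < l)
    (hb : ∀ t r, R1 + |t| < r → |u t r| ≤ B/r^2)
    (hD : ∀ t r, R1 + |τ| + |t| < r → |u (t+τ) r - u t r| ≤ Q/r^2 * Real.exp (l/r))
    (h0 : R1 + |τ| + |t0| < r0) {q : ℝ × ℝ} (h1 : r0 ≤ q.1) (h2 : r0 ≤ q.2) :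
    |GG p u (t0+τ) r0 q - GG p u t0 r0 q| ≤ (4*cc*p*B^(p-1)/R1^(2*(p-3))*Q) * (wt l r0 q.1 * (4/q.2^2)) := by
  obtain ⟨ξ, η⟩ := q
  simp only at h1 h2 ⊢
  have hτ := abs_nonneg τ
  have ht0 := abs_nonneg t0
  have hr00 : 0 < r0 := by linarith
  have hξ : 0 < ξ := by linarith
  have hη : 0 < η := by linarith
  have hr : 0 < rr ξ η := by unfold rr; positivity
  have hR1r : R1 ≤ rr ξ η := by unfold rr; linarith
  have hg := geom2 h0 h1 h2
  have htt : tt (t0+τ) ξ η = tt t0 ξ η + τ := by unfold tt; ring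
  have hm0 := m_nonneg hr00 h1 h2
  have hm := m_le hr00 h1 h2
  have hcc := cc_nonneg
  have hgr : ξ + η = 2 * rr ξ η := by unfold rr; ring
  have b1 := hb (tt t0 ξ η) (rr ξ η) (by linarith)
  have b2 := hb (tt t0 ξ η + τ) (rr ξ η) (by linarith [abs_add_le (tt t0 ξ η) τ])
  have b3 := hD _ _ hg
  have b4 : |u (tt t0 ξ η + τ) (rr ξ η)^p - u (tt t0 ξ η) (rr ξ η)^p| ≤
      (Q/(rr ξ η)^2 * Real.exp (l/rr ξ η)) * p * (B/(rr ξ η)^2)^(p-1) := by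
    refine (abs_pow_sub_pow_le _ _ _).trans ?_
    gcongr
    exact max_le b2 b1
  unfold GG
  simp only [htt]
  rw [FF_eq ho, FF_eq ho, ← mul_sub, abs_mul, abs_mul, abs_of_nonneg hm0, abs_of_pos (by linarith : 0 < ξ+η)]
  have e1 : (ξ+η) * m r0 ξ η * |u (tt t0 ξ η + τ) (rr ξ η)^p - u (tt t0 ξ η) (rr ξ η)^p| ≤
     (ξ+η) * (cc*(ξ+η)) * ((Q/(rr ξ η)^2 * Real.exp (l/rr ξ η)) * p * (B/(rr ξ η)^2)^(p-1)) := by gcongr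
  refine e1.trans ?_
  have e2 : (ξ+η) * (cc*(ξ+η)) * ((Q/(rr ξ η)^2 * Real.exp (l/rr ξ η)) * p * (B/(rr ξ η)^2)^(p-1)) =
      4*cc*p*B^(p-1)*Q * (1/(rr ξ η)^(2*(p-3))) * (Real.exp (l/rr ξ η) * (1/(rr ξ η)^2) * (1/(rr ξ η)^2)) := by
    rw [hgr, div_pow, ← pow_mul]
    have : 2*(p-1) = 2*(p-3) + 4 := by omega
    rw [this, pow_add]
    field_simp
    ring
  rw [e2]
  have s1 : (ξ+r0)/2 ≤ rr ξ η := by unfold rr; linarith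
  have s2 : η/2 ≤ rr ξ η := by unfold rr; linarith
  have e3 : Real.exp (l/rr ξ η) ≤ Real.exp (2*l/(ξ+r0)) := by
    apply Real.exp_le_exp.2
    have : 2*l/(ξ+r0) = l/((ξ+r0)/2) := by field_simp
    rw [this]; gcongr
  have e4 : 1/(rr ξ η)^2 ≤ 4/(ξ+r0)^2 := by
    have : 4/(ξ+r0)^2 = 1/((ξ+r0)/2)^2 := by field_simp; norm_num
    rw [this]; gcongr
  have e5 : 1/(rr ξ η)^2 ≤ 4/η^2 := by
    have : 4/η^2 = 1/(η/2)^2 := by field_simp; norm_num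
    rw [this]; gcongr
  have e6 : 1/(rr ξ η)^(2*(p-3)) ≤ 1/R1^(2*(p-3)) := by gcongr
  have e7 : 4*cc*p*B^(p-1)/R1^(2*(p-3))*Q * (wt l r0 ξ * (4/η^2)) =
    4*cc*p*B^(p-1)*Q * (1/R1^(2*(p-3))) * (Real.exp (2*l/(ξ+r0)) * (4/(ξ+r0)^2) * (4/η^2)) := by unfold wt; ring
  rw [e7]
  gcongr

lemma Ctx.step (c : Ctx p u) {B R1 τ l Q : ℝ} (hR1 : 0 < R1) (hB : 0 ≤ B) (hQ : 0 ≤ Q) (hl : 0 < l)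
    (hlB : 8*(cc*p*B^(p-1)/R1^(2*(p-3))/R1) ≤ l)
    (hb : ∀ t r, R1 + |t| < r → |u t r| ≤ B/r^2)
    (hD : ∀ t r, R1 + |τ| + |t| < r → |u (t+τ) r - u t r| ≤ Q/r^2 * Real.exp (l/r)) :
    ∀ t r, R1 + |τ| + |t| < r → |u (t+τ) r - u t r| ≤ (Q/2)/r^2 * Real.exp (l/r) := by
  intro t r hr
  have hτ := abs_nonneg τ
  have ht := abs_nonneg t
  have hr0 : 0 < r := by linarith
  have htτ := abs_add_le t τ
  have c1 := c.cons (t0 := t+τ) (ρ := r) (by linarith)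
  have c2 := c.cons (t0 := t) (ρ := r) (by linarith)
  rw [c.LL_const] at c1 c2
  obtain ⟨w1, w2⟩ := wt_main hl hr0
  obtain ⟨v1, v2⟩ := inv2_main hr0
  set K := 4*cc*p*B^(p-1)/R1^(2*(p-3))*Q with hK
  have hcc := cc_nonneg
  have hK0 : 0 ≤ K := by positivity
  have hint : IntegrableOn (fun q : ℝ × ℝ => wt l r q.1 * (4/q.2^2)) (Ici r ×ˢ Ici r) := by
    unfold IntegrableOn
    rw [Measure.volume_eq_prod, ← Measure.prod_restrict]
    exact Integrable.mul_prod w1 v1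
  have hII : |II p u (t+τ) r - II p u t r| ≤ K * ((∫ x in Ici r, wt l r x) * (4/r)) := by
    unfold II
    rw [← integral_sub (c.GG_int (by linarith)) (c.GG_int (by linarith)), ← Real.norm_eq_abs]
    refine (norm_integral_le_of_norm_le (hint.const_mul K) ?_).trans ?_
    · filter_upwards [ae_restrict_mem (measurableSet_Ici.prod measurableSet_Ici)] with q hq
      exact GGdiff_bd c.hp c.odd hR1 hB hQ hl hb hD hr hq.1 hq.2
    · rw [integral_const_mul, Measure.volume_eq_prod, ← Measure.prod_restrict,
        integral_prod_mul (wt l r) (fun x : ℝ => 4/x^2), v2]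
  have h1 : 4*r^2*|u (t+τ) r - u t r| = 1/4*|II p u (t+τ) r - II p u t r| := by
    have : 4*r^2*(u (t+τ) r - u t r) = -(1/4*(II p u (t+τ) r - II p u t r)) := by linarith
    have h2 := congrArg abs this
    rwa [abs_neg, abs_mul, abs_of_pos (by positivity : 0 < 4*r^2), abs_mul, abs_of_pos (by norm_num : (0:ℝ) < 1/4)] at h2
  have h3 : K * ((∫ x in Ici r, wt l r x) * (4/r)) ≤ K * ((2/l*Real.exp (l/r)) * (4/R1)) := by
    have : R1 ≤ r := by linarith
    have h4 : 0 ≤ 2/l*Real.exp (l/r) := by positivity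
    gcongr
  have h5 : K * ((2/l*Real.exp (l/r)) * (4/R1)) = 4 * Q * Real.exp (l/r) * ((8*(cc*p*B^(p-1)/R1^(2*(p-3))/R1))/l) := by
    rw [hK]; field_simp; ring
  have h6 : (8*(cc*p*B^(p-1)/R1^(2*(p-3))/R1))/l ≤ 1 := by rw [div_le_one hl]; exact hlB
  have h7 : K * ((2/l*Real.exp (l/r)) * (4/R1)) ≤ 4*Q*Real.exp (l/r) := by
    rw [h5]
    have : 0 ≤ 4*Q*Real.exp (l/r) := by positivity
    nlinarith
  have h8 : (Q/2)/r^2 * Real.exp (l/r) = (Q/2*Real.exp (l/r))/r^2 := by ring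
  rw [h8, le_div_iff₀ (by positivity)]
  have h9 : 0 ≤ Q*Real.exp (l/r) := by positivity
  linarith

lemma Ctx.stat (c : Ctx p u) {τ r : ℝ} (hr : |τ| < r) : u τ r = u 0 r := by
  have hR1 : 0 < (r-|τ|)/2 := by linarith
  set R1 := (r-|τ|)/2 with hR1d
  obtain ⟨B, hB, hb⟩ := c.bd hR1
  have hcc := cc_nonneg
  set l := 8*(cc*p*B^(p-1)/R1^(2*(p-3))/R1) + 1 with hl
  have hl0 : 0 < l := by positivity
  have key : ∀ n : ℕ, ∀ t r, R1 + |τ| + |t| < r → |u (t+τ) r - u t r| ≤ (2*B/2^n)/r^2 * Real.exp (l/r) := by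
    intro n
    induction n with
    | zero =>
      intro t r hr
      have hτ := abs_nonneg τ
      have ht := abs_nonneg t
      have hr0 : 0 < r := by linarith
      have b1 := hb t r (by linarith)
      have b2 := hb (t+τ) r (by linarith [abs_add_le t τ])
      have b3 := abs_sub (u (t+τ) r) (u t r)
      have : 1 ≤ Real.exp (l/r) := Real.one_le_exp (by positivity)
      have h2 : 0 ≤ B/r^2 := by positivity
      have h3 : (2*B/2^0)/r^2 = 2*(B/r^2) := by ring
      rw [h3]
      nlinarith
    | succ n ih =>
      have := c.step hR1 hB (by positivity) hl0 (by linarith) hb ih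
      intro t r hr
      have h2 := this t r hr
      rwa [show 2*B/2^n/2 = 2*B/2^(n+1) by rw [pow_succ]; field_simp] at h2
  have h0 : ∀ n : ℕ, |u τ r - u 0 r| ≤ (2*B/2^n)/r^2 * Real.exp (l/r) := by
    intro n
    have := key n 0 r (by simp; linarith)
    simpa using this
  have hlim : Tendsto (fun n : ℕ => (2*B/2^n)/r^2 * Real.exp (l/r)) atTop (nhds 0) := by
    have h1 : Tendsto (fun n : ℕ => 2*B/(2:ℝ)^n) atTop (nhds 0) :=
      tendsto_const_nhds.div_atTop (tendsto_pow_atTop_atTop_of_one_lt (by norm_num))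
    simpa using (h1.div_const (r^2)).mul_const (Real.exp (l/r))
  have := ge_of_tendsto' hlim h0
  exact sub_eq_zero.1 (abs_nonpos_iff.1 this)

end WR

open MeasureTheory Filter Set
open scoped ENNReal

namespace WR

lemma alg_bd {p : ℕ} (hp : 5 ≤ p) {η x : ℝ} (h0 : 0 < η) (h1 : η ≤ 1) (hx : 0 ≤ x) :
    x^2 + x^(p+1) ≤ 2*η^2 + 2*(x^(2*(p-1))/η^(2*(p-1))) := by
  rcases le_total x η with h | h
  · have e1 : x^2 ≤ η^2 := by gcongr
    have e2 : x^(p+1) ≤ x^2 := pow_le_pow_of_le_one hx (h.trans h1) (by omega)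
    have : 0 ≤ x^(2*(p-1))/η^(2*(p-1)) := by positivity
    linarith
  · have hy : 1 ≤ x/η := by rw [le_div_iff₀ h0]; linarith
    have key : ∀ k, k ≤ 2*(p-1) → x^k ≤ x^(2*(p-1))/η^(2*(p-1)) := by
      intro k hk
      rw [← div_pow]
      have : x^k ≤ (x/η)^k := by
        gcongr
        rw [le_div_iff₀ h0]; nlinarith
      exact this.trans (pow_le_pow_right₀ hy hk)
    have := key 2 (by omega)
    have := key (p+1) (by omega)
    have := sq_nonneg η
    linarith

noncomputable def ph (α s : ℝ) : ℝ := ((s-α)*(α+1-s))^2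
noncomputable def ph1 (α s : ℝ) : ℝ := 2*((s-α)*(α+1-s))*(1-2*(s-α))
noncomputable def ph2 (α s : ℝ) : ℝ := 2*(1-6*(s-α)+6*(s-α)^2)

lemma ph_d (α s : ℝ) : HasDerivAt (ph α) (ph1 α s) s := by
  have h1 : HasDerivAt (fun s => s-α) 1 s := (hasDerivAt_id s).sub_const α
  have h2 : HasDerivAt (fun s => α+1-s) (-1) s := (hasDerivAt_id s).const_sub (α+1)
  refine ((h1.mul h2).pow 2).congr_deriv ?_
  simp only [ph1, Pi.mul_apply]; push_cast; ring

lemma ph1_d (α s : ℝ) : HasDerivAt (ph1 α) (ph2 α s) s := by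
  have h1 : HasDerivAt (fun s => s-α) 1 s := (hasDerivAt_id s).sub_const α
  have h2 : HasDerivAt (fun s => α+1-s) (-1) s := (hasDerivAt_id s).const_sub (α+1)
  have h3 : HasDerivAt (fun s => 1-2*(s-α)) (-(2*1)) s := (h1.const_mul 2).const_sub 1
  refine (((h1.mul h2).const_mul 2).mul h3).congr_deriv ?_
  simp only [ph2, Pi.mul_apply]; ring

lemma ph_int (α : ℝ) : ∫ s in α..(α+1), ph α s = 1/30 := by
  rw [intervalIntegral.integral_eq_sub_of_hasDerivAt (f := fun s => (s-α)^3/3 - (s-α)^4/2 + (s-α)^5/5)]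
  · norm_num
  · intro s _
    have h1 : HasDerivAt (fun s => s-α) 1 s := (hasDerivAt_id s).sub_const α
    refine ((((h1.pow 3).div_const 3).sub ((h1.pow 4).div_const 2)).add ((h1.pow 5).div_const 5)).congr_deriv ?_
    unfold ph; push_cast; ring
  · unfold ph; exact (by fun_prop : Continuous _).intervalIntegrable _ _

section ode
variable {p : ℕ} {Y Z : ℝ → ℝ} {b c : ℝ}

noncomputable def QQ (p : ℕ) (c : ℝ) (Y Z : ℝ → ℝ) (s : ℝ) : ℝ :=
  (Z s)^2/2 - c*(Y s)^2/2 + (Y s)^(p+1)/(p+1)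

lemma QQ_d (hY : ∀ s, HasDerivAt Y (Z s) s) (hZ : ∀ s, HasDerivAt Z (-b*Z s + c*Y s - (Y s)^p) s) (s : ℝ) :
    HasDerivAt (QQ p c Y Z) (-b*(Z s)^2) s := by
  refine (((((hZ s).pow 2).div_const 2).sub ((((hY s).pow 2).const_mul c).div_const 2)).add
    (((hY s).pow (p+1)).div_const (p+1))).congr_deriv ?_
  have : (p:ℝ)+1 ≠ 0 := by positivity
  push_cast
  field_simp
  ring

set_option maxHeartbeats 1000000 in
lemma QQ_phi (hp : 5 ≤ p) (ho : Odd p) (hb : 0 < b) (hY : ∀ s, HasDerivAt Y (Z s) s)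
    (hZ : ∀ s, HasDerivAt Z (-b*Z s + c*Y s - (Y s)^p) s) (α : ℝ) {η : ℝ} (h0 : 0 < η) (h1 : η ≤ 1) :
    |∫ s in α..(α+1), ph α s * QQ p c Y Z s| ≤
      (|c|+b+1)*(2*η^2 + 2/η^(2*(p-1)) * ∫ s in α..(α+1), |Y s|^(2*(p-1))) := by
  have cY : Continuous Y := continuous_iff_continuousAt.2 (fun s => (hY s).continuousAt)
  have cZ : Continuous Z := continuous_iff_continuousAt.2 (fun s => (hZ s).continuousAt)
  have cph : Continuous (ph α) := continuous_iff_continuousAt.2 (fun s => (ph_d α s).continuousAt)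
  have cph1 : Continuous (ph1 α) := continuous_iff_continuousAt.2 (fun s => (ph1_d α s).continuousAt)
  have cph2 : Continuous (ph2 α) := by unfold ph2; fun_prop
  have cQ : Continuous (QQ p c Y Z) := by unfold QQ; fun_prop
  have hd : ∀ s, HasDerivAt (fun s => ph α s*Y s*Z s - ph1 α s*(Y s)^2/2 + b/2*(ph α s*(Y s)^2))
      (ph α s*(Z s)^2 + ph α s*(c*(Y s)^2 - (Y s)^(p+1)) - ph2 α s*(Y s)^2/2 + b/2*(ph1 α s*(Y s)^2)) s := by
    intro s
    refine (((((ph_d α s).mul (hY s)).mul (hZ s)).sub (((ph1_d α s).mul ((hY s).pow 2)).div_const 2)).add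
      (((ph_d α s).mul ((hY s).pow 2)).const_mul (b/2))).congr_deriv ?_
    simp only [Pi.mul_apply, Pi.pow_apply]
    push_cast; ring
  have hI := intervalIntegral.integral_eq_sub_of_hasDerivAt (a := α) (b := α+1) (fun s _ => hd s)
    ((by fun_prop : Continuous _).intervalIntegrable _ _)
  have z1 : ph α α = 0 := by unfold ph; ring
  have z2 : ph α (α+1) = 0 := by unfold ph; ring
  have z3 : ph1 α α = 0 := by unfold ph1; ring
  have z4 : ph1 α (α+1) = 0 := by unfold ph1; ring
  rw [z1, z2, z3, z4] at hI
  simp only [zero_mul, zero_div, mul_zero, sub_zero, add_zero] at hI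
  have e1 : ∫ s in α..(α+1), ph α s * QQ p c Y Z s = ∫ s in α..(α+1), (ph α s * QQ p c Y Z s
      - 1/2*(ph α s*(Z s)^2 + ph α s*(c*(Y s)^2 - (Y s)^(p+1)) - ph2 α s*(Y s)^2/2 + b/2*(ph1 α s*(Y s)^2))) := by
    rw [intervalIntegral.integral_sub ((by fun_prop : Continuous _).intervalIntegrable _ _)
      ((by fun_prop : Continuous _).intervalIntegrable _ _), intervalIntegral.integral_const_mul, hI]
    ring
  rw [e1, ← Real.norm_eq_abs]
  have hαα : α ≤ α+1 := by linarith
  refine (intervalIntegral.norm_integral_le_of_norm_le hαα (g := fun s => (|c|+b+1)*(2*η^2 + 2/η^(2*(p-1)) * |Y s|^(2*(p-1))))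
    (Eventually.of_forall ?_) ((by fun_prop : Continuous _).intervalIntegrable _ _)).trans ?_
  · intro s hs
    have x0 : 0 ≤ s - α := by linarith [hs.1]
    have x1 : s - α ≤ 1 := by linarith [hs.2]
    have f0 : |ph α s| ≤ 1 := by
      unfold ph
      have : 0 ≤ (s-α)*(α+1-s) := mul_nonneg x0 (by linarith)
      have : (s-α)*(α+1-s) ≤ 1 := by nlinarith
      rw [abs_of_nonneg (by positivity)]; nlinarith
    have f1 : |ph1 α s| ≤ 2 := by
      unfold ph1
      have a1 : 0 ≤ (s-α)*(α+1-s) := mul_nonneg x0 (by linarith)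
      have a2 : (s-α)*(α+1-s) ≤ 1 := by nlinarith
      rw [abs_mul, abs_mul, abs_of_nonneg a1, abs_of_pos (by norm_num : (0:ℝ)<2)]
      have a3 : |1-2*(s-α)| ≤ 1 := by rw [abs_le]; constructor <;> linarith
      nlinarith [abs_nonneg (1-2*(s-α))]
    have f2 : |ph2 α s| ≤ 2 := by
      unfold ph2
      rw [abs_le]; constructor <;> nlinarith [sq_nonneg (2*(s-α)-1)]
    have e2 : (Y s)^(p+1) = |Y s|^(p+1) := (Even.pow_abs (ho.add_one) _).symm
    have e3 : (Y s)^2 = |Y s|^2 := (sq_abs _).symm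
    have hA := alg_bd hp h0 h1 (abs_nonneg (Y s))
    have hp0 : (0:ℝ) < p+1 := by positivity
    have e4 : ph α s * QQ p c Y Z s
      - 1/2*(ph α s*(Z s)^2 + ph α s*(c*(Y s)^2 - (Y s)^(p+1)) - ph2 α s*(Y s)^2/2 + b/2*(ph1 α s*(Y s)^2))
      = (-(ph α s * c) + ph2 α s/4 - b/4*ph1 α s) * |Y s|^2 + (ph α s*(1/(p+1)+1/2))*|Y s|^(p+1) := by
      unfold QQ; rw [e2, e3]; field_simp; ring
    rw [Real.norm_eq_abs, e4]
    have g1 : |(-(ph α s * c) + ph2 α s/4 - b/4*ph1 α s)| ≤ |c|+b+1 := by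
      have k1 : |ph α s * c| ≤ |c| := by rw [abs_mul]; nlinarith [abs_nonneg c]
      rw [abs_le] at k1 f1 f2 ⊢
      constructor <;> nlinarith
    have g2 : |ph α s*(1/(p+1)+1/2)| ≤ |c|+b+1 := by
      have : 1/((p:ℝ)+1) ≤ 1/2 := by
        have : (5:ℝ) ≤ p := by exact_mod_cast hp
        apply one_div_le_one_div_of_le <;> linarith
      have : 0 < 1/((p:ℝ)+1) := by positivity
      rw [abs_mul, abs_of_pos (by linarith : 0 < 1/((p:ℝ)+1)+1/2)]
      nlinarith [abs_nonneg c, abs_nonneg (ph α s)]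
    calc _ ≤ |(-(ph α s * c) + ph2 α s/4 - b/4*ph1 α s)| * |Y s|^2 + |ph α s*(1/(p+1)+1/2)| * |Y s|^(p+1) := by
          refine (abs_add_le _ _).trans ?_
          rw [abs_mul, abs_mul, abs_of_nonneg (by positivity : 0 ≤ |Y s|^2), abs_of_nonneg (by positivity : 0 ≤ |Y s|^(p+1))]
      _ ≤ (|c|+b+1) * |Y s|^2 + (|c|+b+1) * |Y s|^(p+1) := by gcongr
      _ = (|c|+b+1) * (|Y s|^2 + |Y s|^(p+1)) := by ring
      _ ≤ _ := by
          have : 2*η^2 + 2/η^(2*(p-1)) * |Y s|^(2*(p-1)) = 2*η^2 + 2*(|Y s|^(2*(p-1))/η^(2*(p-1))) := by ring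
          rw [this]; exact mul_le_mul_of_nonneg_left hA (by positivity)
  · rw [intervalIntegral.integral_const_mul, intervalIntegral.integral_add (by simp)
      ((by fun_prop : Continuous _).intervalIntegrable _ _), intervalIntegral.integral_const_mul]
    simp

lemma J_tend {g : ℝ → ℝ} (hg : Integrable g) :
    Tendsto (fun α => ∫ s in α..(α+1), g s) atTop (nhds 0) ∧ Tendsto (fun α => ∫ s in α..(α+1), g s) atBot (nhds 0) := by
  have hii : ∀ a b, IntervalIntegrable g volume a b := fun a b => hg.intervalIntegrable
  have e : (fun α => ∫ s in α..(α+1), g s) = fun α => (∫ s in (0:ℝ)..(α+1), g s) - ∫ s in (0:ℝ)..α, g s := by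
    ext α
    rw [intervalIntegral.integral_interval_sub_left (hii _ _) (hii _ _)]
  constructor
  · rw [e]
    have h1 := intervalIntegral_tendsto_integral_Ioi 0 hg.integrableOn tendsto_id
    have h2 := intervalIntegral_tendsto_integral_Ioi 0 hg.integrableOn (tendsto_atTop_add_const_right atTop (1:ℝ) tendsto_id)
    simpa using h2.sub h1
  · have h1 := intervalIntegral_tendsto_integral_Iic 0 hg.integrableOn tendsto_id
    have h2 := intervalIntegral_tendsto_integral_Iic 0 hg.integrableOn (tendsto_atBot_add_const_right atBot (1:ℝ) tendsto_id)
    have e2 : (fun α => ∫ s in α..(α+1), g s) = fun α => (∫ s in α..0, g s) - ∫ s in (α+1)..0, g s := by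
      ext α
      rw [← intervalIntegral.integral_add_adjacent_intervals (hii α (α+1)) (hii (α+1) 0)]; ring
    rw [e2]
    simpa using h1.sub h2

lemma QQ_phi_tend (hp : 5 ≤ p) (ho : Odd p) (hb : 0 < b) (hY : ∀ s, HasDerivAt Y (Z s) s)
    (hZ : ∀ s, HasDerivAt Z (-b*Z s + c*Y s - (Y s)^p) s) {l : Filter ℝ}
    (hl : Tendsto (fun α => ∫ s in α..(α+1), |Y s|^(2*(p-1))) l (nhds 0)) {ε : ℝ} (hε : 0 < ε) :
    ∀ᶠ α in l, |∫ s in α..(α+1), ph α s * QQ p c Y Z s| < ε := by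
  have hC : 0 < |c|+b+1 := by positivity
  obtain ⟨η, h0, h1, h2⟩ : ∃ η : ℝ, 0 < η ∧ η ≤ 1 ∧ (|c|+b+1)*(2*η^2) ≤ ε/2 := by
    refine ⟨min 1 (ε/(4*(|c|+b+1))), by positivity, min_le_left _ _, ?_⟩
    set η := min 1 (ε/(4*(|c|+b+1)))
    have a1 : η ≤ 1 := min_le_left _ _
    have a0 : 0 < η := by positivity
    have a2 : η ≤ ε/(4*(|c|+b+1)) := min_le_right _ _
    rw [le_div_iff₀ (by positivity)] at a2
    have : η^2 ≤ η := by nlinarith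
    nlinarith
  have h3 := (hl.const_mul (2/η^(2*(p-1)))).const_mul (|c|+b+1)
  simp only [mul_zero] at h3
  filter_upwards [h3.eventually (gt_mem_nhds (half_pos hε))] with α hα
  refine lt_of_le_of_lt (QQ_phi hp ho hb hY hZ α h0 h1) ?_
  rw [mul_add]; linarith

lemma ode_zero (hp : 5 ≤ p) (ho : Odd p) (hb : 0 < b) (hY : ∀ s, HasDerivAt Y (Z s) s)
    (hZ : ∀ s, HasDerivAt Z (-b*Z s + c*Y s - (Y s)^p) s) (hg : Integrable (fun s => |Y s|^(2*(p-1)))) :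
    ∀ s, Y s = 0 := by
  have cY : Continuous Y := continuous_iff_continuousAt.2 (fun s => (hY s).continuousAt)
  have cZ : Continuous Z := continuous_iff_continuousAt.2 (fun s => (hZ s).continuousAt)
  have cQ : Continuous (QQ p c Y Z) := by unfold QQ; fun_prop
  have cph : ∀ α, Continuous (ph α) := fun α => by unfold ph; fun_prop
  have phn : ∀ α s, 0 ≤ ph α s := fun α s => by unfold ph; positivity
  have anti : Antitone (QQ p c Y Z) := by
    apply antitone_of_deriv_nonpos (fun s => (QQ_d hY hZ s).differentiableAt)
    intro s; rw [(QQ_d hY hZ s).deriv]; nlinarith [sq_nonneg (Z s)]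
  obtain ⟨T1, T2⟩ := J_tend hg
  have hint : ∀ α κ : ℝ, ∫ s in α..(α+1), ph α s * κ = κ/30 := by
    intro α κ
    rw [intervalIntegral.integral_mul_const, ph_int]; ring
  have Q0 : ∀ s, QQ p c Y Z s = 0 := by
    intro s
    apply le_antisymm
    · by_contra hcon
      push Not at hcon
      obtain ⟨α, h1, h2⟩ := ((QQ_phi_tend hp ho hb hY hZ T2 (show 0 < QQ p c Y Z s/30 by positivity)).and
        (eventually_le_atBot (s-1))).exists
      have h3 : ∫ x in α..(α+1), ph α x * QQ p c Y Z s ≤ ∫ x in α..(α+1), ph α x * QQ p c Y Z x := by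
        apply intervalIntegral.integral_mono_on (by linarith)
        · exact ((cph α).mul continuous_const).intervalIntegrable _ _
        · exact ((cph α).mul cQ).intervalIntegrable _ _
        · intro x hx
          exact mul_le_mul_of_nonneg_left (anti (by linarith [hx.2])) (phn _ _)
      rw [hint] at h3
      linarith [le_abs_self (∫ x in α..(α+1), ph α x * QQ p c Y Z x)]
    · by_contra hcon
      push Not at hcon
      obtain ⟨α, h1, h2⟩ := ((QQ_phi_tend hp ho hb hY hZ T1 (show 0 < -QQ p c Y Z s/30 by linarith)).and
        (eventually_ge_atTop s)).exists
      have h3 : ∫ x in α..(α+1), ph α x * QQ p c Y Z x ≤ ∫ x in α..(α+1), ph α x * QQ p c Y Z s := by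
        apply intervalIntegral.integral_mono_on (by linarith)
        · exact ((cph α).mul cQ).intervalIntegrable _ _
        · exact ((cph α).mul continuous_const).intervalIntegrable _ _
        · intro x hx
          exact mul_le_mul_of_nonneg_left (anti (by linarith [hx.1])) (phn _ _)
      rw [hint] at h3
      linarith [neg_abs_le (∫ x in α..(α+1), ph α x * QQ p c Y Z x)]
  have Z0 : ∀ s, Z s = 0 := by
    intro s
    have h1 := QQ_d hY hZ s
    have h2 : QQ p c Y Z = fun _ => 0 := funext Q0
    rw [h2] at h1
    have h3 := h1.unique (hasDerivAt_const s 0)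
    have : (Z s)^2 = 0 := by
      rcases mul_eq_zero.1 h3 with h | h
      · linarith
      · exact h
    exact pow_eq_zero_iff (by norm_num) |>.1 this
  intro s
  have hconst : ∀ x, Y x = Y s := by
    intro x
    exact is_const_of_deriv_eq_zero (fun y => (hY y).differentiableAt) (fun y => by rw [(hY y).deriv, Z0]) x s
  simp only [hconst] at T1
  simp only [intervalIntegral.integral_const, add_sub_cancel_left, one_smul] at T1
  have := tendsto_nhds_unique T1 tendsto_const_nhds
  have h2 := pow_eq_zero_iff (by omega) |>.1 this.symm
  exact abs_eq_zero.1 h2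

end ode

end WR

open MeasureTheory Filter Set
open scoped ENNReal

namespace WR
variable {p : ℕ} {u : ℝ → ℝ → ℝ}

lemma Ctx.dtz (c : Ctx p u) {τ r : ℝ} (hr : |τ| < r) : dtu u τ r = 0 := by
  have h : (fun s => u s r) =ᶠ[nhds τ] fun _ => u 0 r := by
    have : ∀ᶠ s in nhds τ, |s| < r := (isOpen_lt continuous_abs continuous_const).mem_nhds hr
    filter_upwards [this] with s hs using c.stat hs
  unfold _root_.dtu
  rw [h.deriv_eq]; simp

lemma Ctx.ode (c : Ctx p u) {r : ℝ} (hr : 0 < r) :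
    dru (dru u) 0 r = -(3/r)*dru u 0 r - (u 0 r)^p := by
  have hq : ((0:ℝ), r) ∈ UU := by simpa [UU] using hr
  have h1 := pde' c.sol hq
  have h2 : dtu (dtu u) 0 r = 0 := by
    have h : (fun s => dtu u s r) =ᶠ[nhds 0] fun _ => (0:ℝ) := by
      have : ∀ᶠ s : ℝ in nhds 0, |s| < r :=
        (isOpen_lt continuous_abs continuous_const).mem_nhds (by simpa using hr)
      filter_upwards [this] with s hs using c.dtz hs
    show deriv (fun s => dtu u s r) 0 = 0
    rw [h.deriv_eq]; simp
  have h3 : |u 0 r|^(p-1)*u 0 r = (u 0 r)^p := FF_eq c.odd 0 r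
  rw [h2, h3] at h1
  linarith

lemma Ctx.zero (c : Ctx p u) {r : ℝ} (hr : 0 < r) : u 0 r = 0 := by
  have hp := c.hp
  have hp' : (5:ℝ) ≤ p := by exact_mod_cast hp
  obtain ⟨a, ha⟩ : ∃ a : ℝ, a = 2/((p:ℝ)-1) := ⟨_, rfl⟩
  have hpa : a*((p:ℝ)-1) = 2 := by rw [ha]; field_simp [show (p:ℝ)-1 ≠ 0 by linarith]
  have ha0 : 0 < a := by rw [ha]; exact div_pos (by norm_num) (by linarith)
  have ha1 : a ≤ 1/2 := by nlinarith
  have mem : ∀ s : ℝ, ((0:ℝ), Real.exp s) ∈ UU := fun s => by simp [UU, Real.exp_pos]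
  have hsm : Sm u := c.sol.1
  have hE : ∀ k s : ℝ, HasDerivAt (fun s => Real.exp (k*s)) (k*Real.exp (k*s)) s := fun k s =>
    (((hasDerivAt_id s).const_mul k).exp).congr_deriv (by simp; ring)
  have hf : ∀ s, HasDerivAt (fun s => u 0 (Real.exp s)) (dru u 0 (Real.exp s)*Real.exp s) s :=
    fun s => (Sm.dr hsm (mem s)).comp s (Real.hasDerivAt_exp s)
  have hf' : ∀ s, HasDerivAt (fun s => dru u 0 (Real.exp s)) (dru (dru u) 0 (Real.exp s)*Real.exp s) s :=
    fun s => (Sm.dr (Sm.dru hsm) (mem s)).comp s (Real.hasDerivAt_exp s)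
  have e1 : ∀ s, Real.exp ((a+1)*s) = Real.exp (a*s)*Real.exp s := fun s => by
    rw [← Real.exp_add]; ring_nf
  have e2 : ∀ s, Real.exp (a*s)^p = Real.exp (a*s)*Real.exp s*Real.exp s := fun s => by
    rw [← Real.exp_nat_mul, ← Real.exp_add, ← Real.exp_add]
    congr 1; linear_combination s*hpa
  have hY : ∀ s, HasDerivAt (fun s => Real.exp (a*s)*u 0 (Real.exp s))
      (a*(Real.exp (a*s)*u 0 (Real.exp s)) + Real.exp ((a+1)*s)*dru u 0 (Real.exp s)) s := fun s =>
    ((hE a s).mul (hf s)).congr_deriv (by rw [e1]; ring)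
  have hZ : ∀ s, HasDerivAt (fun s => a*(Real.exp (a*s)*u 0 (Real.exp s)) + Real.exp ((a+1)*s)*dru u 0 (Real.exp s))
      (-(2-2*a)*(a*(Real.exp (a*s)*u 0 (Real.exp s)) + Real.exp ((a+1)*s)*dru u 0 (Real.exp s))
        + (a*(2-a))*(Real.exp (a*s)*u 0 (Real.exp s)) - (Real.exp (a*s)*u 0 (Real.exp s))^p) s := fun s => by
    refine (((hY s).const_mul a).add ((hE (a+1) s).mul (hf' s))).congr_deriv ?_
    rw [c.ode (Real.exp_pos s), mul_pow, e2, e1]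
    have := (Real.exp_pos s).ne'
    field_simp
    ring
  have hI : Integrable (fun s => |Real.exp (a*s)*u 0 (Real.exp s)|^(2*(p-1))) := by
    have h1 : IntegrableOn (fun r => |u 0 r|^(2*(p-1))*r^3) (Ioi (0:ℝ)) := by
      have hc : ContinuousOn (fun r => u 0 r) (Ioi (0:ℝ)) := fun r hr =>
        (Sm.dr hsm (show ((0:ℝ), r) ∈ UU by simpa [UU] using hr)).continuousAt.continuousWithinAt
      have hm : AEStronglyMeasurable (fun r => |u 0 r|^(2*(p-1))*r^3) (volume.restrict (Ioi (0:ℝ))) :=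
        ((hc.abs.pow _).mul (continuousOn_id.pow 3)).aestronglyMeasurable measurableSet_Ioi
      refine ⟨hm, ?_⟩
      rw [hasFiniteIntegral_iff_ofReal]
      · exact c.crit
      · filter_upwards [ae_restrict_mem measurableSet_Ioi] with r hr
        have : (0:ℝ) < r := hr
        show 0 ≤ |u 0 r|^(2*(p-1))*r^3
        positivity
    have h2 := (MeasureTheory.integrableOn_image_iff_integrableOn_abs_deriv_smul (s := univ)
      (f := Real.exp) (f' := Real.exp) MeasurableSet.univ
      (fun x _ => (Real.hasDerivAt_exp x).hasDerivWithinAt) Real.exp_injective.injOn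
      (fun r => |u 0 r|^(2*(p-1))*r^3)).1 (by rw [image_univ, Real.range_exp]; exact h1)
    rw [integrableOn_univ] at h2
    refine h2.congr (Eventually.of_forall fun s => ?_)
    have e3 : Real.exp (a*s)^(2*(p-1)) = Real.exp s*Real.exp s^3 := by
      rw [← Real.exp_nat_mul, ← Real.exp_nat_mul, ← Real.exp_add]
      congr 1
      push_cast [Nat.cast_sub (show 1 ≤ p by omega)]
      linear_combination 2*s*hpa
    simp only [smul_eq_mul, abs_mul, mul_pow, Real.abs_exp]
    rw [e3]; ring
  have := ode_zero hp c.odd (show 0 < 2-2*a by linarith) hY hZ hI (Real.log r)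
  rw [Real.exp_log hr] at this
  exact (mul_eq_zero.1 this).resolve_left (Real.exp_pos _).ne'

end WR

/-- main rigidity theorem: a smooth non-radiative radial solution on
`{r > |t|}` whose data lies in `L^{2(p-1)}(r³dr)` has compactly supported data:
there is `R > 0` with `u₀ = u₁ = 0` on `(R,∞)`. -/
theorem stmt11 (p : ℕ) (hodd : Odd p) (hp5 : 5 ≤ p) (C₀ : ℝ) (hC₀ : 0 < C₀)
    (u : ℝ → ℝ → ℝ)
    (hsol : IsExtSol p ⊤ 0 u)
    (hdata : ∀ R₀ : ℝ, 0 < R₀ → eH R₀ (u 0) (fun r => dtu u 0 r) < ⊤)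
    (hcrit : (∫⁻ r in Ioi (0:ℝ),
        ENNReal.ofReal (|u 0 r| ^ (2 * (p - 1)) * r ^ 3)) < ⊤)
    (hbd : ∀ R₀ : ℝ, 0 < R₀ → ∀ ρ : ℝ, R₀ ≤ ρ →
      eLL 2 8 ρ u + eLL 3 6 ρ u + supH ρ u
        ≤ ENNReal.ofReal C₀ * eH ρ (u 0) (fun r => dtu u 0 r))
    (hvan : ∀ R₀ : ℝ, 0 < R₀ → ExtEnergyVanishes R₀ u) :
    ∃ R > (0:ℝ), ∀ r : ℝ, R < r → u 0 r = 0 ∧ dtu u 0 r = 0 := by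
  have c : WR.Ctx p u := ⟨hp5, hodd, hsol, fun R hR => WR.exists_HM hdata hbd hR, hvan, hcrit⟩
  exact ⟨1, one_pos, fun r hr => ⟨c.zero (by linarith), c.dtz (by rw [abs_zero]; linarith)⟩⟩
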